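/- Weak computability implies online computability: every partial function f :⊆ ℝⁿ → ℝᵐ that belongs to AWP also belongs to AOP. -/

import Mathlib

noncomputable section

/-- Evaluation of a vector of multivariate polynomials at a point. -/
def pEval {d e : ℕ} (p : Fin e → MvPolynomial (Fin d) ℝ) (x : Fin d → ℝ) : Fin e → ℝ :=
  fun i => MvPolynomial.eval x (p i)

/-- Length of the solution curve of the PIVP `y' = p(y)` on `[0, t]`
(the sup norm of the derivative is integrated). -/
def pLen {d : ℕ} (p : Fin d → MvPolynomial (Fin d) ℝ) (y : ℝ → Fin d → ℝ) (t : ℝ) : ℝ :=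
  ∫ s in (0:ℝ)..t, ‖pEval p (y s)‖

/-- `Ω : ℝ₊² → ℝ₊` is a polynomial function. -/
def IsPolyFun2 (Ω : ℝ → ℝ → ℝ) : Prop :=
  (∃ P : MvPolynomial (Fin 2) ℝ, ∀ a b : ℝ, Ω a b = MvPolynomial.eval ![a, b] P) ∧
  ∀ a b : ℝ, 0 ≤ a → 0 ≤ b → 0 ≤ Ω a b

/-- The class `AP` of polynomial-length computable partial functions `f :⊆ ℝⁿ → ℝᵐ`
(`dom` is the domain of `f`). -/
def AP {n m : ℕ} (dom : Set (Fin n → ℝ)) (f : (Fin n → ℝ) → (Fin m → ℝ)) : Prop :=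
  ∃ (d : ℕ) (hd : m ≤ d) (p : Fin d → MvPolynomial (Fin d) ℝ)
    (q : Fin d → MvPolynomial (Fin n) ℝ) (Ω : ℝ → ℝ → ℝ),
    IsPolyFun2 Ω ∧
    ∀ x ∈ dom, ∃ y : ℝ → Fin d → ℝ,
      (y 0 = fun i => MvPolynomial.eval x (q i)) ∧
      (∀ t : ℝ, 0 ≤ t → HasDerivAt y (pEval p (y t)) t) ∧
      (∀ t : ℝ, 0 ≤ t → ∀ μ : ℝ, 0 ≤ μ → Ω ‖x‖ μ ≤ pLen p y t →
        ‖(fun i : Fin m => y t (Fin.castLE hd i)) - f x‖ ≤ Real.exp (-μ)) ∧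
      (∀ t : ℝ, 0 ≤ t → t ≤ pLen p y t)

/-- `Υ : ℝ₊³ → ℝ₊` is a polynomial function. -/
def IsPolyFun3 (Υ : ℝ → ℝ → ℝ → ℝ) : Prop :=
  (∃ P : MvPolynomial (Fin 3) ℝ, ∀ a b c : ℝ, Υ a b c = MvPolynomial.eval ![a, b, c] P) ∧
  ∀ a b c : ℝ, 0 ≤ a → 0 ≤ b → 0 ≤ c → 0 ≤ Υ a b c

/-- The class `AWP` of weakly computable partial functions `f :⊆ ℝⁿ → ℝᵐ`. -/
def AWP {n m : ℕ} (dom : Set (Fin n → ℝ)) (f : (Fin n → ℝ) → (Fin m → ℝ)) : Prop :=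
  ∃ (Ω : ℝ → ℝ → ℝ) (Υ : ℝ → ℝ → ℝ → ℝ), IsPolyFun2 Ω ∧ IsPolyFun3 Υ ∧
  ∃ (d : ℕ) (hd : m ≤ d) (p : Fin d → MvPolynomial (Fin d) ℝ)
    (q : Fin d → MvPolynomial (Fin (n + 1)) ℝ),
    ∀ x ∈ dom, ∀ μ : ℝ, 0 ≤ μ → ∃ y : ℝ → Fin d → ℝ,
      (y 0 = fun i => MvPolynomial.eval (Fin.snoc x μ) (q i)) ∧
      (∀ t : ℝ, 0 ≤ t → HasDerivAt y (pEval p (y t)) t) ∧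
      (∀ t : ℝ, 0 ≤ t → Ω ‖x‖ μ ≤ t →
        ‖(fun i : Fin m => y t (Fin.castLE hd i)) - f x‖ ≤ Real.exp (-μ)) ∧
      (∀ t : ℝ, 0 ≤ t → ‖y t‖ ≤ Υ ‖x‖ μ t)

/-- The class `AOP` of online computable partial functions `f :⊆ ℝⁿ → ℝᵐ`. -/
def AOP {n m : ℕ} (dom : Set (Fin n → ℝ)) (f : (Fin n → ℝ) → (Fin m → ℝ)) : Prop :=
  ∃ (Υ Ω Λ : ℝ → ℝ → ℝ), IsPolyFun2 Υ ∧ IsPolyFun2 Ω ∧ IsPolyFun2 Λ ∧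
  ∃ (δ : ℝ) (hδ : 0 ≤ δ) (d : ℕ) (hd : m ≤ d)
    (p : Fin d → MvPolynomial (Fin (d + n)) ℝ) (y₀ : Fin d → ℝ),
    ∀ x : ℝ → Fin n → ℝ, ContinuousOn x (Set.Ici (0 : ℝ)) →
      ∃ y : ℝ → Fin d → ℝ,
        (y 0 = y₀) ∧
        (∀ t : ℝ, 0 ≤ t →
          HasDerivAt y (fun i => MvPolynomial.eval (Fin.append (y t) (x t)) (p i)) t) ∧
        (∀ t : ℝ, 0 ≤ t →
          ‖y t‖ ≤ Υ (sSup ((fun u => ‖x u‖) '' Set.Icc (max 0 (t - δ)) t)) t) ∧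
        (∀ a b : ℝ, 0 ≤ a → a ≤ b → ∀ xbar ∈ dom, ∀ μbar : ℝ, 0 ≤ μbar →
          (∀ t ∈ Set.Icc a b, ‖x t - xbar‖ ≤ Real.exp (-(Λ ‖xbar‖ μbar))) →
          ∀ u : ℝ, a + Ω ‖xbar‖ μbar ≤ u → u ≤ b →
            ‖(fun i : Fin m => y u (Fin.castLE hd i)) - f xbar‖ ≤ Real.exp (-μbar))

section
open Set Filter Topology

/-- existence of a primitive -/
lemma exists_prim {a b : ℝ} (hab : a ≤ b) {h : ℝ → ℝ} (hh : ContinuousOn h (Icc a b)) :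
    ∃ P : ℝ → ℝ, P a = 0 ∧ ContinuousOn P (Icc a b) ∧ ∀ t ∈ Ioo a b, HasDerivAt P (h t) t := by
  have hhI : IntervalIntegrable h MeasureTheory.volume a b := by
    apply ContinuousOn.intervalIntegrable
    rwa [uIcc_of_le hab]
  refine ⟨fun t => ∫ s in a..t, h s, by simp, ?_, ?_⟩
  · have := intervalIntegral.continuousOn_primitive_interval' hhI (left_mem_uIcc)
    rwa [uIcc_of_le hab] at this
  · intro t ht
    have hI : Icc a b ∈ 𝓝 t := Icc_mem_nhds ht.1 ht.2
    have hca : ContinuousAt h t := hh.continuousAt hI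
    apply intervalIntegral.integral_hasDerivAt_right
    · apply ContinuousOn.intervalIntegrable
      rw [uIcc_of_le ht.1.le]
      exact hh.mono (Icc_subset_Icc_right ht.2.le)
    · exact (hh.mono Ioo_subset_Icc_self).stronglyMeasurableAtFilter isOpen_Ioo t ht
    · exact hca

/-- comparison of increments -/
lemma incr_le {a b : ℝ} (hab : a ≤ b) {y z y' z' : ℝ → ℝ}
    (hy : ContinuousOn y (Icc a b)) (hz : ContinuousOn z (Icc a b))
    (hy' : ∀ t ∈ Ioo a b, HasDerivAt y (y' t) t) (hz' : ∀ t ∈ Ioo a b, HasDerivAt z (z' t) t)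
    (h : ∀ t ∈ Ioo a b, y' t ≤ z' t) : y b - y a ≤ z b - z a := by
  have hm : MonotoneOn (fun t => z t - y t) (Icc a b) := by
    apply monotoneOn_of_hasDerivWithinAt_nonneg (f' := fun t => z' t - y' t) (convex_Icc a b)
      (hz.sub hy)
    · intro t ht
      rw [interior_Icc] at ht ⊢
      exact ((hz' t ht).sub (hy' t ht)).hasDerivWithinAt
    · intro t ht
      rw [interior_Icc] at ht
      have := h t ht
      linarith
  have := hm (left_mem_Icc.2 hab) (right_mem_Icc.2 hab) hab
  simp only at this
  linarith

/-- linear differential inequality, upper -/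
lemma core_le {a b : ℝ} (hab : a ≤ b) {y y' h P : ℝ → ℝ}
    (hy : ContinuousOn y (Icc a b)) (hP : ContinuousOn P (Icc a b))
    (hy' : ∀ t ∈ Ioo a b, HasDerivAt y (y' t) t) (hP' : ∀ t ∈ Ioo a b, HasDerivAt P (h t) t)
    (hle : ∀ t ∈ Ioo a b, y' t ≤ h t * y t) : y b ≤ y a * Real.exp (P b - P a) := by
  have := incr_le hab (y := fun t => y t * Real.exp (-P t)) (z := fun _ => 0)
    (y' := fun t => y' t * Real.exp (-P t) + y t * (Real.exp (-P t) * (-h t))) (z' := fun _ => 0)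
    (hy.mul (Real.continuous_exp.comp_continuousOn hP.neg)) continuousOn_const
    (fun t ht => (hy' t ht).mul ((hP' t ht).neg.exp)) (fun t _ => hasDerivAt_const t 0)
    (fun t ht => by
      have h1 := hle t ht
      have h2 := Real.exp_pos (-P t)
      nlinarith)
  simp only [sub_self, sub_nonpos] at this
  have h2 : y b = y b * Real.exp (-P b) * Real.exp (P b) := by
    rw [mul_assoc, ← Real.exp_add]; simp
  rw [h2]
  calc _ ≤ y a * Real.exp (-P a) * Real.exp (P b) := by gcongr
    _ = _ := by rw [mul_assoc, ← Real.exp_add]; ring_nf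

/-- linear differential inequality, lower -/
lemma core_ge {a b : ℝ} (hab : a ≤ b) {y y' h P : ℝ → ℝ}
    (hy : ContinuousOn y (Icc a b)) (hP : ContinuousOn P (Icc a b))
    (hy' : ∀ t ∈ Ioo a b, HasDerivAt y (y' t) t) (hP' : ∀ t ∈ Ioo a b, HasDerivAt P (h t) t)
    (hle : ∀ t ∈ Ioo a b, h t * y t ≤ y' t) : y a * Real.exp (P b - P a) ≤ y b := by
  have := core_le hab (y := fun t => - y t) (y' := fun t => - y' t) hy.neg hP
    (fun t ht => (hy' t ht).neg) hP' (fun t ht => by have := hle t ht; linarith)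
  linarith

/-- positivity is preserved when `y' ≥ h y` -/
lemma pos_pres {a b : ℝ} (hab : a ≤ b) {y y' h : ℝ → ℝ}
    (hy : ContinuousOn y (Icc a b)) (hh : ContinuousOn h (Icc a b))
    (hy' : ∀ t ∈ Ioo a b, HasDerivAt y (y' t) t)
    (hle : ∀ t ∈ Ioo a b, h t * y t ≤ y' t) (ha : 0 < y a) : 0 < y b := by
  obtain ⟨P, hP0, hP, hP'⟩ := exists_prim hab hh
  have := core_ge hab hy hP hy' hP' hle
  exact lt_of_lt_of_le (mul_pos ha (Real.exp_pos _)) this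

lemma nonneg_pres {a b : ℝ} (hab : a ≤ b) {y y' h : ℝ → ℝ}
    (hy : ContinuousOn y (Icc a b)) (hh : ContinuousOn h (Icc a b))
    (hy' : ∀ t ∈ Ioo a b, HasDerivAt y (y' t) t)
    (hle : ∀ t ∈ Ioo a b, h t * y t ≤ y' t) (ha : 0 ≤ y a) : 0 ≤ y b := by
  obtain ⟨P, hP0, hP, hP'⟩ := exists_prim hab hh
  have := core_ge hab hy hP hy' hP' hle
  exact le_trans (mul_nonneg ha (Real.exp_pos _).le) this

/-- decay with forcing -/
lemma dec_le {a b : ℝ} (hab : a ≤ b) (hab1 : b - a ≤ 1) {y y' k P : ℝ → ℝ} {l Γ Y0 : ℝ}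
    (hy : ContinuousOn y (Icc a b)) (hP : ContinuousOn P (Icc a b))
    (hy' : ∀ t ∈ Ioo a b, HasDerivAt y (y' t) t) (hP' : ∀ t ∈ Ioo a b, HasDerivAt P (k t) t)
    (hk : ∀ t ∈ Ioo a b, 0 ≤ k t) (hl : 0 ≤ l)
    (hle : ∀ t ∈ Ioo a b, y' t ≤ - k t * y t + l) (hΓ : Γ ≤ P b - P a)
    (ha : y a ≤ Y0) (hY0 : 0 ≤ Y0) : y b ≤ Y0 * Real.exp (-Γ) + l := by
  have := core_le hab (y := fun t => y t - l * (t - a)) (y' := fun t => y' t - l * (1 - 0))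
    (h := fun t => - k t) (P := fun t => - P t)
    (hy.sub (by fun_prop)) hP.neg
    (fun t ht => (hy' t ht).sub (((hasDerivAt_id t).sub (hasDerivAt_const t a)).const_mul l))
    (fun t ht => (hP' t ht).neg) (fun t ht => by
      have h1 := hle t ht
      have h2 : 0 ≤ k t * (l * (t - a)) :=
        mul_nonneg (hk t ht) (mul_nonneg hl (by linarith [ht.1]))

      nlinarith)
  simp only [sub_self, mul_zero, sub_zero] at this
  have h3 : y a * Real.exp (-P b - -P a) ≤ Y0 * Real.exp (-Γ) := by
    apply mul_le_mul ha _ (Real.exp_pos _).le hY0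
    apply Real.exp_le_exp.2; linarith
  nlinarith

lemma dec_abs {a b : ℝ} (hab : a ≤ b) (hab1 : b - a ≤ 1) {y y' k P : ℝ → ℝ} {l Γ Y0 : ℝ}
    (hy : ContinuousOn y (Icc a b)) (hP : ContinuousOn P (Icc a b))
    (hy' : ∀ t ∈ Ioo a b, HasDerivAt y (y' t) t) (hP' : ∀ t ∈ Ioo a b, HasDerivAt P (k t) t)
    (hk : ∀ t ∈ Ioo a b, 0 ≤ k t) (hl : 0 ≤ l)
    (hle : ∀ t ∈ Ioo a b, |y' t + k t * y t| ≤ l) (hΓ : Γ ≤ P b - P a)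
    (ha : |y a| ≤ Y0) : |y b| ≤ Y0 * Real.exp (-Γ) + l := by
  have hY0 : 0 ≤ Y0 := (abs_nonneg _).trans ha
  rw [abs_le] at ha
  rw [abs_le]
  constructor
  · have := dec_le hab hab1 (y := fun t => - y t) (y' := fun t => - y' t) hy.neg hP
      (fun t ht => (hy' t ht).neg) hP' hk hl
      (fun t ht => by have := abs_le.1 (hle t ht); nlinarith [this.1]) hΓ
      (by linarith [ha.1]) hY0
    linarith
  · exact dec_le hab hab1 hy hP hy' hP' hk hl
      (fun t ht => by have := abs_le.1 (hle t ht); nlinarith [this.2]) hΓ ha.2 hY0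

/-- last time a level was attained -/
lemma last_time {a b c : ℝ} (hab : a ≤ b) {y : ℝ → ℝ} (hy : ContinuousOn y (Icc a b))
    (hb : y b < c) : (∀ t ∈ Icc a b, y t < c) ∨
      ∃ s ∈ Ico a b, c ≤ y s ∧ ∀ t ∈ Ioc s b, y t < c := by
  by_cases h : ∀ t ∈ Icc a b, y t < c
  · exact Or.inl h
  right
  push Not at h
  obtain ⟨r, hr, hrc⟩ := h
  have hc : IsCompact (Icc a b ∩ y ⁻¹' (Ici c)) :=
    isCompact_Icc.of_isClosed_subset (hy.preimage_isClosed_of_isClosed isClosed_Icc isClosed_Ici)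
      inter_subset_left
  obtain ⟨s, hs, hs'⟩ := hc.exists_isGreatest ⟨r, hr, hrc⟩
  refine ⟨s, ⟨hs.1.1, lt_of_le_of_ne hs.1.2 ?_⟩, hs.2, ?_⟩
  · rintro rfl
    exact absurd hs.2 (not_le.2 hb)
  · intro t ht
    by_contra hcon
    have : t ≤ s := hs' ⟨⟨hs.1.1.trans ht.1.le, ht.2⟩, not_lt.1 hcon⟩
    exact absurd this (not_le.2 ht.1)

/-- bootstrap -/
lemma boot {a b c : ℝ} {V : ℝ → ℝ} (hV : ContinuousOn V (Icc a b)) (ha : V a < c)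
    (h : ∀ s ∈ Icc a b, (∀ r ∈ Icc a s, V r ≤ c) → V s < c) : ∀ s ∈ Icc a b, V s < c := by
  by_contra hcon
  push Not at hcon
  obtain ⟨r, hr, hrc⟩ := hcon
  have hc : IsCompact (Icc a b ∩ V ⁻¹' (Ici c)) :=
    isCompact_Icc.of_isClosed_subset (hV.preimage_isClosed_of_isClosed isClosed_Icc isClosed_Ici)
      inter_subset_left
  obtain ⟨s, hs, hs'⟩ := hc.exists_isLeast ⟨r, hr, hrc⟩
  have hlt : ∀ r ∈ Ico a s, V r < c := by
    intro r hr
    by_contra hh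
    have : s ≤ r := hs' ⟨⟨hr.1, hr.2.le.trans hs.1.2⟩, not_lt.1 hh⟩
    exact absurd this (not_le.2 hr.2)
  have has : a < s := lt_of_le_of_ne hs.1.1 (by rintro rfl; exact absurd hs.2 (not_le.2 ha))
  have hsc : V s ≤ c := by
    have hcl : s ∈ closure (Ico a s) := by
      rw [closure_Ico has.ne]; exact right_mem_Icc.2 has.le
    have hcont : ContinuousWithinAt V (Ico a s) s :=
      (hV s hs.1).mono (fun r hr => ⟨hr.1, hr.2.le.trans hs.1.2⟩)
    have : (𝓝[Ico a s] s).NeBot := mem_closure_iff_nhdsWithin_neBot.1 hcl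
    exact le_of_tendsto hcont (eventually_mem_nhdsWithin.mono fun r hr => (hlt r hr).le)
  have := h s hs.1 (fun r hr => by
    rcases eq_or_lt_of_le hr.2 with h | h
    · rw [h]; exact hsc
    · exact (hlt r ⟨hr.1, h⟩).le)
  exact absurd hs.2 (not_le.2 this)

end

section
open Set Filter Topology

def ckL (t : ℝ) : ℝ := 1 / 10000 * t * Real.sin (2 * Real.pi * t)
def ckL' (t : ℝ) : ℝ :=
  1 / 10000 * (Real.sin (2 * Real.pi * t) + 2 * Real.pi * t * Real.cos (2 * Real.pi * t))
def cku (t : ℝ) : ℝ := 1 / (1 + Real.exp (ckL t))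
def ckM (t : ℝ) : ℝ := Real.log (1 + Real.exp (ckL t))
def gt (z t : ℝ) : ℝ := 1 / (1 + Real.exp (16 * t ^ 2 * (4 / 5 - z)))
def g1 (t : ℝ) : ℝ := gt (Real.cos (2 * Real.pi * t ^ 2)) t
def g2 (t : ℝ) : ℝ := gt (Real.sin (2 * Real.pi * t ^ 2)) t
def g3 (t : ℝ) : ℝ := gt (-Real.cos (2 * Real.pi * t ^ 2)) t
def gF (t : ℝ) : ℝ := gt (Real.sin (2 * Real.pi * t)) t
def ckA (t : ℝ) : ℝ := 6400 * (1 + t) ^ 2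

lemma gt_pos (z t : ℝ) : 0 < gt z t := by unfold gt; positivity
lemma gt_le_one (z t : ℝ) : gt z t ≤ 1 := by
  unfold gt
  rw [div_le_one (by positivity)]
  linarith [Real.exp_pos (16 * t ^ 2 * (4 / 5 - z))]
lemma gt_off {z t : ℝ} (hz : z ≤ 18 / 25) : gt z t ≤ Real.exp (-t ^ 2) := by
  unfold gt
  rw [div_le_iff₀ (by positivity), mul_add, ← Real.exp_add]
  have : 1 ≤ Real.exp (-t ^ 2 + 16 * t ^ 2 * (4 / 5 - z)) := by
    apply Real.one_le_exp
    nlinarith [sq_nonneg t]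
  linarith [Real.exp_pos (-t ^ 2)]
lemma gt_on {z t : ℝ} (hz : 4 / 5 ≤ z) : 1 / 2 ≤ gt z t := by
  unfold gt
  apply one_div_le_one_div_of_le (by positivity)
  have : Real.exp (16 * t ^ 2 * (4 / 5 - z)) ≤ 1 := by
    apply Real.exp_le_one_iff.2
    nlinarith [sq_nonneg t]
  linarith

lemma cos_off {y : ℝ} (n : ℤ) (h1 : n + 1 / 8 ≤ y) (h2 : y ≤ n + 7 / 8) :
    Real.cos (2 * Real.pi * y) ≤ 18 / 25 := by
  have hpi := Real.pi_pos
  have e : Real.cos (2 * Real.pi * y) = Real.cos (2 * Real.pi * (y - n)) := by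
    rw [← Real.cos_sub_int_mul_two_pi _ n]; ring_nf
  rw [e]
  have key : ∀ w : ℝ, 1 / 8 ≤ w → w ≤ 1 / 2 → Real.cos (2 * Real.pi * w) ≤ 18 / 25 := by
    intro w hw1 hw2
    have : Real.cos (2 * Real.pi * w) ≤ Real.cos (Real.pi / 4) := by
      apply Real.cos_le_cos_of_nonneg_of_le_pi <;> nlinarith
    rw [Real.cos_pi_div_four] at this
    have h2 : √2 ≤ 1.44 := by
      rw [Real.sqrt_le_left (by norm_num)]; norm_num
    linarith
  rcases le_total (y - n) (1 / 2) with h | h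
  · exact key _ (by linarith) h
  · have := key (1 - (y - n)) (by linarith) (by linarith)
    rwa [show 2 * Real.pi * (1 - (y - n)) = 2 * Real.pi - 2 * Real.pi * (y - n) by ring,
      Real.cos_two_pi_sub] at this

lemma cos_on {y : ℝ} (n : ℤ) (h : |y - n| ≤ 1 / 16) :
    4 / 5 ≤ Real.cos (2 * Real.pi * y) := by
  have e : Real.cos (2 * Real.pi * y) = Real.cos (2 * Real.pi * (y - n)) := by
    rw [← Real.cos_sub_int_mul_two_pi _ n]; ring_nf
  rw [e]
  refine le_trans ?_ Real.one_sub_sq_div_two_le_cos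
  have h2 : (y - n) ^ 2 ≤ (1 / 16) ^ 2 := sq_le_sq' (by linarith [(abs_le.1 h).1]) (abs_le.1 h).2
  have := Real.pi_lt_four
  have := Real.pi_pos
  have h3 : Real.pi ^ 2 ≤ 16 := by nlinarith
  nlinarith [mul_le_mul h3 h2 (by positivity) (by norm_num)]

lemma sin_eq_cos_shift (y : ℝ) :
    Real.sin (2 * Real.pi * y) = Real.cos (2 * Real.pi * (y - 1 / 4)) := by
  rw [← Real.cos_sub_pi_div_two]; ring_nf
lemma negcos_eq_cos_shift (y : ℝ) :
    -Real.cos (2 * Real.pi * y) = Real.cos (2 * Real.pi * (y - 1 / 2)) := by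
  rw [← Real.cos_sub_pi]; ring_nf

lemma g1_off {t : ℝ} (n : ℤ) (h1 : n + 1 / 8 ≤ t ^ 2) (h2 : t ^ 2 ≤ n + 7 / 8) :
    g1 t ≤ Real.exp (-t ^ 2) := gt_off (cos_off n h1 h2)
lemma g2_off {t : ℝ} (n : ℤ) (h1 : n + 3 / 8 ≤ t ^ 2) (h2 : t ^ 2 ≤ n + 9 / 8) :
    g2 t ≤ Real.exp (-t ^ 2) :=
  gt_off (by rw [sin_eq_cos_shift]; exact cos_off n (by linarith) (by linarith))
lemma g3_off {t : ℝ} (n : ℤ) (h1 : n + 5 / 8 ≤ t ^ 2) (h2 : t ^ 2 ≤ n + 11 / 8) :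
    g3 t ≤ Real.exp (-t ^ 2) :=
  gt_off (by rw [negcos_eq_cos_shift]; exact cos_off n (by linarith) (by linarith))
lemma gF_off {t : ℝ} (n : ℤ) (h1 : n + 3 / 8 ≤ t) (h2 : t ≤ n + 9 / 8) :
    gF t ≤ Real.exp (-t ^ 2) :=
  gt_off (by rw [sin_eq_cos_shift]; exact cos_off n (by linarith) (by linarith))
lemma g1_on {t : ℝ} (n : ℤ) (h1 : n ≤ t ^ 2) (h2 : t ^ 2 ≤ n + 1 / 16) : 1 / 2 ≤ g1 t :=
  gt_on (cos_on n (abs_le.2 ⟨by linarith, by linarith⟩))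
lemma g2_on {t : ℝ} (n : ℤ) (h1 : n + 1 / 4 ≤ t ^ 2) (h2 : t ^ 2 ≤ n + 5 / 16) : 1 / 2 ≤ g2 t :=
  gt_on (by rw [sin_eq_cos_shift]; exact cos_on n (abs_le.2 ⟨by linarith, by linarith⟩))
lemma g3_on {t : ℝ} (n : ℤ) (h1 : n + 1 / 2 ≤ t ^ 2) (h2 : t ^ 2 ≤ n + 9 / 16) : 1 / 2 ≤ g3 t :=
  gt_on (by rw [negcos_eq_cos_shift]; exact cos_on n (abs_le.2 ⟨by linarith, by linarith⟩))
lemma gF_on {t : ℝ} (n : ℤ) (h1 : n + 1 / 4 ≤ t) (h2 : t ≤ n + 5 / 16) : 1 / 2 ≤ gF t :=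
  gt_on (by rw [sin_eq_cos_shift]; exact cos_on n (abs_le.2 ⟨by linarith, by linarith⟩))

/-! derivatives -/
lemma sq_deriv (t : ℝ) : HasDerivAt (fun t : ℝ => t ^ 2) (2 * t) t :=
  (hasDerivAt_pow 2 t).congr_deriv (by push_cast; ring)
lemma cos2_deriv (t : ℝ) : HasDerivAt (fun t : ℝ => Real.cos (2 * Real.pi * t ^ 2))
    (-(4 * Real.pi * t * Real.sin (2 * Real.pi * t ^ 2))) t :=
  (((sq_deriv t).const_mul (2 * Real.pi)).cos).congr_deriv (by ring)
lemma sin2_deriv (t : ℝ) : HasDerivAt (fun t : ℝ => Real.sin (2 * Real.pi * t ^ 2))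
    (4 * Real.pi * t * Real.cos (2 * Real.pi * t ^ 2)) t :=
  (((sq_deriv t).const_mul (2 * Real.pi)).sin).congr_deriv (by ring)
lemma sin1_deriv (t : ℝ) : HasDerivAt (fun t : ℝ => Real.sin (2 * Real.pi * t))
    (2 * Real.pi * Real.cos (2 * Real.pi * t)) t :=
  (((hasDerivAt_id' t).const_mul (2 * Real.pi)).sin).congr_deriv (by ring)
lemma cos1_deriv (t : ℝ) : HasDerivAt (fun t : ℝ => Real.cos (2 * Real.pi * t))
    (-(2 * Real.pi * Real.sin (2 * Real.pi * t))) t :=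
  (((hasDerivAt_id' t).const_mul (2 * Real.pi)).cos).congr_deriv (by ring)

lemma gt_deriv {z : ℝ → ℝ} {z' t : ℝ} (hz : HasDerivAt z z' t) :
    HasDerivAt (fun t => gt (z t) t)
      (-(gt (z t) t * (1 - gt (z t) t) * (32 * t * (4 / 5 - z t) - 16 * t ^ 2 * z'))) t := by
  have h1 : HasDerivAt (fun t => 16 * t ^ 2 * (4 / 5 - z t))
      (32 * t * (4 / 5 - z t) - 16 * t ^ 2 * z') t :=
    (((sq_deriv t).const_mul 16).mul (hz.const_sub (4 / 5))).congr_deriv (by ring)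
  have hne : (1 + Real.exp (16 * t ^ 2 * (4 / 5 - z t))) ≠ 0 := by positivity
  have := (h1.exp.const_add 1).inv hne
  have e : (fun t => gt (z t) t) = (fun t => 1 + Real.exp (16 * t ^ 2 * (4 / 5 - z t)))⁻¹ := by
    funext s; simp [gt]
  rw [e]
  refine this.congr_deriv ?_
  simp only [gt]
  field_simp
  ring

lemma ckL_deriv (t : ℝ) : HasDerivAt ckL (ckL' t) t :=
  (((hasDerivAt_id' t).const_mul (1 / 10000)).mul (sin1_deriv t)).congr_deriv
    (by unfold ckL'; ring)
lemma cku_deriv (t : ℝ) : HasDerivAt cku (-(ckL' t * cku t * (1 - cku t))) t := by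
  have hne : (1 + Real.exp (ckL t)) ≠ 0 := by positivity
  have := ((ckL_deriv t).exp.const_add 1).inv hne
  have e : cku = (fun t => 1 + Real.exp (ckL t))⁻¹ := by
    funext s; simp [cku]
  rw [show HasDerivAt cku = HasDerivAt ((fun t => 1 + Real.exp (ckL t))⁻¹) by rw [e]]
  refine this.congr_deriv ?_
  simp only [cku]
  field_simp
  ring
lemma ckM_deriv (t : ℝ) : HasDerivAt ckM (ckL' t * (1 - cku t)) t := by
  have hne : (1 + Real.exp (ckL t)) ≠ 0 := by positivity
  have := ((ckL_deriv t).exp.const_add 1).log hne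
  refine this.congr_deriv ?_
  simp only [cku]
  field_simp
  ring

lemma cku_pos (t : ℝ) : 0 < cku t := by unfold cku; positivity
lemma cku_le_one (t : ℝ) : cku t ≤ 1 := by
  unfold cku
  rw [div_le_one (by positivity)]
  linarith [Real.exp_pos (ckL t)]
lemma cku_eq (t : ℝ) : cku t = Real.exp (-ckM t) := by
  unfold cku ckM
  rw [Real.exp_neg, Real.exp_log (by positivity), one_div]
lemma ckM_nonneg (t : ℝ) : 0 ≤ ckM t := by
  unfold ckM
  apply Real.log_nonneg
  linarith [Real.exp_pos (ckL t)]
lemma ckM_le (t : ℝ) {B : ℝ} (hB : 0 ≤ B) (h : ckL t ≤ B) : ckM t ≤ 1 + B := by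
  unfold ckM
  rw [Real.log_le_iff_le_exp (by positivity), Real.exp_add]
  have h1 : Real.exp (ckL t) ≤ Real.exp B := Real.exp_le_exp.2 h
  have h2 : 1 ≤ Real.exp B := Real.one_le_exp hB
  have h3 : 2 ≤ Real.exp 1 := by linarith [Real.add_one_le_exp (1 : ℝ)]
  nlinarith
lemma ckM_le_t {t : ℝ} (ht : 0 ≤ t) : ckM t ≤ 1 + t := by
  apply ckM_le t ht
  unfold ckL
  have := Real.sin_le_one (2 * Real.pi * t)
  nlinarith
lemma cku_ge_exp {t : ℝ} (ht : 0 ≤ t) : Real.exp (-(1 + t)) ≤ cku t := by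
  rw [cku_eq]; apply Real.exp_le_exp.2; linarith [ckM_le_t ht]
lemma cku_ge_half {t : ℝ} (h : ckL t ≤ 0) : 1 / 2 ≤ cku t := by
  unfold cku
  apply one_div_le_one_div_of_le (by positivity)
  linarith [Real.exp_le_one_iff.2 h]
lemma cku_le_exp (t : ℝ) : cku t ≤ Real.exp (-ckL t) := by
  unfold cku
  rw [Real.exp_neg, ← one_div]
  apply one_div_le_one_div_of_le (by positivity)
  linarith

/-- variation of `M` -/
lemma ckM_var {s t : ℝ} (hs : 1 ≤ s) (hst : s ≤ t) :
    |ckM t - ckM s| ≤ 4 / 10000 * (t ^ 2 - s ^ 2) := by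
  have hb : ∀ r ∈ Ioo s t, |ckL' r * (1 - cku r)| ≤ 4 / 10000 * (2 * r) := by
    intro r hr
    have h1 := cku_pos r
    have h2 := cku_le_one r
    have hr1 : 1 ≤ r := hs.trans hr.1.le
    rw [abs_mul, abs_of_nonneg (by linarith : 0 ≤ 1 - cku r)]
    have h3 : |ckL' r| ≤ 1 / 10000 * (1 + 2 * Real.pi * r) := by
      unfold ckL'
      rw [abs_mul, abs_of_pos (by norm_num : (0 : ℝ) < 1 / 10000)]
      gcongr
      refine (abs_add_le _ _).trans ?_
      apply add_le_add (Real.abs_sin_le_one _)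
      rw [abs_mul, abs_of_nonneg (by have := Real.pi_pos; positivity)]
      have := Real.abs_cos_le_one (2 * Real.pi * r)
      have := Real.pi_pos
      have : 0 ≤ 2 * Real.pi * r := by positivity
      nlinarith
    have h4 := Real.pi_lt_d2
    have h5 : |ckL' r| ≤ 4 / 10000 * (2 * r) := by nlinarith
    nlinarith [abs_nonneg (ckL' r)]
  have hc : ∀ S : Set ℝ, ContinuousOn ckM S := fun S r _ => (ckM_deriv r).continuousAt.continuousWithinAt
  have hq : ∀ r : ℝ, HasDerivAt (fun r => 4 / 10000 * r ^ 2) (4 / 10000 * (2 * r)) r := by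
    exact fun r => (sq_deriv r).const_mul _
  have u1 := incr_le hst (hc _) (z := fun r => 4 / 10000 * r ^ 2) (by fun_prop)
    (fun r _ => ckM_deriv r) (fun r _ => hq r) (fun r hr => (abs_le.1 (hb r hr)).2)
  have u2 := incr_le hst (y := fun r => - ckM r) (hc _).neg (z := fun r => 4 / 10000 * r ^ 2)
    (by fun_prop)
    (fun r _ => (ckM_deriv r).neg) (fun r _ => hq r)
    (fun r hr => by linarith [(abs_le.1 (hb r hr)).1])
  rw [abs_le]
  constructor <;> linarith

lemma sin_shift (t : ℝ) (j : ℤ) : Real.sin (2 * Real.pi * t) = Real.sin (2 * Real.pi * (t - j)) := by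
  rw [← Real.sin_sub_int_mul_two_pi _ j]; ring_nf

lemma ckL_nonpos {t : ℝ} (j : ℤ) (ht : 0 ≤ t) (h1 : j - 1 / 2 ≤ t) (h2 : t ≤ j) : ckL t ≤ 0 := by
  have : Real.sin (2 * Real.pi * t) ≤ 0 := by
    rw [sin_shift t j]
    have := Real.pi_pos
    apply Real.sin_nonpos_of_nonpos_of_neg_pi_le <;> nlinarith
  unfold ckL
  have : 0 ≤ 1 / 10000 * t := by positivity
  nlinarith

lemma ckL_le {t : ℝ} (j : ℤ) (hj : 0 ≤ (j : ℝ)) (h1 : j ≤ t) :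
    ckL t ≤ 1 / 1000 * (t ^ 2 - j ^ 2) := by
  unfold ckL
  rw [sin_shift t j]
  have hpi := Real.pi_lt_four
  have hpi0 := Real.pi_pos
  have h2 : Real.sin (2 * Real.pi * (t - j)) ≤ 2 * Real.pi * (t - j) :=
    Real.sin_le (by have : 0 ≤ t - j := by linarith
                    positivity)
  have h3 : Real.sin (2 * Real.pi * (t - j)) ≤ 8 * (t - j) := by nlinarith
  have ht : 0 ≤ t := hj.trans h1
  nlinarith [mul_le_mul_of_nonneg_left h3 ht, mul_nonneg hj (sub_nonneg.2 h1)]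

lemma ckL_ge {t : ℝ} (j : ℤ) (hj : 0 ≤ (j : ℝ)) (h1 : j ≤ t) (h2 : t ≤ j + 3 / 8) :
    1 / 20000 * (t ^ 2 - j ^ 2) ≤ ckL t := by
  unfold ckL
  rw [sin_shift t j]
  have hpi0 := Real.pi_pos
  have hpi := Real.pi_gt_three
  have h3 : t - j ≤ Real.sin (2 * Real.pi * (t - j)) := by
    rcases le_total (t - j) (1 / 4) with h | h
    · have := Real.mul_le_sin (x := 2 * Real.pi * (t - j))
        (by have : 0 ≤ t - j := by linarith
            positivity) (by nlinarith)
      have e : 2 / Real.pi * (2 * Real.pi * (t - j)) = 4 * (t - j) := by field_simp; ring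
      linarith
    · have e : Real.sin (2 * Real.pi * (t - j)) = Real.sin (Real.pi - 2 * Real.pi * (t - j)) := by
        rw [Real.sin_pi_sub]
      have := Real.mul_le_sin (x := Real.pi - 2 * Real.pi * (t - j)) (by nlinarith) (by nlinarith)
      have e2 : 2 / Real.pi * (Real.pi - 2 * Real.pi * (t - j)) = 2 - 4 * (t - j) := by
        field_simp; ring
      rw [e]
      linarith
  have ht : 0 ≤ t := hj.trans h1
  nlinarith [mul_le_mul_of_nonneg_left h3 ht, mul_nonneg hj (sub_nonneg.2 h1)]

/-- lower bound for the integral of a gate -/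
lemma gate_int {a b w1 w2 : ℝ} {g P : ℝ → ℝ} (h0 : 0 ≤ a) (h1 : a ≤ w1) (h2 : w1 ≤ w2) (h3 : w2 ≤ b)
    (hw : 1 / 16 ≤ w2 ^ 2 - w1 ^ 2) (hg : ∀ t, 0 ≤ g t) (hon : ∀ t ∈ Icc w1 w2, 1 / 2 ≤ g t)
    (hP : ContinuousOn P (Icc a b)) (hP' : ∀ t ∈ Ioo a b, HasDerivAt P (ckA t * g t) t) :
    100 * (1 + w1) ≤ P b - P a := by
  have hA : ∀ t, 0 ≤ ckA t := fun t => by unfold ckA; positivity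
  have c1 := incr_le h1 (y := fun _ => (0 : ℝ)) continuousOn_const
    (hP.mono (Icc_subset_Icc_right (h2.trans h3)))
    (fun t _ => hasDerivAt_const t 0) (fun t ht => hP' t ⟨ht.1, ht.2.trans_le (h2.trans h3)⟩)
    (fun t _ => mul_nonneg (hA t) (hg t))
  have c3 := incr_le h3 (y := fun _ => (0 : ℝ)) continuousOn_const
    (hP.mono (Icc_subset_Icc_left (h1.trans h2)))
    (fun t _ => hasDerivAt_const t 0) (fun t ht => hP' t ⟨(h1.trans h2).trans_lt ht.1, ht.2⟩)
    (fun t _ => mul_nonneg (hA t) (hg t))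
  have hq : ∀ r : ℝ, HasDerivAt (fun r => 1600 * (1 + w1) * r ^ 2)
      (1600 * (1 + w1) * (2 * r)) r := by
    exact fun r => (sq_deriv r).const_mul _
  have c2 := incr_le h2 (y := fun r => 1600 * (1 + w1) * r ^ 2) (by fun_prop)
    (hP.mono (Icc_subset_Icc h1 h3))
    (fun t _ => hq t) (fun t ht => hP' t ⟨h1.trans_lt ht.1, ht.2.trans_le h3⟩)
    (fun t ht => by
      have := hon t (Ioo_subset_Icc_self ht)
      have hw1 : 0 ≤ w1 := h0.trans h1
      have : ckA t * (1 / 2) ≤ ckA t * g t := mul_le_mul_of_nonneg_left this (hA t)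
      unfold ckA at this ⊢
      nlinarith [ht.1, mul_nonneg hw1 (sub_nonneg.2 ht.1.le)])
  simp only [sub_self] at c1 c3
  have : 0 ≤ 1600 * (1 + w1) := by linarith [h0.trans h1]
  nlinarith

end

section
open Set Filter Topology

lemma poly_lip {σ : Type} [Fintype σ] (P : MvPolynomial σ ℝ) :
    ∃ C : ℝ, 1 ≤ C ∧ ∃ r : ℕ, ∀ v w : σ → ℝ,
      |MvPolynomial.eval v P - MvPolynomial.eval w P| ≤ C * (1 + ‖v‖ + ‖w‖) ^ r * ‖v - w‖ := by
  induction P using MvPolynomial.induction_on with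
  | C a => exact ⟨1, le_rfl, 0, fun v w => by simp⟩
  | add p q hp hq =>
    obtain ⟨C1, h1, r1, hp⟩ := hp
    obtain ⟨C2, h2, r2, hq⟩ := hq
    refine ⟨C1 + C2, by linarith, r1 + r2, fun v w => ?_⟩
    have e : MvPolynomial.eval v (p + q) - MvPolynomial.eval w (p + q) =
      (MvPolynomial.eval v p - MvPolynomial.eval w p) +
      (MvPolynomial.eval v q - MvPolynomial.eval w q) := by simp; ring
    rw [e]
    refine (abs_add_le _ _).trans ?_
    have hb : 1 ≤ 1 + ‖v‖ + ‖w‖ := by linarith [norm_nonneg v, norm_nonneg w]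
    have hr1 : (1 + ‖v‖ + ‖w‖) ^ r1 ≤ (1 + ‖v‖ + ‖w‖) ^ (r1 + r2) :=
      pow_le_pow_right₀ hb (by omega)
    have hr2 : (1 + ‖v‖ + ‖w‖) ^ r2 ≤ (1 + ‖v‖ + ‖w‖) ^ (r1 + r2) :=
      pow_le_pow_right₀ hb (by omega)
    calc _ ≤ C1 * (1 + ‖v‖ + ‖w‖) ^ r1 * ‖v - w‖ + C2 * (1 + ‖v‖ + ‖w‖) ^ r2 * ‖v - w‖ :=
          add_le_add (hp v w) (hq v w)
      _ ≤ C1 * (1 + ‖v‖ + ‖w‖) ^ (r1 + r2) * ‖v - w‖ +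
          C2 * (1 + ‖v‖ + ‖w‖) ^ (r1 + r2) * ‖v - w‖ := by gcongr
      _ = _ := by ring
  | mul_X p i hp =>
    obtain ⟨C1, h1, r1, hp⟩ := hp
    set c0 := |MvPolynomial.eval 0 p| with hc0
    refine ⟨2 * C1 + c0, by have := abs_nonneg (MvPolynomial.eval 0 p); linarith,
      r1 + 1, fun v w => ?_⟩
    have hb : 1 ≤ 1 + ‖v‖ + ‖w‖ := by linarith [norm_nonneg v, norm_nonneg w]
    set b := 1 + ‖v‖ + ‖w‖ with hbdef
    have e : MvPolynomial.eval v (p * MvPolynomial.X i) - MvPolynomial.eval w (p * MvPolynomial.X i) =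
      (MvPolynomial.eval v p - MvPolynomial.eval w p) * v i + MvPolynomial.eval w p * (v - w) i := by
      simp; ring
    rw [e]
    refine (abs_add_le _ _).trans ?_
    rw [abs_mul, abs_mul]
    have hv : |v i| ≤ b := (norm_le_pi_norm v i).trans (by linarith [norm_nonneg w])
    have hd : |(v - w) i| ≤ ‖v - w‖ := norm_le_pi_norm (v - w) i
    have hw : |MvPolynomial.eval w p| ≤ (c0 + C1) * b ^ (r1 + 1) := by
      have h2 := hp w 0
      simp only [norm_zero, add_zero, sub_zero] at h2
      have h3 : |MvPolynomial.eval w p| ≤ |MvPolynomial.eval w p - MvPolynomial.eval 0 p| + c0 := by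
        have := abs_add_le (MvPolynomial.eval w p - MvPolynomial.eval 0 p) (MvPolynomial.eval 0 p)
        rwa [sub_add_cancel] at this
      have h4 : (1 + ‖w‖) ^ r1 ≤ b ^ r1 := by
        gcongr; linarith [norm_nonneg v]
      have h5 : ‖w‖ ≤ b := by linarith [norm_nonneg v]
      have h6 : 1 ≤ b ^ (r1 + 1) := one_le_pow₀ hb
      have h7 : C1 * (1 + ‖w‖) ^ r1 * ‖w‖ ≤ C1 * b ^ r1 * b := by gcongr
      have h8 : c0 * 1 ≤ c0 * b ^ (r1 + 1) := by gcongr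
      have h9 : C1 * b ^ r1 * b = C1 * b ^ (r1 + 1) := by ring
      nlinarith
    have hc0' : 0 ≤ c0 := abs_nonneg _
    calc _ ≤ (C1 * b ^ r1 * ‖v - w‖) * b + ((c0 + C1) * b ^ (r1 + 1)) * ‖v - w‖ := by
          gcongr; exact hp v w
      _ = _ := by ring

lemma poly_lip_fam {σ ι : Type} [Fintype σ] [Fintype ι] (P : ι → MvPolynomial σ ℝ) :
    ∃ C : ℝ, 1 ≤ C ∧ ∃ r : ℕ, ∀ v w : σ → ℝ, ∀ i,
      |MvPolynomial.eval v (P i) - MvPolynomial.eval w (P i)| ≤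
        C * (1 + ‖v‖ + ‖w‖) ^ r * ‖v - w‖ := by
  choose C hC r h using fun i => poly_lip (P i)
  refine ⟨1 + ∑ i, C i, ?_, ∑ i, r i, fun v w i => (h i v w).trans ?_⟩
  · have : 0 ≤ ∑ i, C i := Finset.sum_nonneg fun i _ => by linarith [hC i]
    linarith
  · have hb : 1 ≤ 1 + ‖v‖ + ‖w‖ := by linarith [norm_nonneg v, norm_nonneg w]
    have h1 : C i ≤ 1 + ∑ i, C i := by
      have := Finset.single_le_sum (f := C) (fun i _ => by linarith [hC i]) (Finset.mem_univ i)
      linarith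
    have h2 : r i ≤ ∑ i, r i := Finset.single_le_sum (f := r) (fun i _ => by omega) (Finset.mem_univ i)
    have := pow_le_pow_right₀ hb h2
    have := hC i
    gcongr
    linarith

lemma poly_grow_fam {σ ι : Type} [Fintype σ] [Fintype ι] (P : ι → MvPolynomial σ ℝ) :
    ∃ C : ℝ, 1 ≤ C ∧ ∃ r : ℕ, ∀ v : σ → ℝ, ∀ i,
      |MvPolynomial.eval v (P i)| ≤ C * (1 + ‖v‖) ^ r := by
  obtain ⟨C, hC, r, h⟩ := poly_lip_fam P
  have hs : 0 ≤ ∑ i, |MvPolynomial.eval 0 (P i)| := Finset.sum_nonneg fun i _ => abs_nonneg _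
  refine ⟨C + ∑ i, |MvPolynomial.eval 0 (P i)|, by linarith, r + 1, fun v i => ?_⟩
  have h2 := h v 0 i
  simp only [norm_zero, add_zero, sub_zero] at h2
  have h3 : |MvPolynomial.eval v (P i)| ≤
      |MvPolynomial.eval v (P i) - MvPolynomial.eval 0 (P i)| + |MvPolynomial.eval 0 (P i)| := by
    have := abs_add_le (MvPolynomial.eval v (P i) - MvPolynomial.eval 0 (P i))
      (MvPolynomial.eval 0 (P i))
    simpa using this
  have h4 : |MvPolynomial.eval 0 (P i)| ≤ ∑ i, |MvPolynomial.eval 0 (P i)| :=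
    Finset.single_le_sum (f := fun i => |MvPolynomial.eval 0 (P i)|)
      (fun i _ => abs_nonneg _) (Finset.mem_univ i)
  have h5 : 1 ≤ (1 + ‖v‖) ^ (r + 1) := one_le_pow₀ (by linarith [norm_nonneg v])
  have h6 : C * (1 + ‖v‖) ^ r * ‖v‖ ≤ C * (1 + ‖v‖) ^ r * (1 + ‖v‖) := by
    gcongr; linarith
  have h7 : C * (1 + ‖v‖) ^ r * (1 + ‖v‖) = C * (1 + ‖v‖) ^ (r + 1) := by ring
  nlinarith

/-- polynomially bounded functions on `[1,∞)` -/
def PB (g : ℝ → ℝ) : Prop := ∃ C : ℝ, 1 ≤ C ∧ ∃ r : ℕ, ∀ s : ℝ, 1 ≤ s → |g s| ≤ C * s ^ r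

lemma PB.const (c : ℝ) : PB fun _ => c :=
  ⟨1 + |c|, by linarith [abs_nonneg c], 0, fun s _ => by simp⟩
lemma PB.id : PB fun s => s :=
  ⟨1, le_rfl, 1, fun s hs => by rw [abs_of_nonneg (by linarith)]; simp⟩
lemma PB.add {g h : ℝ → ℝ} (hg : PB g) (hh : PB h) : PB fun s => g s + h s := by
  obtain ⟨C1, h1, r1, hg⟩ := hg
  obtain ⟨C2, h2, r2, hh⟩ := hh
  refine ⟨C1 + C2, by linarith, r1 + r2, fun s hs => (abs_add_le _ _).trans ?_⟩
  have hr1 : s ^ r1 ≤ s ^ (r1 + r2) := pow_le_pow_right₀ hs (by omega)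
  have hr2 : s ^ r2 ≤ s ^ (r1 + r2) := pow_le_pow_right₀ hs (by omega)
  calc _ ≤ C1 * s ^ r1 + C2 * s ^ r2 := add_le_add (hg s hs) (hh s hs)
    _ ≤ C1 * s ^ (r1 + r2) + C2 * s ^ (r1 + r2) := by gcongr
    _ = _ := by ring
lemma PB.mul {g h : ℝ → ℝ} (hg : PB g) (hh : PB h) : PB fun s => g s * h s := by
  obtain ⟨C1, h1, r1, hg⟩ := hg
  obtain ⟨C2, h2, r2, hh⟩ := hh
  refine ⟨C1 * C2, by nlinarith, r1 + r2, fun s hs => ?_⟩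
  rw [abs_mul]
  calc _ ≤ (C1 * s ^ r1) * (C2 * s ^ r2) :=
        mul_le_mul (hg s hs) (hh s hs) (abs_nonneg _) (by positivity)
    _ = _ := by ring
lemma PB.pow {g : ℝ → ℝ} (hg : PB g) (k : ℕ) : PB fun s => g s ^ k := by
  induction k with
  | zero => simpa using PB.const 1
  | succ k ih => simpa [pow_succ] using ih.mul hg
lemma PB.comp_pow {g : ℝ → ℝ} (hg : PB g) (C : ℝ) (r : ℕ) : PB fun s => C * g s ^ r :=
  (PB.const C).mul (hg.pow r)

lemma exp_small (C : ℝ) (r : ℕ) : ∃ T0 : ℝ, 1 ≤ T0 ∧ ∀ t : ℝ, T0 ≤ t →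
    C * (1 + t) ^ r * Real.exp (-t ^ 2) ≤ Real.exp (-(5 * t)) := by
  have h := (Real.tendsto_pow_mul_exp_neg_atTop_nhds_zero r).const_mul (|C| * 2 ^ r)
  rw [mul_zero] at h
  have h1 := h.eventually (gt_mem_nhds (show (0 : ℝ) < 1 by norm_num))
  obtain ⟨T, hT⟩ := eventually_atTop.1 h1
  refine ⟨max T 6, le_trans (by norm_num) (le_max_right _ _), fun t ht => ?_⟩
  have ht6 : 6 ≤ t := (le_max_right _ _).trans ht
  have := (hT t ((le_max_left _ _).trans ht)).le
  have e : Real.exp (-t ^ 2) ≤ Real.exp (-t) * Real.exp (-(5 * t)) := by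
    rw [← Real.exp_add]; apply Real.exp_le_exp.2; nlinarith
  have h2 : C * (1 + t) ^ r ≤ |C| * 2 ^ r * t ^ r := by
    rw [mul_assoc, ← mul_pow]
    calc C * (1 + t) ^ r ≤ |C| * (1 + t) ^ r := by gcongr; exact le_abs_self C
      _ ≤ _ := by gcongr; linarith
  calc _ ≤ (|C| * 2 ^ r * t ^ r) * (Real.exp (-t) * Real.exp (-(5 * t))) := by gcongr
    _ = (|C| * 2 ^ r * (t ^ r * Real.exp (-t))) * Real.exp (-(5 * t)) := by ring
    _ ≤ 1 * Real.exp (-(5 * t)) := by gcongr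
    _ = _ := by ring

end

section
open Set Filter Topology Metric
open scoped NNReal

def clampR {S : Type} (R : ℝ) (v : S → ℝ) : S → ℝ := fun i => max (-R) (min R (v i))

lemma clampR_lip {S : Type} [Fintype S] (R : ℝ) : LipschitzWith 1 (clampR R : (S → ℝ) → S → ℝ) := by
  apply LipschitzWith.of_dist_le_mul
  intro v w
  rw [NNReal.coe_one, one_mul, dist_pi_le_iff dist_nonneg]
  intro i
  have h := ((LipschitzWith.id (α := ℝ)).const_min R).const_max (-R)
  have := h.dist_le_mul (v i) (w i)
  simp only [NNReal.coe_one, one_mul, id] at this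
  exact this.trans (dist_le_pi_dist v w i)

lemma clampR_mem {S : Type} [Fintype S] {R : ℝ} (hR : 0 ≤ R) (v : S → ℝ) : ‖clampR R v‖ ≤ R := by
  rw [pi_norm_le_iff_of_nonneg hR]
  intro i
  rw [Real.norm_eq_abs, abs_le]
  exact ⟨le_max_left _ _, max_le (by linarith) (min_le_left _ _)⟩

lemma clampR_eq {S : Type} [Fintype S] {R : ℝ} {v : S → ℝ} (hv : ‖v‖ ≤ R) : clampR R v = v := by
  funext i
  have := (norm_le_pi_norm v i).trans hv
  rw [Real.norm_eq_abs, abs_le] at this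
  unfold clampR
  rw [min_eq_right this.2, max_eq_right this.1]

lemma ode_local {S : Type} [Fintype S] (f : ℝ → (S → ℝ) → (S → ℝ))
    (hlip : ∀ T R : ℝ, 0 ≤ T → 0 ≤ R → ∃ K : ℝ≥0, ∀ t ∈ Icc 0 T,
      LipschitzOnWith K (f t) (closedBall 0 R))
    (hcont : ∀ v, ContinuousOn (fun t => f t v) (Ici 0))
    (hb : ∀ T : ℝ, 0 < T → ∀ y : ℝ → S → ℝ, y 0 = 0 → ContinuousOn y (Icc 0 T) →
      (∀ t ∈ Ioo 0 T, HasDerivAt y (f t (y t)) t) → ‖y T‖ ≤ 1 + T)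
    (T : ℝ) (hT : 0 < T) :
    ∃ y : ℝ → S → ℝ, y 0 = 0 ∧ (∀ t ∈ Icc 0 T, ‖y t‖ ≤ 2 + T) ∧
      ∀ t ∈ Icc 0 T, HasDerivWithinAt y (f t (y t)) (Icc 0 T) t := by
  have hR : (0 : ℝ) ≤ 2 + T := by linarith
  obtain ⟨K, hK⟩ := hlip T (2 + T) hT.le hR
  have hK' : ∀ t ∈ Icc 0 T, LipschitzWith K (fun v => f t (clampR (2 + T) v)) := by
    intro t ht
    have := (hK t ht).comp ((clampR_lip (2 + T)).lipschitzOnWith (s := (univ : Set (S → ℝ))))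
      (fun v _ => mem_closedBall_zero_iff.2 (clampR_mem hR v))
    rw [mul_one, lipschitzOnWith_univ] at this
    exact this
  obtain ⟨L0, hL0⟩ := (isCompact_Icc (a := (0 : ℝ)) (b := T)).exists_bound_of_continuousOn
    ((hcont 0).mono Icc_subset_Ici_self)
  have hL00 : 0 ≤ L0 := (norm_nonneg _).trans (hL0 0 ⟨le_rfl, hT.le⟩)
  set L : ℝ≥0 := ⟨L0 + K * (2 + T), by positivity⟩ with hL
  have hpl : IsPicardLindelof (fun t v => f t (clampR (2 + T) v)) (tmin := 0) (tmax := T)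
      ⟨0, le_rfl, hT.le⟩ (0 : S → ℝ) (L * ⟨T, hT.le⟩) 0 L K := by
    constructor
    · intro t ht; exact (hK' t ht).lipschitzOnWith
    · intro v _; exact (hcont _).mono Icc_subset_Ici_self
    · intro t ht v _
      have h1 := (hK t ht).dist_le_mul _ (mem_closedBall_zero_iff.2 (clampR_mem hR v)) 0
        (mem_closedBall_self hR)
      rw [dist_zero_right, dist_eq_norm] at h1
      have h2 := clampR_mem hR v
      have h3 := hL0 t ht
      have h4 : ‖f t (clampR (2 + T) v)‖ ≤ ‖f t (clampR (2 + T) v) - f t 0‖ + ‖f t 0‖ := by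
        simpa using norm_add_le (f t (clampR (2 + T) v) - f t 0) (f t 0)
      have h5 : (K : ℝ) * ‖clampR (2 + T) v‖ ≤ K * (2 + T) := by gcongr
      change _ ≤ L0 + K * (2 + T)
      linarith
    · simp only [sub_zero, sub_self, NNReal.coe_mul, NNReal.coe_zero]
      rw [max_eq_left hT.le]
      exact le_refl _
  obtain ⟨y, hy0, hy⟩ := hpl.exists_eq_forall_mem_Icc_hasDerivWithinAt₀
  simp only at hy0 hy
  have hyc : ContinuousOn y (Icc 0 T) := fun t ht => (hy t ht).continuousWithinAt
  have hlt : ∀ s ∈ Icc 0 T, ‖y s‖ < 2 + T := by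
    apply boot hyc.norm (by rw [hy0, norm_zero]; linarith)
    intro s hs hr
    rcases eq_or_lt_of_le hs.1 with h | h
    · rw [← h, hy0, norm_zero]; linarith
    · have := hb s h y hy0 (hyc.mono (Icc_subset_Icc_right hs.2)) (fun t ht => by
        have h1 := (hy t ⟨ht.1.le, ht.2.le.trans hs.2⟩).hasDerivAt
          (Icc_mem_nhds ht.1 (ht.2.trans_le hs.2))
        rwa [clampR_eq (hr t ⟨ht.1.le, ht.2.le⟩)] at h1)
      linarith [hs.2]
  refine ⟨y, hy0, fun t ht => (hlt t ht).le, fun t ht => ?_⟩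
  have := hy t ht
  rwa [clampR_eq (hlt t ht).le] at this

lemma ode_global {S : Type} [Fintype S] (f : ℝ → (S → ℝ) → (S → ℝ))
    (hlip : ∀ T R : ℝ, 0 ≤ T → 0 ≤ R → ∃ K : ℝ≥0, ∀ t ∈ Icc 0 T,
      LipschitzOnWith K (f t) (closedBall 0 R))
    (hcont : ∀ v, ContinuousOn (fun t => f t v) (Ici 0))
    (hb : ∀ T : ℝ, 0 < T → ∀ y : ℝ → S → ℝ, y 0 = 0 → ContinuousOn y (Icc 0 T) →
      (∀ t ∈ Ioo 0 T, HasDerivAt y (f t (y t)) t) → ‖y T‖ ≤ 1 + T) :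
    ∃ y : ℝ → S → ℝ, y 0 = 0 ∧ ∀ t : ℝ, 0 ≤ t → HasDerivAt y (f t (y t)) t := by
  have hloc := ode_local f hlip hcont hb
  choose Y hY0 hYb hY using fun n : ℕ => hloc (n + 1) (by positivity)
  have hYc : ∀ n, ContinuousOn (Y n) (Icc 0 (n + 1)) :=
    fun n t ht => (hY n t ht).continuousWithinAt
  have hag : ∀ k n : ℕ, k ≤ n → EqOn (Y k) (Y n) (Icc 0 (k + 1)) := by
    intro k n hkn
    have hkn' : (k : ℝ) ≤ n := by exact_mod_cast hkn
    obtain ⟨K, hK⟩ := hlip (k + 1) (2 + (n + 1)) (by positivity) (by positivity)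
    apply ODE_solution_unique_of_mem_Icc_right (v := f) (K := K)
      (s := fun _ => closedBall 0 (2 + ((n : ℝ) + 1)))
    · intro t ht; exact hK t ⟨ht.1, ht.2.le⟩
    · exact hYc k
    · intro t ht
      exact (hY k t ⟨ht.1, ht.2.le⟩).mono_of_mem_nhdsWithin
        (mem_of_superset (Icc_mem_nhdsGE ht.2) (Icc_subset_Icc_left ht.1))
    · intro t ht
      rw [mem_closedBall_zero_iff]
      linarith [hYb k t ⟨ht.1, ht.2.le⟩]
    · exact (hYc n).mono (Icc_subset_Icc_right (by linarith))
    · intro t ht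
      have ht2 : t < n + 1 := by linarith [ht.2]
      exact (hY n t ⟨ht.1, ht2.le⟩).mono_of_mem_nhdsWithin
        (mem_of_superset (Icc_mem_nhdsGE ht2) (Icc_subset_Icc_left ht.1))
    · intro t ht
      rw [mem_closedBall_zero_iff]
      exact hYb n t ⟨ht.1, by linarith [ht.2]⟩
    · rw [hY0, hY0]
  set y : ℝ → S → ℝ := fun t => if 0 ≤ t then Y ⌊t⌋₊ t else t • f 0 0 with hy
  have hyY : ∀ n : ℕ, EqOn y (Y n) (Ico 0 (n + 1)) := by
    intro n t ht
    simp only [hy, if_pos ht.1]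
    have h1 : ⌊t⌋₊ ≤ n := by
      have : ⌊t⌋₊ < n + 1 := (Nat.floor_lt ht.1).2 (by exact_mod_cast ht.2)
      omega
    exact hag _ _ h1 ⟨ht.1, (Nat.lt_floor_add_one t).le⟩
  have hy0 : y 0 = 0 := by rw [hyY 0 ⟨le_rfl, by norm_num⟩, hY0]
  refine ⟨y, hy0, fun t ht => ?_⟩
  have hf1 := Nat.lt_floor_add_one t
  set n := ⌊t⌋₊
  have htI : t ∈ Icc (0 : ℝ) (n + 1) := ⟨ht, hf1.le⟩
  have hyt : y t = Y n t := hyY n ⟨ht, hf1⟩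
  rcases eq_or_lt_of_le ht with h | h
  · subst h
    rw [hy0]
    have hr : HasDerivWithinAt y (f 0 0) (Ici 0) 0 := by
      have h1 := (hY n 0 htI)
      rw [hY0] at h1
      have h2 : HasDerivWithinAt (Y n) (f 0 0) (Ico 0 (n + 1)) 0 := h1.mono Ico_subset_Icc_self
      have h3 : HasDerivWithinAt y (f 0 0) (Ico 0 (n + 1)) 0 :=
        h2.congr (fun s hs => hyY n hs) (hyY n ⟨le_rfl, hf1⟩)
      exact h3.mono_of_mem_nhdsWithin (Ico_mem_nhdsGE hf1)
    have hl : HasDerivWithinAt y (f 0 0) (Iic 0) 0 := by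
      have h1 : HasDerivAt (fun t : ℝ => t • f 0 0) (f 0 0) 0 := by
        simpa using (hasDerivAt_id' (0 : ℝ)).smul_const (f 0 0)
      refine h1.hasDerivWithinAt.congr (fun s hs => ?_) (by rw [hy0]; simp)
      rcases eq_or_lt_of_le (show s ≤ 0 from hs) with h | h
      · rw [h, hy0]; simp
      · simp only [hy, if_neg (not_le.2 h)]
    have := hl.union hr
    rw [Iic_union_Ici] at this
    exact hasDerivWithinAt_univ.1 this
  · have h1 := (hY n t htI).hasDerivAt (Icc_mem_nhds h hf1)
    rw [← hyt] at h1
    apply h1.congr_of_eventuallyEq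
    filter_upwards [Ioo_mem_nhds h hf1] with s hs
    exact hyY n ⟨hs.1.le, hs.2⟩

lemma ode_poly {S E : Type} [Fintype S] [Fintype E] (P : S → MvPolynomial (S ⊕ E) ℝ)
    (c : ℝ → E → ℝ) (hc : ContinuousOn c (Ici 0))
    (hb : ∀ T : ℝ, 0 < T → ∀ y : ℝ → S → ℝ, y 0 = 0 → ContinuousOn y (Icc 0 T) →
      (∀ t ∈ Ioo 0 T, HasDerivAt y (fun i => MvPolynomial.eval (Sum.elim (y t) (c t)) (P i)) t) →
        ‖y T‖ ≤ 1 + T) :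
    ∃ y : ℝ → S → ℝ, y 0 = 0 ∧ ∀ t : ℝ, 0 ≤ t →
      HasDerivAt y (fun i => MvPolynomial.eval (Sum.elim (y t) (c t)) (P i)) t := by
  refine ode_global (fun t v i => MvPolynomial.eval (Sum.elim v (c t)) (P i)) ?_ ?_ hb
  · intro T R hT hR
    obtain ⟨C, hC, r, h⟩ := poly_lip_fam P
    obtain ⟨B, hB⟩ := (isCompact_Icc (a := (0 : ℝ)) (b := T)).exists_bound_of_continuousOn
      (hc.mono Icc_subset_Ici_self)
    have hB0 : 0 ≤ B := (norm_nonneg _).trans (hB 0 ⟨le_rfl, hT⟩)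
    refine ⟨⟨C * (1 + (R + B) + (R + B)) ^ r, by positivity⟩, fun t ht => ?_⟩
    apply LipschitzOnWith.of_dist_le_mul
    intro v hv w hw
    rw [mem_closedBall_zero_iff] at hv hw
    change _ ≤ C * (1 + (R + B) + (R + B)) ^ r * _
    rw [dist_pi_le_iff (by positivity)]
    intro i
    rw [Real.dist_eq]
    refine (h _ _ i).trans ?_
    have hn : ∀ v : S → ℝ, ‖v‖ ≤ R → ‖Sum.elim v (c t)‖ ≤ R + B := by
      intro v hv
      rw [pi_norm_le_iff_of_nonneg (by positivity)]
      rintro (a | a)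
      · exact ((norm_le_pi_norm v a).trans hv).trans (by linarith)
      · exact ((norm_le_pi_norm (c t) a).trans (hB t ht)).trans (by linarith)
    have hd : ‖Sum.elim v (c t) - Sum.elim w (c t)‖ ≤ dist v w := by
      rw [pi_norm_le_iff_of_nonneg dist_nonneg]
      rintro (a | a)
      · rw [dist_eq_norm]; exact norm_le_pi_norm (v - w) a
      · simp
    have := hn v hv
    have := hn w hw
    gcongr
  · intro v
    rw [continuousOn_pi]
    intro i
    have h1 : Continuous fun z : S ⊕ E → ℝ => MvPolynomial.eval z (P i) := MvPolynomial.continuous_eval _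
    refine h1.comp_continuousOn ?_
    rw [continuousOn_pi]
    rintro (a | a)
    · exact continuousOn_const
    · exact (continuousOn_pi.1 hc) a

end

section
open Set Filter Topology Metric

structure Dat (m n d : ℕ) where
  hd : m ≤ d
  p : Fin d → MvPolynomial (Fin d) ℝ
  q : Fin d → MvPolynomial (Fin (n + 1)) ℝ
  CT : ℝ
  rT : ℕ

variable {m n d : ℕ}

def Dat.qv (Δ : Dat m n d) (X : Fin n → ℝ) (mu : ℝ) (k : Fin d) : ℝ :=
  MvPolynomial.eval (Fin.snoc (α := fun _ => ℝ) X mu) (Δ.q k)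
def Dat.Z (Δ : Dat m n d) (Y : Fin d → ℝ) (X : Fin n → ℝ) (mu : ℝ) (k : Fin d) : ℝ :=
  Y k + Δ.qv X mu k
def Dat.rt (Δ : Dat m n d) (X : Fin n → ℝ) (mu : ℝ) : ℝ :=
  Δ.CT * (1 + ∑ i, X i ^ 2 + mu ^ 2) ^ Δ.rT
/-- simulation rate -/
def Dat.rate (Δ : Dat m n d) (t : ℝ) (Y : Fin d → ℝ) (X : Fin n → ℝ) (mu : ℝ) : ℝ :=
  Δ.rt X mu * t * g2 t * ((1 + t ^ 2 - ∑ k, Y k ^ 2) * (1 + t ^ 2)⁻¹)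

structure Sol (Δ : Dat m n d) (x : ℝ → Fin n → ℝ) (T : ℝ) (F G D : ℝ → Fin m → ℝ)
    (Y : ℝ → Fin d → ℝ) (X : ℝ → Fin n → ℝ) (mu : ℝ → ℝ) : Prop where
  F0 : ∀ i, F 0 i = 0
  G0 : ∀ i, G 0 i = 0
  D0 : ∀ i, D 0 i = 0
  Y0 : ∀ i, Y 0 i = 0
  X0 : ∀ i, X 0 i = 0
  mu0 : mu 0 = 0
  cx : ContinuousOn x (Icc 0 T)
  cF : ∀ i, ContinuousOn (fun t => F t i) (Icc 0 T)
  cG : ∀ i, ContinuousOn (fun t => G t i) (Icc 0 T)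
  cD : ∀ i, ContinuousOn (fun t => D t i) (Icc 0 T)
  cY : ∀ i, ContinuousOn (fun t => Y t i) (Icc 0 T)
  cX : ∀ i, ContinuousOn (fun t => X t i) (Icc 0 T)
  cmu : ContinuousOn mu (Icc 0 T)
  dF : ∀ t ∈ Ioo 0 T, ∀ i, HasDerivAt (fun t => F t i) (ckA t * gF t * (G t i - F t i)) t
  dG : ∀ t ∈ Ioo 0 T, ∀ i, HasDerivAt (fun t => G t i) (cku t * (t * D t i - 2000 * G t i)) t
  dD : ∀ t ∈ Ioo 0 T, ∀ i, HasDerivAt (fun t => D t i)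
    (ckA t * g3 t * (D t i + Δ.Z (Y t) (X t) (mu t) (Fin.castLE Δ.hd i) - G t i) * (1 - D t i ^ 2)
      - ckA t * g1 t * D t i) t
  dY : ∀ t ∈ Ioo 0 T, ∀ k, HasDerivAt (fun t => Y t k)
    (Δ.rate t (Y t) (X t) (mu t) * MvPolynomial.eval (Δ.Z (Y t) (X t) (mu t)) (Δ.p k)
      - ckA t * g1 t * Y t k) t
  dX : ∀ t ∈ Ioo 0 T, ∀ i, HasDerivAt (fun t => X t i) ((x t i - X t i) * (1 + t ^ 2 - X t i ^ 2)) t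
  dmu : ∀ t ∈ Ioo 0 T, HasDerivAt mu (ckA t * g1 t * (ckM t - mu t)) t

lemma cont_g {z : ℝ → ℝ} (hz : Continuous z) : Continuous fun t => gt (z t) t := by
  unfold gt
  apply Continuous.div continuous_const (by fun_prop)
  intro t; positivity
lemma cont_g1 : Continuous g1 := cont_g (by fun_prop)
lemma cont_g2 : Continuous g2 := cont_g (by fun_prop)
lemma cont_g3 : Continuous g3 := cont_g (by fun_prop)
lemma cont_gF : Continuous gF := cont_g (by fun_prop)
lemma cont_A : Continuous ckA := by unfold ckA; fun_prop
lemma cont_u : Continuous cku := continuous_iff_continuousAt.2 fun t => (cku_deriv t).continuousAt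
lemma cont_M : Continuous ckM := continuous_iff_continuousAt.2 fun t => (ckM_deriv t).continuousAt
lemma ckA_nonneg (t : ℝ) : 0 ≤ ckA t := by unfold ckA; positivity

lemma barrier {T : ℝ} {y y' h : ℝ → ℝ}
    (hy : ContinuousOn y (Icc 0 T)) (hh : ContinuousOn h (Icc 0 T))
    (hy' : ∀ t ∈ Ioo 0 T, HasDerivAt y (y' t) t)
    (hle : ∀ t ∈ Ioo 0 T, h t * y t ≤ y' t) (ha : 0 ≤ y 0) : ∀ t ∈ Icc 0 T, 0 ≤ y t := by
  intro t ht
  exact nonneg_pres ht.1 (hy.mono (Icc_subset_Icc_right ht.2)) (hh.mono (Icc_subset_Icc_right ht.2))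
    (fun s hs => hy' s ⟨hs.1, hs.2.trans_le ht.2⟩) (fun s hs => hle s ⟨hs.1, hs.2.trans_le ht.2⟩) ha

section
variable {Δ : Dat m n d} {x : ℝ → Fin n → ℝ} {T : ℝ} {F G D : ℝ → Fin m → ℝ}
    {Y : ℝ → Fin d → ℝ} {X : ℝ → Fin n → ℝ} {mu : ℝ → ℝ}

lemma Sol.cqv (h : Sol Δ x T F G D Y X mu) (k : Fin d) :
    ContinuousOn (fun t => Δ.qv (X t) (mu t) k) (Icc 0 T) := by
  unfold Dat.qv
  refine (MvPolynomial.continuous_eval (Δ.q k)).comp_continuousOn ?_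
  rw [continuousOn_pi]
  intro i
  refine Fin.lastCases ?_ (fun i => ?_) i
  · simpa using h.cmu
  · simpa using h.cX i
lemma Sol.cZ (h : Sol Δ x T F G D Y X mu) (k : Fin d) :
    ContinuousOn (fun t => Δ.Z (Y t) (X t) (mu t) k) (Icc 0 T) := (h.cY k).add (h.cqv k)
lemma Sol.crt (h : Sol Δ x T F G D Y X mu) :
    ContinuousOn (fun t => Δ.rt (X t) (mu t)) (Icc 0 T) := by
  unfold Dat.rt
  have := h.cmu
  have h2 : ContinuousOn (fun t => ∑ i, X t i ^ 2) (Icc 0 T) :=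
    continuousOn_finsetSum _ fun i _ => (h.cX i).pow 2
  fun_prop
lemma Sol.cpY (h : Sol Δ x T F G D Y X mu) (k : Fin d) :
    ContinuousOn (fun t => MvPolynomial.eval (Δ.Z (Y t) (X t) (mu t)) (Δ.p k)) (Icc 0 T) :=
  (MvPolynomial.continuous_eval (Δ.p k)).comp_continuousOn (continuousOn_pi.2 fun k => h.cZ k)
lemma Sol.crate (h : Sol Δ x T F G D Y X mu) :
    ContinuousOn (fun t => Δ.rate t (Y t) (X t) (mu t)) (Icc 0 T) := by
  unfold Dat.rate
  have h1 := h.crt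
  have h2 : ContinuousOn (fun t => ∑ i, Y t i ^ 2) (Icc 0 T) :=
    continuousOn_finsetSum _ fun i _ => (h.cY i).pow 2
  have h3 := cont_g2.continuousOn (s := Icc 0 T)
  have h4 : ContinuousOn (fun t : ℝ => (1 + t ^ 2)⁻¹) (Icc 0 T) :=
    ContinuousOn.inv₀ (by fun_prop) (fun t _ => by positivity)
  fun_prop

lemma Sol.D_le (h : Sol Δ x T F G D Y X mu) (i : Fin m) : ∀ t ∈ Icc 0 T, |D t i| ≤ 1 := by
  intro t ht
  have hD := h.cD i
  have := barrier (y := fun t => 1 - D t i ^ 2)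
    (h := fun t => -2 * ckA t * g3 t * D t i *
      (D t i + Δ.Z (Y t) (X t) (mu t) (Fin.castLE Δ.hd i) - G t i)) (by fun_prop)
    (by
      have h1 := h.cZ (Fin.castLE Δ.hd i)
      have h2 := h.cG i
      have h3 := cont_g3
      have h4 := cont_A
      fun_prop)
    (fun t ht => ((h.dD t ht i).pow 2).const_sub 1)
    (fun t ht => by
      have : 0 ≤ ckA t * g1 t * D t i ^ 2 :=
        mul_nonneg (mul_nonneg (ckA_nonneg t) (gt_pos _ _).le) (sq_nonneg _)
      push_cast
      nlinarith)
    (by simp [h.D0 i]) t ht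
  rw [abs_le_one_iff_mul_self_le_one]
  nlinarith

lemma Sol.X_le (h : Sol Δ x T F G D Y X mu) (i : Fin n) : ∀ t ∈ Icc 0 T, 0 ≤ 1 + t ^ 2 - X t i ^ 2 := by
  have hX := h.cX i
  have hx := (continuousOn_pi.1 h.cx) i
  exact barrier (y := fun t => 1 + t ^ 2 - X t i ^ 2)
    (h := fun t => -2 * X t i * (x t i - X t i)) (by fun_prop) (by fun_prop)
    (fun t ht => ((sq_deriv t).const_add 1).sub ((h.dX t ht i).pow 2))
    (fun t ht => by
      have := ht.1
      push_cast
      nlinarith)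
    (by simp [h.X0 i])

lemma Sol.Y_le (h : Sol Δ x T F G D Y X mu) : ∀ t ∈ Icc 0 T, 0 ≤ 1 + t ^ 2 - ∑ k, Y t k ^ 2 := by
  have h2 : ContinuousOn (fun t => ∑ i, Y t i ^ 2) (Icc 0 T) :=
    continuousOn_finsetSum _ fun i _ => (h.cY i).pow 2
  refine barrier (y := fun t => 1 + t ^ 2 - ∑ k, Y t k ^ 2)
    (y' := fun t => 2 * t - ∑ k, (2 * Y t k * (Δ.rate t (Y t) (X t) (mu t) *
      MvPolynomial.eval (Δ.Z (Y t) (X t) (mu t)) (Δ.p k) - ckA t * g1 t * Y t k)))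
    (h := fun t => - (Δ.rt (X t) (mu t) * t * g2 t * (1 + t ^ 2)⁻¹ *
      ∑ k, (2 * Y t k * MvPolynomial.eval (Δ.Z (Y t) (X t) (mu t)) (Δ.p k)))) (by fun_prop) ?_
    (fun t ht => ?_)
    (fun t ht => ?_) (by simp [h.Y0])
  · have h1 := h.crt
    have h3 := cont_g2.continuousOn (s := Icc 0 T)
    have h4 : ContinuousOn (fun t : ℝ => (1 + t ^ 2)⁻¹) (Icc 0 T) :=
      ContinuousOn.inv₀ (by fun_prop) (fun t _ => by positivity)
    have h5 : ContinuousOn (fun t => ∑ k, (2 * Y t k *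
        MvPolynomial.eval (Δ.Z (Y t) (X t) (mu t)) (Δ.p k))) (Icc 0 T) :=
      continuousOn_finsetSum _ fun i _ => ((h.cY i).const_mul 2).mul (h.cpY i)
    fun_prop
  · refine ((sq_deriv t).const_add 1).sub (HasDerivAt.fun_sum fun k _ => ?_)
    exact ((h.dY t ht k).pow 2).congr_deriv (by push_cast; ring)
  · have e : ∑ k, (2 * Y t k * (Δ.rate t (Y t) (X t) (mu t) *
      MvPolynomial.eval (Δ.Z (Y t) (X t) (mu t)) (Δ.p k) - ckA t * g1 t * Y t k)) =
      Δ.rate t (Y t) (X t) (mu t) * ∑ k, (2 * Y t k *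
        MvPolynomial.eval (Δ.Z (Y t) (X t) (mu t)) (Δ.p k)) -
      2 * (ckA t * g1 t) * ∑ k, Y t k ^ 2 := by
      rw [Finset.mul_sum, Finset.mul_sum, ← Finset.sum_sub_distrib]
      apply Finset.sum_congr rfl
      intro k _; ring
    have h5 : 0 ≤ 2 * (ckA t * g1 t) * ∑ k, Y t k ^ 2 :=
      mul_nonneg (mul_nonneg zero_le_two (mul_nonneg (ckA_nonneg t) (gt_pos _ _).le))
        (Finset.sum_nonneg fun k _ => sq_nonneg _)
    have h6 := ht.1
    simp only [e]
    unfold Dat.rate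
    linarith

lemma Sol.mu_nonneg (h : Sol Δ x T F G D Y X mu) : ∀ t ∈ Icc 0 T, 0 ≤ mu t := by
  have h1 := h.cmu
  refine barrier (h := fun t => - (ckA t * g1 t)) h1
    (by have := cont_A; have := cont_g1; fun_prop) h.dmu (fun t ht => ?_) h.mu0.ge
  have : 0 ≤ ckA t * g1 t * ckM t :=
    mul_nonneg (mul_nonneg (ckA_nonneg t) (gt_pos _ _).le) (ckM_nonneg t)
  nlinarith

lemma Sol.mu_le (h : Sol Δ x T F G D Y X mu) : ∀ t ∈ Icc 0 T, mu t ≤ 1 + t := by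
  have h1 := h.cmu
  intro t ht
  have := barrier (y := fun t => 1 + t - mu t) (h := fun t => - (ckA t * g1 t)) (by fun_prop)
    (by have := cont_A; have := cont_g1; fun_prop)
    (fun t ht => ((hasDerivAt_id' t).const_add 1).sub (h.dmu t ht)) (fun t ht => by
      have : 0 ≤ ckA t * g1 t * (1 + t - ckM t) :=
        mul_nonneg (mul_nonneg (ckA_nonneg t) (gt_pos _ _).le) (by linarith [ckM_le_t ht.1.le])
      nlinarith) (by simp [h.mu0]) t ht
  linarith

lemma Sol.G_le (h : Sol Δ x T F G D Y X mu) (i : Fin m) : ∀ t ∈ Icc 0 T, |G t i| ≤ t / 2000 := by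
  have h1 := h.cG i
  intro t ht
  have a1 := barrier (y := fun t => t / 2000 - G t i) (h := fun t => - (2000 * cku t)) (by fun_prop)
    (by have := cont_u; fun_prop)
    (fun t ht => ((hasDerivAt_id' t).div_const 2000).sub (h.dG t ht i)) (fun t ht => by
      have h2 := abs_le.1 (h.D_le i t (Ioo_subset_Icc_self ht))
      have h3 : 0 ≤ cku t * (t * (1 - D t i)) :=
        mul_nonneg (cku_pos t).le (mul_nonneg ht.1.le (by linarith))
      nlinarith) (by simp [h.G0]) t ht
  have a2 := barrier (y := fun t => t / 2000 + G t i) (h := fun t => - (2000 * cku t)) (by fun_prop)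
    (by have := cont_u; fun_prop)
    (fun t ht => ((hasDerivAt_id' t).div_const 2000).add (h.dG t ht i)) (fun t ht => by
      have h2 := abs_le.1 (h.D_le i t (Ioo_subset_Icc_self ht))
      have h3 : 0 ≤ cku t * (t * (1 + D t i)) :=
        mul_nonneg (cku_pos t).le (mul_nonneg ht.1.le (by linarith))
      nlinarith) (by simp [h.G0]) t ht
  rw [abs_le]
  constructor <;> linarith

lemma Sol.F_le (h : Sol Δ x T F G D Y X mu) (i : Fin m) : ∀ t ∈ Icc 0 T, |F t i| ≤ t / 2000 := by
  have h1 := h.cF i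
  intro t ht
  have a1 := barrier (y := fun t => t / 2000 - F t i) (h := fun t => - (ckA t * gF t)) (by fun_prop)
    (by have := cont_A; have := cont_gF; fun_prop)
    (fun t ht => ((hasDerivAt_id' t).div_const 2000).sub (h.dF t ht i)) (fun t ht => by
      have h2 := abs_le.1 (h.G_le i t (Ioo_subset_Icc_self ht))
      have h3 : 0 ≤ ckA t * gF t * (t / 2000 - G t i) :=
        mul_nonneg (mul_nonneg (ckA_nonneg t) (gt_pos _ _).le) (by linarith)
      nlinarith) (by simp [h.F0]) t ht
  have a2 := barrier (y := fun t => t / 2000 + F t i) (h := fun t => - (ckA t * gF t)) (by fun_prop)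
    (by have := cont_A; have := cont_gF; fun_prop)
    (fun t ht => ((hasDerivAt_id' t).div_const 2000).add (h.dF t ht i)) (fun t ht => by
      have h2 := abs_le.1 (h.G_le i t (Ioo_subset_Icc_self ht))
      have h3 : 0 ≤ ckA t * gF t * (t / 2000 + G t i) :=
        mul_nonneg (mul_nonneg (ckA_nonneg t) (gt_pos _ _).le) (by linarith)
      nlinarith) (by simp [h.F0]) t ht
  rw [abs_le]
  constructor <;> linarith

lemma sq_bound {a t : ℝ} (ht : 0 ≤ t) (h : a ^ 2 ≤ 1 + t ^ 2) : |a| ≤ 1 + t :=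
  abs_le_of_sq_le_sq (by nlinarith) (by linarith)

lemma Sol.X_abs (h : Sol Δ x T F G D Y X mu) (i : Fin n) : ∀ t ∈ Icc 0 T, |X t i| ≤ 1 + t :=
  fun t ht => sq_bound ht.1 (by linarith [h.X_le i t ht])
lemma Sol.Y_abs (h : Sol Δ x T F G D Y X mu) (i : Fin d) : ∀ t ∈ Icc 0 T, |Y t i| ≤ 1 + t := by
  intro t ht
  have := Finset.single_le_sum (f := fun k => Y t k ^ 2) (fun k _ => sq_nonneg _) (Finset.mem_univ i)
  exact sq_bound ht.1 (by linarith [h.Y_le t ht])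
end

end

section
open Set Filter Topology Metric
variable {m n d : ℕ}
variable {Δ : Dat m n d} {x : ℝ → Fin n → ℝ} {T : ℝ} {F G D : ℝ → Fin m → ℝ}
    {Y : ℝ → Fin d → ℝ} {X : ℝ → Fin n → ℝ} {mu : ℝ → ℝ}

lemma Sol.w_ge (h : Sol Δ x T F G D Y X mu) {R t : ℝ} (i : Fin n) (htT : t ≤ T) (hR : 0 ≤ R)
    (ht : 2 * R + 3 ≤ t) (hx : ∀ s ∈ Icc (t - 1) t, |x s i| ≤ R) : t ≤ 1 + t ^ 2 - X t i ^ 2 := by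
  by_contra hcon
  push Not at hcon
  set w : ℝ → ℝ := fun t => 1 + t ^ 2 - X t i ^ 2 with hw
  have hwd : ∀ s ∈ Ioo 0 T, HasDerivAt w (2 * s - 2 * X s i * (x s i - X s i) * w s) s := fun s hs =>
    (((sq_deriv s).const_add 1).sub ((h.dX s hs i).pow 2)).congr_deriv (by push_cast; ring)
  have hwc : ContinuousOn w (Icc 0 T) := by have := h.cX i; fun_prop
  have key : ∀ s ∈ Icc (t - 1) t, w s < s → s < T → 2 * s ≤ 2 * s - 2 * X s i * (x s i - X s i) * w s := by
    intro s hs hws hsT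
    have hw0 : 0 ≤ w s := h.X_le i s ⟨by linarith [hs.1], hsT.le⟩
    have h1 : X s i ^ 2 > R ^ 2 := by
      have : w s = 1 + s ^ 2 - X s i ^ 2 := rfl
      nlinarith [hs.1]
    have h2 := abs_le.1 (hx s hs)
    have h3 : X s i * (x s i - X s i) ≤ 0 := by
      have hRX : R ≤ |X s i| := by
        rw [← abs_of_nonneg hR]; exact sq_le_sq.1 h1.le
      have h4 : x s i * X s i ≤ R * |X s i| := by
        calc _ ≤ |x s i * X s i| := le_abs_self _
          _ = |x s i| * |X s i| := abs_mul _ _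
          _ ≤ _ := mul_le_mul_of_nonneg_right (hx s hs) (abs_nonneg _)
      have h5 : X s i ^ 2 = |X s i| ^ 2 := (sq_abs _).symm
      nlinarith
    nlinarith
  rcases last_time (a := t - 1) (b := t) (c := 0) (by linarith) (y := fun s => w s - s)
    ((hwc.mono (Icc_subset_Icc (by linarith) htT)).sub continuousOn_id) (by simp only [hw]; linarith) with hA | ⟨s, hs, hs1, hs2⟩
  · have := incr_le (a := t - 1) (b := t) (by linarith) (y := fun s => s ^ 2) (z := w)
      (by fun_prop) (hwc.mono (Icc_subset_Icc (by linarith) htT)) (fun s _ => sq_deriv s)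
      (fun s hs => hwd s ⟨by linarith [hs.1], hs.2.trans_le htT⟩)
      (fun s hs => key s (Ioo_subset_Icc_self hs) (by linarith [hA s (Ioo_subset_Icc_self hs)]) (hs.2.trans_le htT))
    have h0 : 0 ≤ w (t - 1) := h.X_le i _ ⟨by linarith, by linarith⟩
    have : w t = 1 + t ^ 2 - X t i ^ 2 := rfl
    nlinarith
  · have hs3 := hs.1
    have hs4 := hs.2
    have := incr_le (a := s) (b := t) (by linarith) (y := fun s => s ^ 2) (z := w)
      (by fun_prop) (hwc.mono (Icc_subset_Icc (by linarith) htT)) (fun s _ => sq_deriv s)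
      (fun r hr => hwd r ⟨by linarith [hr.1], hr.2.trans_le htT⟩)
      (fun r hr => key r ⟨by linarith [hr.1], hr.2.le⟩ (by linarith [hs2 r ⟨hr.1, hr.2.le⟩]) (hr.2.trans_le htT))
    have : w t = 1 + t ^ 2 - X t i ^ 2 := rfl
    nlinarith

lemma Sol.X_track (h : Sol Δ x T F G D Y X mu) {a R t ε c : ℝ} (i : Fin n) (ha : 0 ≤ a) (hat : a + 2 ≤ t)
    (htT : t ≤ T) (hR : 0 ≤ R) (hε : 0 ≤ ε) (hε1 : ε ≤ 1)
    (ht : 2 * R + 6 ≤ t) (hx : ∀ s ∈ Icc a T, |x s i - c| ≤ ε) (hc : |c| ≤ R) :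
    (X t i - c) ^ 2 ≤ ε ^ 2 + 4 * t ^ 2 * Real.exp (-(t - 1)) := by
  have hxR : ∀ s ∈ Icc a T, |x s i| ≤ R + 1 := by
    intro s hs
    have h1 := abs_le.1 (hx s hs)
    have h2 := abs_le.1 hc
    rw [abs_le]; constructor <;> linarith
  have hXc := h.cX i
  obtain ⟨P, hP0, hP, hP'⟩ := exists_prim (a := t - 1) (b := t) (by linarith)
    (h := fun s => -(1 + s ^ 2 - X s i ^ 2)) (by
      have := hXc.mono (Icc_subset_Icc (a₁ := t - 1) (b₁ := t) (by linarith) htT); fun_prop)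
  have hcore := core_le (a := t - 1) (b := t) (by linarith) (y := fun s => (X s i - c) ^ 2 - ε ^ 2)
    (y' := fun s => 2 * (X s i - c) * ((x s i - X s i) * (1 + s ^ 2 - X s i ^ 2)))
    (by have := hXc.mono (Icc_subset_Icc (a₁ := t - 1) (b₁ := t) (by linarith) htT); fun_prop) hP
    (fun s hs => ((((h.dX s ⟨by linarith [hs.1], hs.2.trans_le htT⟩ i).sub_const c).pow 2).sub_const _).congr_deriv
      (by push_cast; ring)) hP' (fun s hs => by
      have hw := h.X_le i s ⟨by linarith [hs.1], hs.2.le.trans htT⟩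
      have h1 := abs_le.1 (hx s ⟨by linarith [hs.1], hs.2.le.trans htT⟩)
      have h2 : 2 * (X s i - c) * (x s i - X s i) ≤ ε ^ 2 - (X s i - c) ^ 2 := by
        have : (x s i - c) ^ 2 ≤ ε ^ 2 := by apply sq_le_sq'  <;> linarith
        nlinarith [sq_nonneg ((x s i - c) - (X s i - c))]
      nlinarith)
  have hPd := incr_le (a := t - 1) (b := t) (by linarith) (y := P) (z := fun s => - ((t - 1) * s))
    hP (by fun_prop) hP' (fun s _ => ((hasDerivAt_id' s).const_mul (t - 1)).neg) (fun s hs => by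
      have := h.w_ge (t := s) (R := R + 1) i (hs.2.le.trans htT) (by linarith) (by linarith [hs.1])
        (fun r hr => hxR r ⟨by linarith [hr.1, hs.1], by linarith [hr.2, hs.2]⟩)
      linarith [hs.1])
  have hV0 : (X (t - 1) i - c) ^ 2 ≤ 4 * t ^ 2 := by
    have h1 := abs_le.1 (h.X_abs i (t - 1) ⟨by linarith, by linarith⟩)
    have h2 := abs_le.1 hc
    have := sq_le_sq' (a := X (t - 1) i - c) (b := 2 * t) (by linarith) (by linarith)
    nlinarith
  have he : Real.exp (P t - P (t - 1)) ≤ Real.exp (-(t - 1)) := Real.exp_le_exp.2 (by linarith)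
  have hp := Real.exp_pos (P t - P (t - 1))
  have h3 : ((X (t - 1) i - c) ^ 2 - ε ^ 2) * Real.exp (P t - P (t - 1)) ≤ 4 * t ^ 2 * Real.exp (-(t - 1)) :=
    calc _ ≤ 4 * t ^ 2 * Real.exp (P t - P (t - 1)) :=
          mul_le_mul_of_nonneg_right (by nlinarith) hp.le
      _ ≤ _ := mul_le_mul_of_nonneg_left he (by positivity)
  linarith

lemma Sol.sim (h : Sol Δ x T F G D Y X mu) {xb : Fin n → ℝ} {β ω w1 w2 ms B Tmax Tmin Lp κ ρ : ℝ}
    {y : ℝ → Fin d → ℝ} (hβ : 1 ≤ β) (h1 : β ≤ w1) (h2 : w1 ≤ w2) (h3 : w2 ≤ ω) (hωT : ω < T)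
    (hlen : ω ^ 2 - β ^ 2 ≤ 3 / 4) (hw : 1 / 16 ≤ w2 ^ 2 - w1 ^ 2)
    (hon : ∀ t ∈ Icc w1 w2, 1 / 2 ≤ g2 t)
    (hy0 : y 0 = fun k => Δ.qv xb ms k)
    (hy : ∀ s, 0 ≤ s → HasDerivAt y (fun k => MvPolynomial.eval (y s) (Δ.p k)) s)
    (hB0 : 0 ≤ B) (hyB : ∀ s, 0 ≤ s → s ≤ Tmax → ‖y s‖ ≤ B)
    (hLp1 : 1 ≤ Lp) (hT1 : 1 ≤ Tmax)
    (hLp : ∀ v w : Fin d → ℝ, ‖v‖ ≤ B + 2 → ‖w‖ ≤ B + 2 → ∀ k,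
      |MvPolynomial.eval v (Δ.p k) - MvPolynomial.eval w (Δ.p k)| ≤ Lp * ‖v - w‖)
    (hq : ∀ t ∈ Icc β ω, ∀ k, |Δ.qv (X t) (mu t) k - Δ.qv xb ms k| ≤ κ)
    (hTmin : 0 ≤ Tmin)
    (hrt : ∀ t ∈ Icc β ω, Tmin ≤ Δ.rt (X t) (mu t) ∧ Δ.rt (X t) (mu t) ≤ Tmax)
    (hYβ : ∀ k, |Y β k| ≤ κ) (hleak : ∀ t ∈ Icc β ω, ∀ k, |ckA t * g1 t * Y t k| ≤ κ)
    (hκ0 : 0 ≤ κ) (hκ1 : κ ≤ 1) (hκ : 4 * κ * Real.exp (Tmax * Lp) ≤ ρ) (hρ : ρ < 1)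
    (hbig : d * (2 * B + 1) ^ 2 ≤ (1 + β ^ 2) / 2) (hqB : ‖(fun k => Δ.qv xb ms k : Fin d → ℝ)‖ ≤ B) :
    ∀ t ∈ Icc w2 ω, ∃ s, Tmin / 128 ≤ s ∧ ∀ k, |Δ.Z (Y t) (X t) (mu t) k - y s k| ≤ ρ + κ := by
  have hβω : β ≤ ω := by linarith
  have hβ0 : 0 < β := by linarith
  have hκ' : 4 * κ ≤ ρ := by
    have : 1 ≤ Real.exp (Tmax * Lp) := Real.one_le_exp (by positivity)
    nlinarith
  obtain ⟨P, hP0, hP, hP'⟩ := exists_prim (a := 0) (b := T) (by linarith) h.crate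
  have sub : ∀ {t}, t ∈ Icc β ω → t ∈ Ioo 0 T := fun ht => ⟨by linarith [ht.1], by linarith [ht.2]⟩
  have subc : Icc β ω ⊆ Icc 0 T := Icc_subset_Icc (by linarith) (by linarith)
  have hphi : ∀ t ∈ Icc β ω, 0 ≤ (1 + t ^ 2 - ∑ k, Y t k ^ 2) * (1 + t ^ 2)⁻¹ ∧
      (1 + t ^ 2 - ∑ k, Y t k ^ 2) * (1 + t ^ 2)⁻¹ ≤ 1 := by
    intro t ht
    have hy1 := h.Y_le t (subc ht)
    have hp : 0 < 1 + t ^ 2 := by positivity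
    refine ⟨by positivity, ?_⟩
    rw [← div_eq_mul_inv, div_le_one hp]
    have := Finset.sum_nonneg (s := Finset.univ) (f := fun k => Y t k ^ 2) fun k _ => sq_nonneg _
    linarith
  have hr : ∀ t ∈ Icc β ω, 0 ≤ Δ.rate t (Y t) (X t) (mu t) ∧ Δ.rate t (Y t) (X t) (mu t) ≤ Tmax * t := by
    intro t ht
    have := hphi t ht
    have hg := gt_pos (Real.sin (2 * Real.pi * t ^ 2)) t
    have hg1 := gt_le_one (Real.sin (2 * Real.pi * t ^ 2)) t
    have ht0 : 0 ≤ t := by linarith [ht.1]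
    have hrt' := hrt t ht
    have hrt0 : 0 ≤ Δ.rt (X t) (mu t) := hTmin.trans hrt'.1
    unfold Dat.rate
    change 0 < g2 t at hg
    change g2 t ≤ 1 at hg1
    refine ⟨mul_nonneg (by positivity) this.1, ?_⟩
    calc _ ≤ Δ.rt (X t) (mu t) * t * g2 t * 1 := mul_le_mul_of_nonneg_left this.2 (by positivity)
      _ ≤ Δ.rt (X t) (mu t) * t * 1 * 1 := by gcongr
      _ ≤ Tmax * t := by rw [mul_one, mul_one]; exact mul_le_mul_of_nonneg_right hrt'.2 ht0
  set σ : ℝ → ℝ := fun t => P t - P β with hσ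
  have hσd : ∀ t ∈ Icc β ω, HasDerivAt σ (Δ.rate t (Y t) (X t) (mu t)) t := fun t ht =>
    (hP' t (sub ht)).sub_const _
  have hσc : ∀ {s e}, β ≤ s → e ≤ ω → ContinuousOn σ (Icc s e) := fun hs he t ht =>
    (hσd t ⟨hs.trans ht.1, ht.2.trans he⟩).continuousAt.continuousWithinAt
  have hmono : ∀ s e, β ≤ s → s ≤ e → e ≤ ω → σ s ≤ σ e := by
    intro s e hs hse he
    have := incr_le hse (y := fun _ => (0 : ℝ)) (z := σ) continuousOn_const (hσc hs he)
      (fun t _ => hasDerivAt_const t 0) (fun t ht => hσd t ⟨hs.trans ht.1.le, ht.2.le.trans he⟩)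
      (fun t ht => (hr t ⟨hs.trans ht.1.le, ht.2.le.trans he⟩).1)
    linarith
  have hσβ : σ β = 0 := by simp [hσ]
  have hσ0 : ∀ t ∈ Icc β ω, 0 ≤ σ t := fun t ht => by
    rw [← hσβ]; exact hmono _ _ le_rfl ht.1 ht.2
  have hσT : ∀ t ∈ Icc β ω, σ t ≤ Tmax := by
    intro t ht
    have := incr_le ht.1 (y := σ) (z := fun t => Tmax / 2 * t ^ 2) (hσc le_rfl ht.2) (by fun_prop)
      (fun s hs => hσd s ⟨hs.1.le, hs.2.le.trans ht.2⟩) (fun s _ => (sq_deriv s).const_mul (Tmax / 2))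
      (fun s hs => by linarith [(hr s ⟨hs.1.le, hs.2.le.trans ht.2⟩).2])
    have h5 : t ^ 2 ≤ ω ^ 2 := by
      have := ht.1; have := ht.2; have : 0 ≤ t := by linarith
      gcongr
    nlinarith
  have hqsub : ∀ t ∈ Icc β ω, ‖(fun k => Δ.qv (X t) (mu t) k - Δ.qv xb ms k : Fin d → ℝ)‖ ≤ κ := by
    intro t ht
    rw [pi_norm_le_iff_of_nonneg hκ0]
    intro k; exact hq t ht k
  set E : ℝ → Fin d → ℝ := fun t k => Y t k - (y (σ t) k - Δ.qv xb ms k) with hE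
  set E' : ℝ → Fin d → ℝ := fun t k => (Δ.rate t (Y t) (X t) (mu t) * MvPolynomial.eval (Δ.Z (Y t) (X t) (mu t)) (Δ.p k)
      - ckA t * g1 t * Y t k) - Δ.rate t (Y t) (X t) (mu t) * MvPolynomial.eval (y (σ t)) (Δ.p k) with hE'
  have hEd : ∀ t ∈ Icc β ω, HasDerivAt E (E' t) t := by
    intro t ht
    rw [hasDerivAt_pi]
    intro k
    have hys := (hy (σ t) (hσ0 t ht)).scomp t (hσd t ht)
    rw [hasDerivAt_pi] at hys
    exact ((h.dY t (sub ht) k).sub ((hys k).sub_const _)).congr_deriv (by simp [hE'])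
  have hZE : ∀ t, Δ.Z (Y t) (X t) (mu t) - y (σ t) = E t + (fun k => Δ.qv (X t) (mu t) k - Δ.qv xb ms k) := by
    intro t; funext k; simp only [Dat.Z, hE, Pi.sub_apply, Pi.add_apply]; ring
  have hEc : ContinuousOn E (Icc β ω) := fun t ht => (hEd t ht).continuousAt.continuousWithinAt
  have hEβ : ‖E β‖ ≤ κ := by
    rw [pi_norm_le_iff_of_nonneg hκ0]
    intro k
    simp only [hE, hσβ, hy0, sub_self, sub_zero]
    exact hYβ k
  have hEρ : ∀ s ∈ Icc β ω, (∀ r ∈ Icc β s, ‖E r‖ ≤ 1) → ‖E s‖ ≤ ρ := by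
    intro s hs hr1
    have hω0 : 0 < ω := by linarith
    set K1 := Tmax * ω * Lp with hK1
    have hK1p : 1 ≤ K1 := by
      have : 1 ≤ Tmax * ω := one_le_mul_of_one_le_of_one_le hT1 (by linarith)
      exact one_le_mul_of_one_le_of_one_le this hLp1
    have := norm_le_gronwallBound_of_norm_deriv_right_le (f := E) (f' := E') (δ := κ) (K := K1) (ε := K1 * κ + κ)
      (a := β) (b := s) (hEc.mono (Icc_subset_Icc_right hs.2))
      (fun t ht => (hEd t ⟨ht.1, ht.2.le.trans hs.2⟩).hasDerivWithinAt) hEβ (fun t ht => by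
        have htI : t ∈ Icc β ω := ⟨ht.1, ht.2.le.trans hs.2⟩
        have hE1 := hr1 t ⟨ht.1, ht.2.le⟩
        have hyb := hyB _ (hσ0 t htI) (hσT t htI)
        have hdiff : ‖Δ.Z (Y t) (X t) (mu t) - y (σ t)‖ ≤ ‖E t‖ + κ := by
          rw [hZE]; exact (norm_add_le _ _).trans (by linarith [hqsub t htI])
        have hZb : ‖Δ.Z (Y t) (X t) (mu t)‖ ≤ B + 2 := by
          have := norm_add_le (Δ.Z (Y t) (X t) (mu t) - y (σ t)) (y (σ t))
          rw [sub_add_cancel] at this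
          linarith
        have hrr := hr t htI
        have hrω : Δ.rate t (Y t) (X t) (mu t) ≤ Tmax * ω :=
          hrr.2.trans (mul_le_mul_of_nonneg_left htI.2 (by linarith))
        have hn := norm_nonneg (E t)
        rw [pi_norm_le_iff_of_nonneg (by positivity)]
        intro k
        have e : E' t k = Δ.rate t (Y t) (X t) (mu t) * (MvPolynomial.eval (Δ.Z (Y t) (X t) (mu t)) (Δ.p k)
          - MvPolynomial.eval (y (σ t)) (Δ.p k)) - ckA t * g1 t * Y t k := by simp only [hE']; ring
        rw [e, Real.norm_eq_abs]
        have hL := hLp _ _ hZb (show ‖y (σ t)‖ ≤ B + 2 by linarith) k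
        calc _ ≤ |Δ.rate t (Y t) (X t) (mu t) * (MvPolynomial.eval (Δ.Z (Y t) (X t) (mu t)) (Δ.p k)
          - MvPolynomial.eval (y (σ t)) (Δ.p k))| + |ckA t * g1 t * Y t k| := abs_sub _ _
          _ ≤ Tmax * ω * (Lp * (‖E t‖ + κ)) + κ := by
            refine add_le_add ?_ (hleak t htI k)
            rw [abs_mul, abs_of_nonneg hrr.1]
            apply mul_le_mul hrω _ (abs_nonneg _) (by positivity)
            exact hL.trans (mul_le_mul_of_nonneg_left hdiff (by linarith))
          _ = _ := by rw [hK1]; ring) s ⟨hs.1, le_rfl⟩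
    refine this.trans ?_
    rw [gronwallBound_of_K_ne_0 (by linarith)]
    have hxl : K1 * (s - β) ≤ Tmax * Lp := by
      have : (s - β) * ω ≤ 1 := by nlinarith [hs.1, hs.2]
      have h0 : 0 ≤ Tmax * Lp := by positivity
      calc K1 * (s - β) = (Tmax * Lp) * ((s - β) * ω) := by rw [hK1]; ring
        _ ≤ Tmax * Lp * 1 := mul_le_mul_of_nonneg_left this h0
        _ = _ := mul_one _
    have hexp := Real.exp_le_exp.2 hxl
    have hp := Real.exp_pos (K1 * (s - β))
    have hd : (K1 * κ + κ) / K1 ≤ 2 * κ := by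
      rw [div_le_iff₀ (by linarith)]; nlinarith
    have hd0 : 0 ≤ (K1 * κ + κ) / K1 := by positivity
    have he1 : 1 ≤ Real.exp (K1 * (s - β)) := Real.one_le_exp (mul_nonneg (by linarith) (by linarith [hs.1]))
    calc _ ≤ κ * Real.exp (K1 * (s - β)) + 2 * κ * Real.exp (K1 * (s - β)) := by
          refine add_le_add le_rfl ?_
          exact mul_le_mul hd (by linarith) (by linarith) (by linarith)
      _ = 3 * κ * Real.exp (K1 * (s - β)) := by ring
      _ ≤ 4 * κ * Real.exp (Tmax * Lp) := by
        apply mul_le_mul _ hexp hp.le (by linarith); linarith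
      _ ≤ ρ := hκ
  have hE1 : ∀ s ∈ Icc β ω, ‖E s‖ < 1 := by
    apply boot hEc.norm (lt_of_le_of_lt hEβ (by linarith))
    intro s hs hr1
    exact lt_of_le_of_lt (hEρ s hs hr1) hρ
  have hEfin : ∀ s ∈ Icc β ω, ‖E s‖ ≤ ρ := fun s hs => hEρ s hs fun r hr =>
    (hE1 r ⟨hr.1, hr.2.trans hs.2⟩).le
  have hphi2 : ∀ t ∈ Icc β ω, 1 / 2 ≤ (1 + t ^ 2 - ∑ k, Y t k ^ 2) * (1 + t ^ 2)⁻¹ := by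
    intro t ht
    have hp : 0 < 1 + t ^ 2 := by positivity
    have hs : ∑ k, Y t k ^ 2 ≤ ∑ k : Fin d, (2 * B + 1) ^ 2 := by
      apply Finset.sum_le_sum
      intro k _
      have e : Y t k = E t k + y (σ t) k - Δ.qv xb ms k := by simp only [hE]; ring
      have h1 := abs_le.1 ((norm_le_pi_norm (E t) k).trans (hE1 t ht).le)
      have h2 := abs_le.1 ((norm_le_pi_norm (y (σ t)) k).trans (hyB _ (hσ0 t ht) (hσT t ht)))
      have h3 := abs_le.1 ((norm_le_pi_norm (fun k => Δ.qv xb ms k : Fin d → ℝ) k).trans hqB)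
      apply sq_le_sq' <;> linarith
    rw [Finset.sum_const, Finset.card_univ, Fintype.card_fin, nsmul_eq_mul] at hs
    have : β ^ 2 ≤ t ^ 2 := by have := ht.1; gcongr
    rw [← div_eq_mul_inv, le_div_iff₀ hp]
    linarith
  have hσmin : Tmin / 128 ≤ σ w2 := by
    have := incr_le h2 (y := fun t => Tmin / 8 * t ^ 2) (z := σ) (by fun_prop) (hσc h1 h3)
      (fun s _ => (sq_deriv s).const_mul (Tmin / 8)) (fun s hs => hσd s ⟨h1.trans hs.1.le, hs.2.le.trans h3⟩)
      (fun t ht => by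
        have htI : t ∈ Icc β ω := ⟨h1.trans ht.1.le, ht.2.le.trans h3⟩
        have ht0 : 0 ≤ t := by linarith [htI.1]
        have hg := hon t ⟨ht.1.le, ht.2.le⟩
        have hphi := hphi2 t htI
        have hrt' := (hrt t htI).1
        unfold Dat.rate
        calc Tmin / 8 * (2 * t) = Tmin * t * (1 / 2) * (1 / 2) := by ring
          _ ≤ _ := by
            have hgp := gt_pos (Real.sin (2 * Real.pi * t ^ 2)) t
            change 0 < g2 t at hgp
            have hq0 := mul_nonneg (hTmin.trans hrt') ht0
            have hq1 := mul_nonneg hq0 hgp.le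
            gcongr)
    have h0 := hσ0 w1 ⟨h1, h2.trans h3⟩
    nlinarith
  intro t ht
  have htI : t ∈ Icc β ω := ⟨(h1.trans h2).trans ht.1, ht.2⟩
  refine ⟨σ t, hσmin.trans (hmono _ _ (h1.trans h2) ht.1 ht.2), fun k => ?_⟩
  have h5 : ‖Δ.Z (Y t) (X t) (mu t) - y (σ t)‖ ≤ ρ + κ := by
    rw [hZE]; exact (norm_add_le _ _).trans (by linarith [hqsub t htI, hEfin t htI])
  exact (norm_le_pi_norm _ k).trans h5

end

section
open Set Filter Topology Metric

lemma cku_near {s t : ℝ} (hs : 1 ≤ s) (hst : s ≤ t) (h : t ^ 2 - s ^ 2 ≤ 1) :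
    0.999 * cku s ≤ cku t ∧ cku t ≤ 1.001 * cku s := by
  have h1 := ckM_var hs hst
  have e : cku t = cku s * Real.exp (-(ckM t - ckM s)) := by
    rw [cku_eq, cku_eq, ← Real.exp_add]; congr 1; ring
  have h2 := Real.abs_exp_sub_one_le (x := -(ckM t - ckM s)) (by rw [abs_neg]; linarith)
  rw [abs_neg] at h2
  have h3 := abs_le.1 h2
  have h4 := cku_pos s
  rw [e]
  constructor <;> nlinarith

/-- data of one amplification stage -/
structure Amp (T0 w1 w2 T1 T2 T3 : ℝ) (D G Z : ℝ → ℝ) (f : ℝ) : Prop where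
  h0 : 1 ≤ T0
  h01 : T0 ≤ w1
  hw : w1 ≤ w2
  hw1 : w2 ≤ T1
  h12 : T1 ≤ T2
  h23 : T2 ≤ T3
  ww : 1 / 16 ≤ w2 ^ 2 - w1 ^ 2
  s01 : T1 ^ 2 - T0 ^ 2 = 1 / 4
  s12 : T2 ^ 2 - T1 ^ 2 = 1 / 4
  s23 : T3 ^ 2 - T2 ^ 2 = 1 / 2
  cD : ContinuousOn D (Icc T0 T3)
  cG : ContinuousOn G (Icc T0 T3)
  cZ : ContinuousOn Z (Icc T0 T3)
  dD : ∀ t ∈ Ioo T0 T3, HasDerivAt D (ckA t * g3 t * (D t + Z t - G t) * (1 - D t ^ 2) - ckA t * g1 t * D t) t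
  dG : ∀ t ∈ Ioo T0 T3, HasDerivAt G (cku t * (t * D t - 2000 * G t)) t
  D1 : ∀ t ∈ Icc T0 T3, |D t| ≤ 1
  G1 : ∀ t ∈ Icc T0 T3, |G t| ≤ t / 2000
  fb : 2000 * |f| ≤ T0 / 100
  Zf : ∀ t ∈ Icc T0 T2, |Z t - f| ≤ 2 * cku T0
  D0 : |D T0| ≤ 0.005 * cku T0
  on3 : ∀ t ∈ Icc w1 w2, 1 / 2 ≤ g3 t
  lk1 : ∀ t ∈ Icc T0 T2, ckA t * g1 t ≤ 1 / 1000
  lk3 : ∀ t ∈ Icc T2 T3, |ckA t * g3 t * (D t + Z t - G t) * (1 - D t ^ 2)| ≤ 1 / 1000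

section
variable {T0 w1 w2 T1 T2 T3 : ℝ} {D G Z : ℝ → ℝ} {f : ℝ}

lemma Amp.neg (h : Amp T0 w1 w2 T1 T2 T3 D G Z f) :
    Amp T0 w1 w2 T1 T2 T3 (fun t => - D t) (fun t => - G t) (fun t => - Z t) (-f) where
  h0 := h.h0
  h01 := h.h01
  hw := h.hw
  hw1 := h.hw1
  h12 := h.h12
  h23 := h.h23
  ww := h.ww
  s01 := h.s01
  s12 := h.s12
  s23 := h.s23
  cD := h.cD.neg
  cG := h.cG.neg
  cZ := h.cZ.neg
  dD := fun t ht => (h.dD t ht).neg.congr_deriv (by ring)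
  dG := fun t ht => (h.dG t ht).neg.congr_deriv (by ring)
  D1 := fun t ht => by rw [abs_neg]; exact h.D1 t ht
  G1 := fun t ht => by rw [abs_neg]; exact h.G1 t ht
  fb := by rw [abs_neg]; exact h.fb
  Zf := fun t ht => by
    rw [show -Z t - -f = -(Z t - f) by ring, abs_neg]; exact h.Zf t ht
  D0 := by rw [abs_neg]; exact h.D0
  on3 := h.on3
  lk1 := h.lk1
  lk3 := fun t ht => by
    rw [show ckA t * g3 t * (-D t + -Z t - -G t) * (1 - (-D t) ^ 2) =
      -(ckA t * g3 t * (D t + Z t - G t) * (1 - D t ^ 2)) by ring, abs_neg]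
    exact h.lk3 t ht

lemma Amp.u_near (h : Amp T0 w1 w2 T1 T2 T3 D G Z f) {t : ℝ} (ht : t ∈ Icc T0 T3) :
    0.999 * cku T0 ≤ cku t ∧ cku t ≤ 1.001 * cku T0 := by
  apply cku_near h.h0 ht.1
  have h1 := h.s01
  have h2 := h.s12
  have h3 := h.s23
  have h4 := ht.2
  have h5 := ht.1
  have h6 := h.h0
  nlinarith

lemma Amp.G_step (h : Amp T0 w1 w2 T1 T2 T3 D G Z f) {t : ℝ} (ht : t ∈ Icc T0 T3) :
    |G t - G T0| ≤ 1.01 * cku T0 := by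
  have hp := cku_pos T0
  have hd : ∀ s ∈ Ioo T0 t, |cku s * (s * D s - 2000 * G s)| ≤ 1.001 * cku T0 * (2 * s) := by
    intro s hs
    have hs' : s ∈ Icc T0 T3 := ⟨hs.1.le, hs.2.le.trans ht.2⟩
    have hu := h.u_near hs'
    have hs0 : 0 ≤ s := by linarith [hs.1, h.h0]
    have h1 := abs_le.1 (h.D1 s hs')
    have h2 := abs_le.1 (h.G1 s hs')
    rw [abs_mul, abs_of_pos (cku_pos s)]
    apply mul_le_mul hu.2 _ (abs_nonneg _) (by positivity)
    rw [abs_le]; constructor <;> nlinarith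
  have hc : ContinuousOn G (Icc T0 t) := h.cG.mono (Icc_subset_Icc le_rfl ht.2)
  have hdG : ∀ s ∈ Ioo T0 t, HasDerivAt G (cku s * (s * D s - 2000 * G s)) s := fun s hs =>
    h.dG s ⟨hs.1, hs.2.trans_le ht.2⟩
  have a1 := incr_le ht.1 (y := G) (z := fun s => 1.001 * cku T0 * s ^ 2) hc (by fun_prop) hdG
    (fun s _ => (sq_deriv s).const_mul (1.001 * cku T0)) (fun s hs => (abs_le.1 (hd s hs)).2)
  have a2 := incr_le ht.1 (y := fun s => - G s) (z := fun s => 1.001 * cku T0 * s ^ 2) hc.neg (by fun_prop)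
    (fun s hs => (hdG s hs).neg)
    (fun s _ => (sq_deriv s).const_mul (1.001 * cku T0)) (fun s hs => by linarith [(abs_le.1 (hd s hs)).1])
  have h1 := h.s01
  have h2 := h.s12
  have h3 := h.s23
  have h4 := ht.2
  have h5 := ht.1
  have h6 := h.h0
  have h7 : t ^ 2 - T0 ^ 2 ≤ 1 := by nlinarith
  rw [abs_le]; constructor <;> nlinarith

/-- when the memory is too small, the decision variable becomes positive -/
lemma Amp.D_low (h : Amp T0 w1 w2 T1 T2 T3 D G Z f) (he : G T0 - f ≤ -8 * cku T0)
    {t : ℝ} (ht : t ∈ Icc T0 T2) :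
    -(0.01 * cku T0) < D t ∧ (T1 ≤ t → 0.49 ≤ D t) := by
  have hp := cku_pos T0
  have hp1 := cku_le_one T0
  have h23 := h.h23
  have hv : ∀ s ∈ Icc T0 T2, 4 * cku T0 ≤ Z s - G s := by
    intro s hs
    have h1 := abs_le.1 (h.Zf s hs)
    have h2 := abs_le.1 (h.G_step (t := s) ⟨hs.1, hs.2.trans h23⟩)
    linarith
  have hD0 := abs_le.1 h.D0
  have hge : ∀ s ∈ Ioo T0 T2, (ckA s * g3 s * (1 - D s ^ 2) - ckA s * g1 s) * (D s + 0.01 * cku T0) ≤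
      ckA s * g3 s * (D s + Z s - G s) * (1 - D s ^ 2) - ckA s * g1 s * D s := by
    intro s hs
    have h1 := abs_le.1 (h.D1 s ⟨hs.1.le, hs.2.le.trans h23⟩)
    have h2 : 0 ≤ 1 - D s ^ 2 := by nlinarith
    have h3 : 0 ≤ ckA s * g3 s := mul_nonneg (ckA_nonneg s) (gt_pos _ _).le
    have h4 : 0 ≤ ckA s * g1 s := mul_nonneg (ckA_nonneg s) (gt_pos _ _).le
    have h5 := hv s ⟨hs.1.le, hs.2.le⟩
    have h6 : 0 ≤ ckA s * g3 s * (1 - D s ^ 2) * (Z s - G s - 0.01 * cku T0) :=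
      mul_nonneg (mul_nonneg h3 h2) (by linarith)
    have h7 : 0 ≤ ckA s * g1 s * (0.01 * cku T0) := by positivity
    nlinarith
  have hdw : ∀ s ∈ Ioo T0 T2, HasDerivAt (fun s => D s + 0.01 * cku T0)
      (ckA s * g3 s * (D s + Z s - G s) * (1 - D s ^ 2) - ckA s * g1 s * D s) s := fun s hs =>
    (h.dD s ⟨hs.1, hs.2.trans_le h23⟩).add_const _
  have hcD : ∀ {a b}, T0 ≤ a → b ≤ T2 → ContinuousOn D (Icc a b) := fun ha hb =>
    h.cD.mono (Icc_subset_Icc ha (hb.trans h23))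
  have hpos : ∀ s ∈ Icc T0 T2, 0 < D s + 0.01 * cku T0 := by
    intro s hs
    refine pos_pres hs.1 (y := fun s => D s + 0.01 * cku T0) ((hcD le_rfl hs.2).add continuousOn_const)
      (h := fun s => ckA s * g3 s * (1 - D s ^ 2) - ckA s * g1 s) ?_
      (fun r hr => hdw r ⟨hr.1, hr.2.trans_le hs.2⟩) (fun r hr => hge r ⟨hr.1, hr.2.trans_le hs.2⟩)
      (by linarith)
    have := hcD (a := T0) le_rfl hs.2
    have := cont_A
    have := cont_g1
    have := cont_g3
    fun_prop
  refine ⟨by linarith [hpos t ht], fun hT1 => ?_⟩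
  by_contra hcon
  push Not at hcon
  have h01 : 0 ≤ T0 := by linarith [h.h0]
  have hlen : t - T0 ≤ 1 := by
    have h1 := h.s01
    have h2 := h.s12
    have h3 := h.h0
    nlinarith [ht.1, ht.2]
  rcases last_time (c := 1 / 2) ht.1 (hcD le_rfl ht.2) (by linarith) with hA | ⟨s, hs, hs1, hs2⟩
  · obtain ⟨P, hP0, hP, hP'⟩ := exists_prim (a := T0) (b := t) ht.1 (h := fun s => ckA s * g3 s)
      (cont_A.mul cont_g3).continuousOn
    have hg := gate_int (a := T0) (b := t) h01 h.h01 h.hw (h.hw1.trans hT1) h.ww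
      (fun t => (gt_pos _ _).le) h.on3 hP hP'
    have := core_ge ht.1 (y := fun s => D s + 0.01 * cku T0) (P := fun s => 3 / 4 * P s - 1 / 1000 * s)
      ((hcD le_rfl ht.2).add continuousOn_const) (by fun_prop)
      (fun r hr => hdw r ⟨hr.1, hr.2.trans_le ht.2⟩)
      (fun r hr => ((hP' r hr).const_mul (3 / 4)).sub ((hasDerivAt_id' r).const_mul (1 / 1000)))
      (fun r hr => by
        have hr' : r ∈ Ioo T0 T2 := ⟨hr.1, hr.2.trans_le ht.2⟩
        refine le_trans ?_ (hge r hr')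
        have h1 := hpos r ⟨hr'.1.le, hr'.2.le⟩
        have h2 := hA r ⟨hr.1.le, hr.2.le⟩
        have h3 : 0 ≤ ckA r * g3 r := mul_nonneg (ckA_nonneg r) (gt_pos _ _).le
        have h4 := h.lk1 r ⟨hr'.1.le, hr'.2.le⟩
        have h5 : 3 / 4 ≤ 1 - D r ^ 2 := by nlinarith
        apply mul_le_mul_of_nonneg_right _ h1.le
        nlinarith)
    have hexp : Real.exp (75 * (1 + T0) - 1) ≤ Real.exp ((3 / 4 * P t - 1 / 1000 * t) - (3 / 4 * P T0 - 1 / 1000 * T0)) := by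
      apply Real.exp_le_exp.2
      have := h.h01
      linarith
    have hlow : 0.005 * Real.exp (-(1 + T0)) ≤ D T0 + 0.01 * cku T0 := by
      have := cku_ge_exp h01
      linarith
    have h5 : 0.005 * Real.exp (-(1 + T0)) * Real.exp (75 * (1 + T0) - 1) ≤ D t + 0.01 * cku T0 := by
      refine le_trans ?_ this
      exact mul_le_mul hlow hexp (Real.exp_pos _).le (le_trans (by positivity) hlow)
    rw [mul_assoc, ← Real.exp_add] at h5
    have h6 := Real.add_one_le_exp (-(1 + T0) + (75 * (1 + T0) - 1))
    have h7 := h.h0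
    -- need a better bound than linear
    have h8 : (1 : ℝ) + 146 ≤ Real.exp 146 := by linarith [Real.add_one_le_exp (146 : ℝ)]
    have h9 : Real.exp 147 ≤ Real.exp (-(1 + T0) + (75 * (1 + T0) - 1)) := Real.exp_le_exp.2 (by linarith)
    have h10 : (147 : ℝ) * 2 ≤ Real.exp 147 := by
      rw [show (147 : ℝ) = 146 + 1 by norm_num, Real.exp_add]
      have : (2 : ℝ) ≤ Real.exp 1 := by linarith [Real.add_one_le_exp (1 : ℝ)]
      nlinarith
    linarith
  · have hs3 : T0 ≤ s := hs.1
    have hst : s ≤ t := hs.2.le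
    have := core_ge hst (y := fun s => D s + 0.01 * cku T0) (P := fun s => - (1 / 1000 * s)) (h := fun _ => -(1 / 1000 * 1))
      ((hcD hs3 ht.2).add continuousOn_const) (by fun_prop)
      (fun r hr => hdw r ⟨hs3.trans_lt hr.1, hr.2.trans_le ht.2⟩)
      (fun r hr => ((hasDerivAt_id' r).const_mul (1 / 1000)).neg)
      (fun r hr => by
        have hr' : r ∈ Ioo T0 T2 := ⟨hs3.trans_lt hr.1, hr.2.trans_le ht.2⟩
        refine le_trans ?_ (hge r hr')
        have h1 := hpos r ⟨hr'.1.le, hr'.2.le⟩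
        have h3 : 0 ≤ ckA r * g3 r := mul_nonneg (ckA_nonneg r) (gt_pos _ _).le
        have h4 := h.lk1 r ⟨hr'.1.le, hr'.2.le⟩
        have h6 := abs_le.1 (h.D1 r ⟨hr'.1.le, hr'.2.le.trans h23⟩)
        have h5 : 0 ≤ 1 - D r ^ 2 := by nlinarith
        apply mul_le_mul_of_nonneg_right _ h1.le
        nlinarith [mul_nonneg h3 h5])
    have hexp := Real.add_one_le_exp (-(1 / 1000 * t) - -(1 / 1000 * s))
    have h6 : 0.999 ≤ Real.exp (-(1 / 1000 * t) - -(1 / 1000 * s)) := by linarith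
    have h7 := mul_le_mul_of_nonneg_left h6 (show 0 ≤ D s + 0.01 * cku T0 by linarith)
    nlinarith

lemma Amp.D_low2 (h : Amp T0 w1 w2 T1 T2 T3 D G Z f) (he : G T0 - f ≤ -8 * cku T0)
    {t : ℝ} (ht : t ∈ Icc T2 T3) : -(1 / 1000) ≤ D t := by
  have hD2 := (h.D_low he (t := T2) ⟨by linarith [h.h01, h.hw, h.hw1, h.h12], le_rfl⟩).2 h.h12
  have h02 : T0 ≤ T2 := by linarith [h.h01, h.hw, h.hw1, h.h12]
  obtain ⟨P, hP0, hP, hP'⟩ := exists_prim (a := T2) (b := t) ht.1 (h := fun s => ckA s * g1 s)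
      (cont_A.mul cont_g1).continuousOn
  have hk : ∀ s, 0 ≤ ckA s * g1 s := fun s => mul_nonneg (ckA_nonneg s) (gt_pos _ _).le
  have hΓ := incr_le ht.1 (y := fun _ => (0 : ℝ)) continuousOn_const hP (fun s _ => hasDerivAt_const s 0) hP'
    (fun s _ => hk s)
  have := dec_le ht.1 (by
      have h1 := h.s23
      have h3 := h.h0
      nlinarith [ht.1, ht.2]) (y := fun t => - D t) (k := fun s => ckA s * g1 s) (l := 1 / 1000) (Γ := 0) (Y0 := 0)
    (h.cD.mono (Icc_subset_Icc h02 ht.2)).neg hP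
    (fun s hs => (h.dD s ⟨h02.trans_lt hs.1, hs.2.trans_le ht.2⟩).neg) hP' (fun s _ => hk s) (by norm_num)
    (fun s hs => by
      have := abs_le.1 (h.lk3 s ⟨hs.1.le, hs.2.le.trans ht.2⟩)
      linarith) (by linarith) (by linarith) le_rfl
  linarith

lemma Amp.up (h : Amp T0 w1 w2 T1 T2 T3 D G Z f) (he : G T0 - f ≤ -8 * cku T0) :
    G T0 + 0.02 * cku T0 ≤ G T3 := by
  have hp := cku_pos T0
  have hp1 := cku_le_one T0
  have h0 := h.h0
  have h01 : T0 ≤ T1 := by linarith [h.h01, h.hw, h.hw1]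
  have h12 := h.h12
  have h23 := h.h23
  have hfb := h.fb
  have hf := abs_le.1 (show |f| ≤ T0 / 200000 by linarith)
  have low : ∀ c a b, T0 ≤ a → a ≤ b → b ≤ T3 → (∀ t ∈ Icc a b, c + 0.01 ≤ D t) → ∀ k, 
      (∀ t ∈ Icc a b, k ≤ cku t * c) → k * (b ^ 2 - a ^ 2) / 2 ≤ G b - G a := by
    intro c a b ha hab hb hD k hk
    have := incr_le hab (y := fun s => k / 2 * s ^ 2) (z := G) (by fun_prop) (h.cG.mono (Icc_subset_Icc ha hb))
      (fun s _ => (sq_deriv s).const_mul (k / 2)) (fun s hs => h.dG s ⟨ha.trans_lt hs.1, hs.2.trans_le hb⟩)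
      (fun s hs => by
        have hs' : s ∈ Icc T0 T3 := ⟨ha.trans hs.1.le, hs.2.le.trans hb⟩
        have h1 := hk s ⟨hs.1.le, hs.2.le⟩
        have h2 := hD s ⟨hs.1.le, hs.2.le⟩
        have h3 := abs_le.1 (h.G_step hs')
        have hs0 : 0 < s := by linarith [hs'.1]
        have h4 : s * c ≤ s * D s - 2000 * G s := by
          have h5 : G s ≤ T0 / 200000 := by linarith
          have h6 : s * (c + 0.01) ≤ s * D s := mul_le_mul_of_nonneg_left h2 hs0.le
          linarith [hs'.1]
        have h7 := mul_le_mul_of_nonneg_left h4 (cku_pos s).le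
        nlinarith)
    linarith
  have e1 := low (-0.02) T0 T1 le_rfl h01 (h12.trans h23) (fun t ht => by
    have := (h.D_low he (t := t) ⟨ht.1, ht.2.trans h12⟩).1; linarith) (-0.021 * cku T0) (fun t ht => by
      have := h.u_near (t := t) ⟨ht.1, ht.2.trans (h12.trans h23)⟩; linarith)
  have e2 := low (0.48) T1 T2 h01 h12 h23 (fun t ht => by
    have := (h.D_low he (t := t) ⟨h01.trans ht.1, ht.2⟩).2 ht.1; linarith) (0.47 * cku T0) (fun t ht => by
      have := h.u_near (t := t) ⟨h01.trans ht.1, ht.2.trans h23⟩; linarith)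
  have e3 := low (-0.02) T2 T3 (h01.trans h12) h23 le_rfl (fun t ht => by
    have := h.D_low2 he ht; linarith) (-0.021 * cku T0) (fun t ht => by
      have := h.u_near (t := t) ⟨(h01.trans h12).trans ht.1, ht.2⟩; linarith)
  rw [h.s01] at e1
  rw [h.s12] at e2
  rw [h.s23] at e3
  linarith

lemma Amp.final (h : Amp T0 w1 w2 T1 T2 T3 D G Z f) :
    |G T3 - f| ≤ max (9.1 * cku T0) (|G T0 - f| - 0.02 * cku T0) := by
  have hp := cku_pos T0
  have h03 : T0 ≤ T3 := by linarith [h.h01, h.hw, h.hw1, h.h12, h.h23]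
  have hst := abs_le.1 (h.G_step (t := T3) ⟨h03, le_rfl⟩)
  rcases le_or_gt (G T0 - f) (-8 * cku T0) with h1 | h1
  · refine le_max_of_le_right ?_
    have := h.up h1
    rw [abs_of_neg (show G T3 - f < 0 by linarith), abs_of_neg (show G T0 - f < 0 by linarith)]
    linarith
  rcases le_or_gt (8 * cku T0) (G T0 - f) with h2 | h2
  · refine le_max_of_le_right ?_
    have := h.neg.up (by linarith)
    rw [abs_of_pos (show 0 < G T3 - f by linarith), abs_of_pos (show 0 < G T0 - f by linarith)]
    linarith
  · refine le_max_of_le_left ?_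
    rw [abs_le]; constructor <;> linarith
end

end

section
open Set Filter Topology Metric
variable {m n d : ℕ}

/-- smallness of the leaks -/
structure Leaks (Δ : Dat m n d) (t : ℝ) (F G D : ℝ → Fin m → ℝ)
    (Y : ℝ → Fin d → ℝ) (X : ℝ → Fin n → ℝ) (mu : ℝ → ℝ) : Prop where
  l1 : g1 t ≤ Real.exp (-t ^ 2) → ckA t * g1 t ≤ Real.exp (-(5 * t))
  lY : g1 t ≤ Real.exp (-t ^ 2) → ∀ k, |ckA t * g1 t * Y t k| ≤ Real.exp (-(5 * t))
  lm : g1 t ≤ Real.exp (-t ^ 2) → |ckA t * g1 t * (ckM t - mu t)| ≤ Real.exp (-(5 * t))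
  l2 : g2 t ≤ Real.exp (-t ^ 2) → ∀ k, |Δ.rate t (Y t) (X t) (mu t) *
    MvPolynomial.eval (Δ.Z (Y t) (X t) (mu t)) (Δ.p k)| ≤ Real.exp (-(5 * t))
  l3 : g3 t ≤ Real.exp (-t ^ 2) → ∀ i, |ckA t * g3 t * (D t i +
    Δ.Z (Y t) (X t) (mu t) (Fin.castLE Δ.hd i) - G t i) * (1 - D t i ^ 2)| ≤ Real.exp (-(5 * t))
  lF : gF t ≤ Real.exp (-t ^ 2) → ∀ i, |ckA t * gF t * (G t i - F t i)| ≤ Real.exp (-(5 * t))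

lemma leaks (Δ : Dat m n d) : ∃ TL : ℝ, 1 ≤ TL ∧ ∀ (x : ℝ → Fin n → ℝ) (T : ℝ) (F G D : ℝ → Fin m → ℝ)
    (Y : ℝ → Fin d → ℝ) (X : ℝ → Fin n → ℝ) (mu : ℝ → ℝ), Sol Δ x T F G D Y X mu →
    ∀ t, TL ≤ t → t ≤ T → Leaks Δ t F G D Y X mu := by
  obtain ⟨Cq, hCq, rq, hq⟩ := poly_grow_fam Δ.q
  obtain ⟨Cp, hCp, rp, hp⟩ := poly_grow_fam Δ.p
  set b : ℝ → ℝ := fun s => s + Cq * (1 + s) ^ rq with hb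
  set W1 : ℝ → ℝ := fun s => 6400 * s ^ 2 * (1 + 2 * s + b s) with hW1
  set W2 : ℝ → ℝ := fun s => |Δ.CT| * (1 + n * s ^ 2 + s ^ 2) ^ Δ.rT * s * (Cp * (1 + b s) ^ rp) with hW2
  have pb : PB b := PB.id.add (((PB.const 1).add PB.id).comp_pow _ _)
  have pW : PB fun s => W1 s + W2 s := by
    refine (((PB.id.comp_pow 6400 2)).mul (((PB.const 1).add ((PB.const 2).mul PB.id)).add pb)).add ?_
    exact (((((PB.const 1).add (PB.id.comp_pow n 2)).add (PB.id.pow 2)).comp_pow |Δ.CT| Δ.rT).mul PB.id).mul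
      (((PB.const 1).add pb).comp_pow Cp rp)
  obtain ⟨C, hC, r, hW⟩ := pW
  obtain ⟨TL, hTL, hs⟩ := exp_small C r
  refine ⟨TL, hTL, fun x T F G D Y X mu h t ht htT => ?_⟩
  have ht1 : 1 ≤ t := hTL.trans ht
  have htI : t ∈ Icc 0 T := ⟨by linarith, htT⟩
  set s := 1 + t with hsd
  have hs1 : 1 ≤ s := by linarith
  have hb0 : 0 ≤ b s := by simp only [hb]; positivity
  have hW10 : 0 ≤ W1 s := by simp only [hW1]; positivity
  have hW20 : 0 ≤ W2 s := by simp only [hW2]; positivity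
  have hWs := hW s hs1
  rw [abs_of_nonneg (by linarith)] at hWs
  have main : ∀ g w : ℝ, 0 ≤ g → g ≤ Real.exp (-t ^ 2) → |w| ≤ W1 s + W2 s → |g * w| ≤ Real.exp (-(5 * t)) := by
    intro g w hg hg' hw
    rw [abs_mul, abs_of_nonneg hg]
    calc g * |w| ≤ Real.exp (-t ^ 2) * (C * s ^ r) :=
          mul_le_mul hg' (hw.trans hWs) (abs_nonneg _) (Real.exp_pos _).le
      _ = C * (1 + t) ^ r * Real.exp (-t ^ 2) := by rw [hsd]; ring
      _ ≤ _ := hs t ht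
  have hA : ckA t = 6400 * s ^ 2 := rfl
  have hX : ‖X t‖ ≤ s := (pi_norm_le_iff_of_nonneg (by linarith)).2 fun i => h.X_abs i t htI
  have hY : ‖Y t‖ ≤ s := (pi_norm_le_iff_of_nonneg (by linarith)).2 fun i => h.Y_abs i t htI
  have hmu0 := h.mu_nonneg t htI
  have hmu1 := h.mu_le t htI
  have hqv : ∀ k, |Δ.qv (X t) (mu t) k| ≤ Cq * (1 + s) ^ rq := by
    intro k
    refine (hq _ k).trans ?_
    have : ‖(Fin.snoc (α := fun _ => ℝ) (X t) (mu t) : Fin (n + 1) → ℝ)‖ ≤ s := by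
      rw [pi_norm_le_iff_of_nonneg (by linarith)]
      intro i
      refine Fin.lastCases ?_ (fun i => ?_) i
      · rw [Fin.snoc_last, Real.norm_eq_abs, abs_of_nonneg hmu0]; exact hmu1
      · rw [Fin.snoc_castSucc]; exact h.X_abs i t htI
    gcongr
  have hZ : ∀ k, |Δ.Z (Y t) (X t) (mu t) k| ≤ b s := fun k =>
    (abs_add_le _ _).trans (add_le_add (h.Y_abs k t htI) (hqv k))
  have hZn : ‖Δ.Z (Y t) (X t) (mu t)‖ ≤ b s := (pi_norm_le_iff_of_nonneg hb0).2 hZ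
  have hA1 : ∀ w : ℝ, |w| ≤ 1 + 2 * s + b s → |ckA t * w| ≤ W1 s + W2 s := by
    intro w hw
    rw [abs_mul, abs_of_nonneg (ckA_nonneg t), hA]
    have : 6400 * s ^ 2 * |w| ≤ W1 s := mul_le_mul_of_nonneg_left hw (by positivity)
    linarith
  have hD := fun i => h.D_le i t htI
  have hG := fun i => h.G_le i t htI
  have hF := fun i => h.F_le i t htI
  refine ⟨fun hg => ?_, fun hg k => ?_, fun hg => ?_, fun hg k => ?_, fun hg i => ?_, fun hg i => ?_⟩
  · have := main (g1 t) (ckA t * 1) (gt_pos _ _).le hg (hA1 1 (by rw [abs_one]; linarith))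
    have h2 := le_abs_self (g1 t * (ckA t * 1))
    linarith
  · have := main (g1 t) (ckA t * Y t k) (gt_pos _ _).le hg (hA1 _ (by linarith [h.Y_abs k t htI]))
    rwa [show ckA t * g1 t * Y t k = g1 t * (ckA t * Y t k) by ring]
  · have := main (g1 t) (ckA t * (ckM t - mu t)) (gt_pos _ _).le hg (hA1 _ (by
      have h1 := ckM_nonneg t
      have h2 := ckM_le_t (t := t) (by linarith)
      rw [abs_le]; constructor <;> linarith))
    rwa [show ckA t * g1 t * (ckM t - mu t) = g1 t * (ckA t * (ckM t - mu t)) by ring]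
  · have hYle := h.Y_le t htI
    have hphi0 : 0 ≤ (1 + t ^ 2 - ∑ k, Y t k ^ 2) * (1 + t ^ 2)⁻¹ := by positivity
    have hphi1 : (1 + t ^ 2 - ∑ k, Y t k ^ 2) * (1 + t ^ 2)⁻¹ ≤ 1 := by
      rw [← div_eq_mul_inv, div_le_one (by positivity)]
      have := Finset.sum_nonneg (s := Finset.univ) (f := fun k => Y t k ^ 2) fun k _ => sq_nonneg _
      linarith
    have hsum : ∑ i, X t i ^ 2 ≤ n * s ^ 2 := by
      have : ∑ i, X t i ^ 2 ≤ ∑ i : Fin n, s ^ 2 := by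
        apply Finset.sum_le_sum
        intro i _
        have := abs_le.1 (h.X_abs i t htI)
        apply sq_le_sq' <;> linarith
      simpa using this
    have hsum0 := Finset.sum_nonneg (s := Finset.univ) (f := fun k => X t k ^ 2) fun k _ => sq_nonneg _
    have hmusq : mu t ^ 2 ≤ s ^ 2 := by gcongr
    have hrt : |Δ.rt (X t) (mu t)| ≤ |Δ.CT| * (1 + n * s ^ 2 + s ^ 2) ^ Δ.rT := by
      unfold Dat.rt
      have hnn : 0 ≤ 1 + ∑ i, X t i ^ 2 + mu t ^ 2 := by positivity
      rw [abs_mul, abs_pow, abs_of_nonneg hnn]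
      gcongr
    have := main (g2 t) (Δ.rt (X t) (mu t) * t * ((1 + t ^ 2 - ∑ k, Y t k ^ 2) * (1 + t ^ 2)⁻¹) *
      MvPolynomial.eval (Δ.Z (Y t) (X t) (mu t)) (Δ.p k)) (gt_pos _ _).le hg (by
        have : |Δ.rt (X t) (mu t) * t * ((1 + t ^ 2 - ∑ k, Y t k ^ 2) * (1 + t ^ 2)⁻¹) *
          MvPolynomial.eval (Δ.Z (Y t) (X t) (mu t)) (Δ.p k)| ≤ W2 s := by
          rw [abs_mul, abs_mul, abs_mul, abs_of_nonneg hphi0, abs_of_nonneg (show 0 ≤ t by linarith)]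
          have hpk := (hp (Δ.Z (Y t) (X t) (mu t)) k).trans (show _ ≤ Cp * (1 + b s) ^ rp by gcongr)
          calc _ ≤ |Δ.CT| * (1 + n * s ^ 2 + s ^ 2) ^ Δ.rT * s * 1 * (Cp * (1 + b s) ^ rp) := by
                gcongr
                linarith
            _ = W2 s := by simp only [hW2]; ring
        linarith)
    rwa [show Δ.rate t (Y t) (X t) (mu t) * MvPolynomial.eval (Δ.Z (Y t) (X t) (mu t)) (Δ.p k) =
      g2 t * (Δ.rt (X t) (mu t) * t * ((1 + t ^ 2 - ∑ k, Y t k ^ 2) * (1 + t ^ 2)⁻¹) *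
      MvPolynomial.eval (Δ.Z (Y t) (X t) (mu t)) (Δ.p k)) by unfold Dat.rate; ring]
  · have hDi := abs_le.1 (hD i)
    have hGi := abs_le.1 (hG i)
    have hZi := abs_le.1 (hZ (Fin.castLE Δ.hd i))
    have := main (g3 t) (ckA t * ((D t i +
      Δ.Z (Y t) (X t) (mu t) (Fin.castLE Δ.hd i) - G t i) * (1 - D t i ^ 2))) (gt_pos _ _).le hg (hA1 _ (by
        have h1 : |D t i + Δ.Z (Y t) (X t) (mu t) (Fin.castLE Δ.hd i) - G t i| ≤ 1 + 2 * s + b s := by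
          rw [abs_le]; constructor <;> linarith
        have h2 : |1 - D t i ^ 2| ≤ 1 := by
          rw [abs_le]; constructor <;> nlinarith
        rw [abs_mul]
        calc _ ≤ (1 + 2 * s + b s) * 1 := mul_le_mul h1 h2 (abs_nonneg _) (by linarith)
          _ = _ := mul_one _))
    rwa [show ckA t * g3 t * (D t i + Δ.Z (Y t) (X t) (mu t) (Fin.castLE Δ.hd i) - G t i) * (1 - D t i ^ 2) =
      g3 t * (ckA t * ((D t i +
      Δ.Z (Y t) (X t) (mu t) (Fin.castLE Δ.hd i) - G t i) * (1 - D t i ^ 2))) by ring]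
  · have hGi := abs_le.1 (hG i)
    have hFi := abs_le.1 (hF i)
    have := main (gF t) (ckA t * (G t i - F t i)) (gt_pos _ _).le hg (hA1 _ (by
      rw [abs_le]; constructor <;> linarith))
    rwa [show ckA t * gF t * (G t i - F t i) = gF t * (ckA t * (G t i - F t i)) by ring]

end

section
open Set Filter Topology Metric
variable {m n d : ℕ}

structure Ctx (Δ : Dat m n d) (xb : Fin n → ℝ) (fb : Fin m → ℝ) (K B Tmax Lp Lq ξ : ℝ) : Prop where
  hB0 : 0 ≤ B
  hLp1 : 1 ≤ Lp
  hLq1 : 1 ≤ Lq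
  hT1 : 1 ≤ Tmax
  hξ : 0 < ξ
  hξ1 : ξ ≤ 1
  hLp : ∀ v w : Fin d → ℝ, ‖v‖ ≤ B + 2 → ‖w‖ ≤ B + 2 → ∀ k,
      |MvPolynomial.eval v (Δ.p k) - MvPolynomial.eval w (Δ.p k)| ≤ Lp * ‖v - w‖
  hLq : ∀ ms, 0 ≤ ms → ms ≤ K → ∀ (X : Fin n → ℝ) (mu : ℝ), (∀ k, |X k - xb k| ≤ ξ) → |mu - ms| ≤ ξ →
      ∀ k, |Δ.qv X mu k - Δ.qv xb ms k| ≤ Lq * ξ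
  hκ : 5 * (Lq * ξ) * Real.exp (Tmax * Lp) ≤ Real.exp (-K) / 2
  hsol : ∀ ms, 0 ≤ ms → ms ≤ K → ∃ (y : ℝ → Fin d → ℝ) (Ω0 : ℝ), 0 ≤ Ω0 ∧
      (y 0 = fun k => Δ.qv xb ms k) ∧
      (∀ s, 0 ≤ s → HasDerivAt y (fun k => MvPolynomial.eval (y s) (Δ.p k)) s) ∧
      (∀ s, 0 ≤ s → s ≤ Tmax → ‖y s‖ ≤ B) ∧
      (∀ s, Ω0 ≤ s → ∀ i, |y s (Fin.castLE Δ.hd i) - fb i| ≤ Real.exp (-ms)) ∧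
      (∀ (X : Fin n → ℝ) (mu : ℝ), (∀ k, |X k - xb k| ≤ ξ) → |mu - ms| ≤ ξ →
        128 * Ω0 ≤ Δ.rt X mu ∧ Δ.rt X mu ≤ Tmax)

/-- tracking situation from time `H` on -/
structure Trk (Δ : Dat m n d) (xb : Fin n → ℝ) (fb : Fin m → ℝ) (B ξ H T : ℝ) (F G D : ℝ → Fin m → ℝ)
    (Y : ℝ → Fin d → ℝ) (X : ℝ → Fin n → ℝ) (mu : ℝ → ℝ) : Prop where
  h10 : 10 ≤ H
  hξ : 2 * Real.exp (-(5 * H)) ≤ ξ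
  hB : d * (2 * B + 1) ^ 2 ≤ (1 + H ^ 2) / 2
  hf : ∀ i, 2000 * |fb i| ≤ H / 100
  hX : ∀ t, H ≤ t → t ≤ T → ∀ k, |X t k - xb k| ≤ ξ
  lk : ∀ t, H ≤ t → t ≤ T → Leaks Δ t F G D Y X mu

variable {Δ : Dat m n d} {x : ℝ → Fin n → ℝ} {T : ℝ} {F G D : ℝ → Fin m → ℝ}
    {Y : ℝ → Fin d → ℝ} {X : ℝ → Fin n → ℝ} {mu : ℝ → ℝ}
    {xb : Fin n → ℝ} {fb : Fin m → ℝ} {K B Tmax Lp Lq ξ H : ℝ}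

lemma exp_small1 {t : ℝ} (ht : 10 ≤ t) : 2 * Real.exp (-(5 * t)) ≤ 0.005 * Real.exp (-(2 + t)) := by
  have h1 := Real.quadratic_le_exp_of_nonneg (x := 4 * t - 2) (by linarith)
  have e : Real.exp (-(2 + t)) = Real.exp (4 * t - 2) * Real.exp (-(5 * t)) := by
    rw [← Real.exp_add]; congr 1; ring
  rw [e]
  have h2 := Real.exp_pos (-(5 * t))
  have h3 : 400 ≤ Real.exp (4 * t - 2) := by nlinarith
  nlinarith
lemma exp_small2 {t : ℝ} (ht : 10 ≤ t) : 2 * Real.exp (-(5 * t)) ≤ 1 / 10000 := by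
  refine (exp_small1 ht).trans ?_
  have h1 := Real.quadratic_le_exp_of_nonneg (x := 2 + t) (by linarith)
  rw [Real.exp_neg]
  have h2 : (85 : ℝ) ≤ Real.exp (2 + t) := by nlinarith
  have h3 : (Real.exp (2 + t))⁻¹ ≤ 85⁻¹ := inv_anti₀ (by norm_num) h2
  linarith
lemma exp_small3 {t w : ℝ} (ht : 10 ≤ t) (hw : t ≤ w) :
    (1 + t) * Real.exp (-(100 * (1 + w))) ≤ Real.exp (-(5 * t)) := by
  have h1 := Real.add_one_le_exp t
  calc _ ≤ Real.exp t * Real.exp (-(100 * (1 + w))) :=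
        mul_le_mul_of_nonneg_right (by linarith) (Real.exp_pos _).le
    _ = Real.exp (t + -(100 * (1 + w))) := (Real.exp_add _ _).symm
    _ ≤ _ := Real.exp_le_exp.2 (by linarith)

set_option maxHeartbeats 4000000 in
lemma Sol.amp (h : Sol Δ x T F G D Y X mu) (c : Ctx Δ xb fb K B Tmax Lp Lq ξ)
    (k : Trk Δ xb fb B ξ H T F G D Y X mu) (i : ℤ) (hi : H ≤ √((i : ℝ) - 1 / 8))
    (hT : √((i : ℝ) + 11 / 8) < T) (hM : ckM (√((i : ℝ) + 3 / 8)) + 1 / 1000 ≤ K) (ℓ : Fin m) :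
    Amp (√((i : ℝ) + 3 / 8)) (√((i : ℝ) + 1 / 2)) (√((i : ℝ) + 9 / 16)) (√((i : ℝ) + 5 / 8))
      (√((i : ℝ) + 7 / 8)) (√((i : ℝ) + 11 / 8)) (fun t => D t ℓ) (fun t => G t ℓ)
      (fun t => Δ.Z (Y t) (X t) (mu t) (Fin.castLE Δ.hd ℓ)) (fb ℓ) := by
  have h10 := k.h10
  have hH0 : 0 ≤ H := by linarith
  have hi1 : 1 ≤ (i : ℝ) - 1 / 8 := by
    have : (1 : ℝ) ≤ √((i : ℝ) - 1 / 8) := by linarith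
    rwa [Real.one_le_sqrt] at this
  have sqf : ∀ r : ℝ, -1 / 8 ≤ r → √((i : ℝ) + r) ^ 2 = i + r := fun r hr => Real.sq_sqrt (by linarith)
  have mono : ∀ r r' : ℝ, r ≤ r' → √((i : ℝ) + r) ≤ √((i : ℝ) + r') := fun r r' hr =>
    Real.sqrt_le_sqrt (by linarith)
  rw [show (i : ℝ) - 1 / 8 = i + (-1 / 8) by ring] at hi
  set tm := √((i : ℝ) + (-1 / 8)) with htm
  set t0 := √((i : ℝ) + 0) with ht0
  set t1 := √((i : ℝ) + 1 / 16) with ht1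
  set β := √((i : ℝ) + 1 / 8) with hβ
  set v1 := √((i : ℝ) + 1 / 4) with hv1
  set v2 := √((i : ℝ) + 5 / 16) with hv2
  set T0 := √((i : ℝ) + 3 / 8) with hT0
  set w1 := √((i : ℝ) + 1 / 2) with hw1
  set w2 := √((i : ℝ) + 9 / 16) with hw2
  set T1 := √((i : ℝ) + 5 / 8) with hT1
  set T2 := √((i : ℝ) + 7 / 8) with hT2
  set T3 := √((i : ℝ) + 11 / 8) with hT3
  have o1 : tm ≤ t0 := mono _ _ (by norm_num)
  have o2 : t0 ≤ t1 := mono _ _ (by norm_num)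
  have o3 : t1 ≤ β := mono _ _ (by norm_num)
  have o4 : β ≤ v1 := mono _ _ (by norm_num)
  have o5 : v1 ≤ v2 := mono _ _ (by norm_num)
  have o6 : v2 ≤ T0 := mono _ _ (by norm_num)
  have o7 : T0 ≤ w1 := mono _ _ (by norm_num)
  have o8 : w1 ≤ w2 := mono _ _ (by norm_num)
  have o9 : w2 ≤ T1 := mono _ _ (by norm_num)
  have o10 : T1 ≤ T2 := mono _ _ (by norm_num)
  have o11 : T2 ≤ T3 := mono _ _ (by norm_num)
  have qm : tm ^ 2 = i + (-1 / 8) := sqf _ (by norm_num)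
  have q0 : t0 ^ 2 = i + 0 := sqf _ (by norm_num)
  have q1 : t1 ^ 2 = i + 1 / 16 := sqf _ (by norm_num)
  have qβ : β ^ 2 = i + 1 / 8 := sqf _ (by norm_num)
  have qv1 : v1 ^ 2 = i + 1 / 4 := sqf _ (by norm_num)
  have qv2 : v2 ^ 2 = i + 5 / 16 := sqf _ (by norm_num)
  have qT0 : T0 ^ 2 = i + 3 / 8 := sqf _ (by norm_num)
  have qw1 : w1 ^ 2 = i + 1 / 2 := sqf _ (by norm_num)
  have qw2 : w2 ^ 2 = i + 9 / 16 := sqf _ (by norm_num)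
  have qT1 : T1 ^ 2 = i + 5 / 8 := sqf _ (by norm_num)
  have qT2 : T2 ^ 2 = i + 7 / 8 := sqf _ (by norm_num)
  have qT3 : T3 ^ 2 = i + 11 / 8 := sqf _ (by norm_num)
  clear_value tm t0 t1 β v1 v2 T0 w1 w2 T1 T2 T3
  have tm10 : 10 ≤ tm := by linarith
  have tm0 : 0 ≤ tm := by linarith
  have sqm : ∀ {a b : ℝ} (t : ℝ), 0 ≤ a → t ∈ Icc a b → a ^ 2 ≤ t ^ 2 ∧ t ^ 2 ≤ b ^ 2 := by
    intro a b t ha ht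
    have h1 := ht.1
    have h2 := ht.2
    have h3 : 0 ≤ t := ha.trans h1
    constructor <;> gcongr
  -- time is late and leaks are small
  have lk : ∀ t, tm ≤ t → t ≤ T3 → Leaks Δ t F G D Y X mu := fun t h1 h2 =>
    k.lk t (by linarith) (by linarith)
  have e5 : ∀ t, tm ≤ t → Real.exp (-(5 * t)) ≤ Real.exp (-(5 * tm)) := fun t ht =>
    Real.exp_le_exp.2 (by linarith)
  have eH : Real.exp (-(5 * tm)) ≤ Real.exp (-(5 * H)) := Real.exp_le_exp.2 (by linarith only [o1, o2, o3, o4, o5, o6, o7, o8, o9, o10, o11, tm10, hi, hT, h10])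
  have ep := Real.exp_pos (-(5 * tm))
  have es1 := exp_small1 tm10
  have es2 := exp_small2 tm10
  have es3 := exp_small3 (w := t0) tm10 o1
  have sub : ∀ {a b : ℝ}, tm ≤ a → b ≤ T3 → Icc a b ⊆ Icc 0 T := fun ha hb =>
    Icc_subset_Icc (by linarith) (by linarith)
  have subo : ∀ {a b t : ℝ}, tm ≤ a → b ≤ T3 → t ∈ Ioo a b → t ∈ Ioo 0 T := fun ha hb ht =>
    ⟨by linarith [ht.1], by linarith [ht.2]⟩
  have hA1 : ∀ t, 0 ≤ ckA t * g1 t := fun t => mul_nonneg (ckA_nonneg t) (gt_pos _ _).le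
  -- gate
  have gate : ∀ b, β ≤ b → b ≤ T3 → ∃ P : ℝ → ℝ, ContinuousOn P (Icc tm b) ∧
      (∀ t ∈ Ioo tm b, HasDerivAt P (ckA t * g1 t) t) ∧ 100 * (1 + t0) ≤ P b - P tm := by
    intro b hb hb3
    obtain ⟨P, hP0, hP, hP'⟩ := exists_prim (a := tm) (b := b) (by linarith) (h := fun s => ckA s * g1 s)
      (cont_A.mul cont_g1).continuousOn
    refine ⟨P, hP, hP', gate_int tm0 o1 o2 (o3.trans hb) (by linarith) (fun t => (gt_pos _ _).le) ?_ hP hP'⟩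
    intro t ht
    have := sqm t (by linarith only [o1, o2, o3, o4, o5, o6, o7, o8, o9, o10, o11, tm10, hi, hT, h10]) ht
    exact g1_on i (by linarith) (by linarith)
  have d1 : T0 - tm ≤ 1 := by nlinarith only [qT0, qm, tm10, o1, o2, o3, o4, o5, o6]
  -- reset of D
  have hD0 : |D T0 ℓ| ≤ 2 * Real.exp (-(5 * tm)) := by
    obtain ⟨P, hP, hP', hΓ⟩ := gate T0 (by linarith only [o1, o2, o3, o4, o5, o6, o7, o8, o9, o10, o11, tm10, hi, hT, h10]) (by linarith only [o1, o2, o3, o4, o5, o6, o7, o8, o9, o10, o11, tm10, hi, hT, h10])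
    have := dec_abs (a := tm) (b := T0) (by linarith only [o1, o2, o3, o4, o5, o6, o7, o8, o9, o10, o11, tm10, hi, hT, h10]) d1 (y := fun t => D t ℓ) (k := fun t => ckA t * g1 t)
      (l := Real.exp (-(5 * tm))) (Y0 := 1) ((h.cD ℓ).mono (sub le_rfl (by linarith only [o1, o2, o3, o4, o5, o6, o7, o8, o9, o10, o11, tm10, hi, hT, h10]))) hP
      (fun t ht => h.dD t (subo le_rfl (by linarith only [o1, o2, o3, o4, o5, o6, o7, o8, o9, o10, o11, tm10, hi, hT, h10]) ht) ℓ) hP' (fun t _ => hA1 t) ep.le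
      (fun t ht => by
        have hm := sqm t (by linarith only [o1, o2, o3, o4, o5, o6, o7, o8, o9, o10, o11, tm10, hi, hT, h10]) ⟨ht.1.le, ht.2.le⟩
        have := (lk t ht.1.le (by linarith only [o1, o2, o3, o4, o5, o6, o7, o8, o9, o10, o11, tm10, hi, hT, h10, ht.2])).l3 (g3_off (i - 1) (by push_cast; linarith only [qm, q0, q1, qβ, qv1, qv2, qT0, qw1, qw2, qT1, qT2, qT3, hm.1, hm.2]) (by push_cast; linarith only [qm, q0, q1, qβ, qv1, qv2, qT0, qw1, qw2, qT1, qT2, qT3, hm.1, hm.2])) ℓ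
        have h2 := e5 t ht.1.le
        rw [sub_add_cancel]
        exact this.trans h2) hΓ (h.D_le ℓ tm ⟨tm0, by linarith only [o1, o2, o3, o4, o5, o6, o7, o8, o9, o10, o11, tm10, hi, hT, h10]⟩)
    have h5 : 1 * Real.exp (-(100 * (1 + t0))) ≤ (1 + tm) * Real.exp (-(100 * (1 + t0))) :=
      mul_le_mul_of_nonneg_right (by linarith only [o1, o2, o3, o4, o5, o6, o7, o8, o9, o10, o11, tm10, hi, hT, h10]) (Real.exp_pos _).le
    linarith
  -- reset of Y
  have hYβ : ∀ k, |Y β k| ≤ 2 * Real.exp (-(5 * tm)) := by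
    intro k
    obtain ⟨P, hP, hP', hΓ⟩ := gate β le_rfl (by linarith only [o1, o2, o3, o4, o5, o6, o7, o8, o9, o10, o11, tm10, hi, hT, h10])
    have := dec_abs (a := tm) (b := β) (by linarith) (by linarith) (y := fun t => Y t k) (k := fun t => ckA t * g1 t)
      (l := Real.exp (-(5 * tm))) (Y0 := 1 + tm) ((h.cY k).mono (sub le_rfl (by linarith only [o1, o2, o3, o4, o5, o6, o7, o8, o9, o10, o11, tm10, hi, hT, h10]))) hP
      (fun t ht => h.dY t (subo le_rfl (by linarith only [o1, o2, o3, o4, o5, o6, o7, o8, o9, o10, o11, tm10, hi, hT, h10]) ht) k) hP' (fun t _ => hA1 t) ep.le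
      (fun t ht => by
        have hm := sqm t (by linarith only [o1, o2, o3, o4, o5, o6, o7, o8, o9, o10, o11, tm10, hi, hT, h10]) ⟨ht.1.le, ht.2.le⟩
        have := (lk t ht.1.le (by linarith only [o1, o2, o3, o4, o5, o6, o7, o8, o9, o10, o11, tm10, hi, hT, h10, ht.2])).l2 (g2_off (i - 1) (by push_cast; linarith only [qm, q0, q1, qβ, qv1, qv2, qT0, qw1, qw2, qT1, qT2, qT3, hm.1, hm.2]) (by push_cast; linarith only [qm, q0, q1, qβ, qv1, qv2, qT0, qw1, qw2, qT1, qT2, qT3, hm.1, hm.2])) k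
        have h2 := e5 t ht.1.le
        rw [sub_add_cancel]
        exact this.trans h2) hΓ (h.Y_abs k tm ⟨tm0, by linarith only [o1, o2, o3, o4, o5, o6, o7, o8, o9, o10, o11, tm10, hi, hT, h10]⟩)
    linarith
  -- loading of mu
  have hMv : ∀ t ∈ Icc tm T0, |ckM t - ckM tm| ≤ 4 / 10000 * (t ^ 2 - tm ^ 2) := fun t ht =>
    ckM_var (by linarith only [o1, o2, o3, o4, o5, o6, o7, o8, o9, o10, o11, tm10, hi, hT, h10]) ht.1
  have hmuβ : |mu β - ckM tm| ≤ 2 / 10000 := by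
    obtain ⟨P, hP, hP', hΓ⟩ := gate β le_rfl (by linarith only [o1, o2, o3, o4, o5, o6, o7, o8, o9, o10, o11, tm10, hi, hT, h10])
    have hm0 := h.mu_nonneg tm ⟨tm0, by linarith only [o1, o2, o3, o4, o5, o6, o7, o8, o9, o10, o11, tm10, hi, hT, h10]⟩
    have hm1 := h.mu_le tm ⟨tm0, by linarith only [o1, o2, o3, o4, o5, o6, o7, o8, o9, o10, o11, tm10, hi, hT, h10]⟩
    have hc0 := ckM_nonneg tm
    have hc1 := ckM_le_t tm0
    have hMv' : ∀ t ∈ Ioo tm β, |ckM t - ckM tm| ≤ 1 / 10000 := fun t ht => by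
      have hm := sqm t (by linarith only [o1, o2, o3, o4, o5, o6, o7, o8, o9, o10, o11, tm10, hi, hT, h10]) ⟨ht.1.le, ht.2.le⟩
      have := hMv t ⟨ht.1.le, by linarith only [o1, o2, o3, o4, o5, o6, o7, o8, o9, o10, o11, tm10, hi, hT, h10, ht.2]⟩
      linarith
    have a1 := dec_le (a := tm) (b := β) (by linarith) (by linarith) (y := fun t => mu t - (ckM tm + 1 / 10000))
      (k := fun t => ckA t * g1 t) (l := 0) (Y0 := 1 + tm)
      ((h.cmu.mono (sub le_rfl (by linarith only [o1, o2, o3, o4, o5, o6, o7, o8, o9, o10, o11, tm10, hi, hT, h10]))).sub continuousOn_const) hP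
      (fun t ht => (h.dmu t (subo le_rfl (by linarith only [o1, o2, o3, o4, o5, o6, o7, o8, o9, o10, o11, tm10, hi, hT, h10]) ht)).sub_const _) hP' (fun t _ => hA1 t) le_rfl
      (fun t ht => by
        have := mul_nonneg (hA1 t) (show 0 ≤ 1 / 10000 - (ckM t - ckM tm) by linarith only [(abs_le.1 (hMv' t ht)).2])
        linarith only [this]) hΓ (by linarith) (by linarith)
    have a2 := dec_le (a := tm) (b := β) (by linarith) (by linarith) (y := fun t => -(mu t - (ckM tm - 1 / 10000)))
      (k := fun t => ckA t * g1 t) (l := 0) (Y0 := 1 + tm)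
      ((h.cmu.mono (sub le_rfl (by linarith only [o1, o2, o3, o4, o5, o6, o7, o8, o9, o10, o11, tm10, hi, hT, h10]))).sub continuousOn_const).neg hP
      (fun t ht => ((h.dmu t (subo le_rfl (by linarith only [o1, o2, o3, o4, o5, o6, o7, o8, o9, o10, o11, tm10, hi, hT, h10]) ht)).sub_const _).neg) hP' (fun t _ => hA1 t) le_rfl
      (fun t ht => by
        have := mul_nonneg (hA1 t) (show 0 ≤ 1 / 10000 + (ckM t - ckM tm) by linarith only [(abs_le.1 (hMv' t ht)).1])
        linarith only [this]) hΓ (by linarith) (by linarith)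
    rw [abs_le]; constructor <;> linarith
  have hMT0 := abs_le.1 (hMv T0 ⟨by linarith only [o1, o2, o3, o4, o5, o6, o7, o8, o9, o10, o11, tm10, hi, hT, h10], le_rfl⟩)
  have hmuβ' := abs_le.1 hmuβ
  set ms := mu β with hms
  have hmsM : |ms - ckM T0| ≤ 4 / 10000 := by
    rw [abs_le]; constructor <;> linarith
  have hmsM' := abs_le.1 hmsM
  have hms0 : 0 ≤ ms := h.mu_nonneg β ⟨by linarith only [o1, o2, o3, o4, o5, o6, o7, o8, o9, o10, o11, tm10, hi, hT, h10], by linarith only [o1, o2, o3, o4, o5, o6, o7, o8, o9, o10, o11, tm10, hi, hT, h10]⟩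
  have hmsK : ms ≤ K := by linarith
  -- mu is frozen
  have hfr : ∀ t ∈ Icc β T2, |mu t - ms| ≤ Real.exp (-(5 * tm)) := by
    intro t ht
    have hbd : ∀ s ∈ Ioo β t, |ckA s * g1 s * (ckM s - mu s)| ≤ Real.exp (-(5 * tm)) := fun s hs => by
      have hm := sqm s (by linarith only [o1, o2, o3, o4, o5, o6, o7, o8, o9, o10, o11, tm10, hi, hT, h10]) ⟨hs.1.le, hs.2.le.trans ht.2⟩
      have := (lk s (by linarith only [o1, o2, o3, o4, o5, o6, o7, o8, o9, o10, o11, tm10, hi, hT, h10, hs.1]) (by linarith only [o1, o2, o3, o4, o5, o6, o7, o8, o9, o10, o11, tm10, hi, hT, h10, hs.2, ht.2])).lm (g1_off i (by linarith only [qm, q0, q1, qβ, qv1, qv2, qT0, qw1, qw2, qT1, qT2, qT3, hm.1, hm.2]) (by linarith only [qm, q0, q1, qβ, qv1, qv2, qT0, qw1, qw2, qT1, qT2, qT3, hm.1, hm.2]))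
      exact this.trans (e5 s (by linarith only [o1, o2, o3, o4, o5, o6, o7, o8, o9, o10, o11, tm10, hi, hT, h10, hs.1]))
    have a1 := incr_le ht.1 (y := mu) (z := fun t => Real.exp (-(5 * tm)) * t)
      (h.cmu.mono (sub (by linarith only [o1, o2, o3, o4, o5, o6, o7, o8, o9, o10, o11, tm10, hi, hT, h10]) (by linarith only [o1, o2, o3, o4, o5, o6, o7, o8, o9, o10, o11, tm10, hi, hT, h10, ht.2]))) (by fun_prop)
      (fun s hs => h.dmu s (subo (by linarith only [o1, o2, o3, o4, o5, o6, o7, o8, o9, o10, o11, tm10, hi, hT, h10]) (by linarith only [o1, o2, o3, o4, o5, o6, o7, o8, o9, o10, o11, tm10, hi, hT, h10, ht.2]) hs))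
      (fun s _ => (hasDerivAt_id' s).const_mul _) (fun s hs => by linarith only [o1, o2, o3, o4, o5, o6, o7, o8, o9, o10, o11, tm10, hi, hT, h10, (abs_le.1 (hbd s hs)).2])
    have a2 := incr_le ht.1 (y := fun t => - mu t) (z := fun t => Real.exp (-(5 * tm)) * t)
      (h.cmu.mono (sub (by linarith only [o1, o2, o3, o4, o5, o6, o7, o8, o9, o10, o11, tm10, hi, hT, h10]) (by linarith only [o1, o2, o3, o4, o5, o6, o7, o8, o9, o10, o11, tm10, hi, hT, h10, ht.2]))).neg (by fun_prop)
      (fun s hs => (h.dmu s (subo (by linarith only [o1, o2, o3, o4, o5, o6, o7, o8, o9, o10, o11, tm10, hi, hT, h10]) (by linarith only [o1, o2, o3, o4, o5, o6, o7, o8, o9, o10, o11, tm10, hi, hT, h10, ht.2]) hs)).neg)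
      (fun s _ => (hasDerivAt_id' s).const_mul _) (fun s hs => by linarith only [o1, o2, o3, o4, o5, o6, o7, o8, o9, o10, o11, tm10, hi, hT, h10, (abs_le.1 (hbd s hs)).1])
    have : t - β ≤ 1 := by nlinarith only [ht.1, ht.2, qβ, qT2, tm10, o1, o2, o3]
    have h5 := mul_le_mul_of_nonneg_left this ep.le
    rw [abs_le]; constructor <;> linarith only [h5, a1, a2]
  -- simulation
  obtain ⟨y, Ω0, hΩ0, hy0, hyd, hyB, hyf, hrt⟩ := c.hsol ms hms0 hmsK
  have hξ2 : 2 * Real.exp (-(5 * tm)) ≤ ξ := by linarith [k.hξ]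
  have hfrξ : ∀ t ∈ Icc β T2, |mu t - ms| ≤ ξ := fun t ht => (hfr t ht).trans (by linarith)
  have hXξ : ∀ t ∈ Icc β T2, ∀ j, |X t j - xb j| ≤ ξ := fun t ht =>
    k.hX t (by linarith only [o1, o2, o3, o4, o5, o6, o7, o8, o9, o10, o11, tm10, hi, hT, h10, ht.1]) (by linarith only [o1, o2, o3, o4, o5, o6, o7, o8, o9, o10, o11, tm10, hi, hT, h10, ht.2])
  have hLqξ : ξ ≤ Lq * ξ := by nlinarith only [c.hLq1, c.hξ]
  have hexp1 : 1 ≤ Real.exp (Tmax * Lp) := Real.one_le_exp (by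
    have := c.hT1
    have := c.hLp1
    positivity)
  have hξ0 := c.hξ
  have hK0 : 0 ≤ K := hms0.trans hmsK
  have hKe : Real.exp (-K) ≤ 1 := Real.exp_le_one_iff.2 (by linarith)
  have hLqp : 0 < Lq * ξ := mul_pos (by linarith only [o1, o2, o3, o4, o5, o6, o7, o8, o9, o10, o11, tm10, hi, hT, h10, c.hLq1]) hξ0
  have hE2 : 0 < Lq * ξ * Real.exp (Tmax * Lp) := mul_pos hLqp (Real.exp_pos _)
  have hE3 : Lq * ξ ≤ Lq * ξ * Real.exp (Tmax * Lp) := le_mul_of_one_le_right hLqp.le hexp1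
  have hsim := h.sim (xb := xb) (β := β) (ω := T2) (w1 := v1) (w2 := v2) (ms := ms) (B := B) (Tmax := Tmax)
    (Tmin := 128 * Ω0) (Lp := Lp) (κ := Lq * ξ) (ρ := 4 * (Lq * ξ) * Real.exp (Tmax * Lp)) (y := y)
    (by linarith) o4 o5 (by linarith) (by linarith) (by linarith) (by linarith)
    (fun t ht => by
      have := sqm t (by linarith only [o1, o2, o3, o4, o5, o6, o7, o8, o9, o10, o11, tm10, hi, hT, h10]) ht
      exact g2_on i (by linarith) (by linarith))
    hy0 hyd c.hB0 hyB c.hLp1 c.hT1 c.hLp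
    (fun t ht => c.hLq ms hms0 hmsK _ _ (hXξ t ht) (hfrξ t ht)) (by linarith)
    (fun t ht => hrt _ _ (hXξ t ht) (hfrξ t ht))
    (fun j => (hYβ j).trans (by linarith))
    (fun t ht j => by
      have hm := sqm t (by linarith only [o1, o2, o3, o4, o5, o6, o7, o8, o9, o10, o11, tm10, hi, hT, h10]) ht
      have := (lk t (by linarith only [o1, o2, o3, o4, o5, o6, o7, o8, o9, o10, o11, tm10, hi, hT, h10, ht.1]) (by linarith only [o1, o2, o3, o4, o5, o6, o7, o8, o9, o10, o11, tm10, hi, hT, h10, ht.2])).lY (g1_off i (by linarith only [qm, q0, q1, qβ, qv1, qv2, qT0, qw1, qw2, qT1, qT2, qT3, hm.1, hm.2]) (by linarith only [qm, q0, q1, qβ, qv1, qv2, qT0, qw1, qw2, qT1, qT2, qT3, hm.1, hm.2])) j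
      have := e5 t (by linarith only [o1, o2, o3, o4, o5, o6, o7, o8, o9, o10, o11, tm10, hi, hT, h10, ht.1])
      linarith)
    hLqp.le (by linarith only [c.hκ, hE3, hKe, hLqp]) le_rfl (by linarith only [c.hκ, hE2, hKe])
    (by
      have := k.hB
      have h2 : H ^ 2 ≤ β ^ 2 := by
        have : H ≤ β := by linarith only [o1, o2, o3, o4, o5, o6, o7, o8, o9, o10, o11, tm10, hi, hT, h10]
        gcongr
      linarith)
    (by rw [← hy0]; exact hyB 0 le_rfl (by linarith only [o1, o2, o3, o4, o5, o6, o7, o8, o9, o10, o11, tm10, hi, hT, h10, c.hT1]))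
  have hmse : Real.exp (-ms) ≤ 1.001 * cku T0 := by
    have e : Real.exp (-ms) = cku T0 * Real.exp (-(ms - ckM T0)) := by
      rw [cku_eq, ← Real.exp_add]; congr 1; ring
    have h2 := Real.abs_exp_sub_one_le (x := -(ms - ckM T0)) (by rw [abs_neg]; linarith)
    rw [abs_neg] at h2
    have h3 := (abs_le.1 h2).2
    rw [e]
    nlinarith only [cku_pos T0, h3, hmsM, h2]
  have hKu : Real.exp (-K) ≤ cku T0 := by
    rw [cku_eq]; exact Real.exp_le_exp.2 (by linarith)
  have hu := cku_ge_exp (t := T0) (by linarith only [o1, o2, o3, o4, o5, o6, o7, o8, o9, o10, o11, tm10, hi, hT, h10])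
  have hu2 : Real.exp (-(2 + tm)) ≤ Real.exp (-(1 + T0)) := Real.exp_le_exp.2 (by linarith)
  exact
  { h0 := by linarith only [o1, o2, o3, o4, o5, o6, o7, o8, o9, o10, o11, tm10, hi, hT, h10]
    h01 := o7
    hw := o8
    hw1 := o9
    h12 := o10
    h23 := o11
    ww := by linarith
    s01 := by linarith
    s12 := by linarith
    s23 := by linarith
    cD := (h.cD ℓ).mono (sub (by linarith only [o1, o2, o3, o4, o5, o6, o7, o8, o9, o10, o11, tm10, hi, hT, h10]) le_rfl)
    cG := (h.cG ℓ).mono (sub (by linarith only [o1, o2, o3, o4, o5, o6, o7, o8, o9, o10, o11, tm10, hi, hT, h10]) le_rfl)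
    cZ := (h.cZ _).mono (sub (by linarith only [o1, o2, o3, o4, o5, o6, o7, o8, o9, o10, o11, tm10, hi, hT, h10]) le_rfl)
    dD := fun t ht => h.dD t (subo (by linarith only [o1, o2, o3, o4, o5, o6, o7, o8, o9, o10, o11, tm10, hi, hT, h10]) le_rfl ht) ℓ
    dG := fun t ht => h.dG t (subo (by linarith only [o1, o2, o3, o4, o5, o6, o7, o8, o9, o10, o11, tm10, hi, hT, h10]) le_rfl ht) ℓ
    D1 := fun t ht => h.D_le ℓ t (sub (by linarith only [o1, o2, o3, o4, o5, o6, o7, o8, o9, o10, o11, tm10, hi, hT, h10]) le_rfl ht)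
    G1 := fun t ht => h.G_le ℓ t (sub (by linarith only [o1, o2, o3, o4, o5, o6, o7, o8, o9, o10, o11, tm10, hi, hT, h10]) le_rfl ht)
    fb := by linarith only [o1, o2, o3, o4, o5, o6, o7, o8, o9, o10, o11, tm10, hi, hT, h10, k.hf ℓ]
    Zf := fun t ht => by
      obtain ⟨s, hs, hZ⟩ := hsim t ⟨by linarith only [o1, o2, o3, o4, o5, o6, o7, o8, o9, o10, o11, tm10, hi, hT, h10, ht.1], ht.2⟩
      have h1 := abs_le.1 (hZ (Fin.castLE Δ.hd ℓ))
      have h2 := abs_le.1 (hyf s (by linarith) ℓ)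
      have h3 := c.hκ
      have h4 : Lq * ξ ≤ Lq * ξ * Real.exp (Tmax * Lp) := le_mul_of_one_le_right hLqp.le hexp1
      have h5 := cku_pos T0
      rw [abs_le]; constructor <;> linarith
    D0 := by linarith
    on3 := fun t ht => by
      have hm := sqm t (by linarith only [o1, o2, o3, o4, o5, o6, o7, o8, o9, o10, o11, tm10, hi, hT, h10]) ht
      exact g3_on i (by linarith only [qm, q0, q1, qβ, qv1, qv2, qT0, qw1, qw2, qT1, qT2, qT3, hm.1, hm.2]) (by linarith only [qm, q0, q1, qβ, qv1, qv2, qT0, qw1, qw2, qT1, qT2, qT3, hm.1, hm.2])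
    lk1 := fun t ht => by
      have hm := sqm t (by linarith only [o1, o2, o3, o4, o5, o6, o7, o8, o9, o10, o11, tm10, hi, hT, h10]) ht
      have := (lk t (by linarith only [o1, o2, o3, o4, o5, o6, o7, o8, o9, o10, o11, tm10, hi, hT, h10, ht.1]) (by linarith only [o1, o2, o3, o4, o5, o6, o7, o8, o9, o10, o11, tm10, hi, hT, h10, ht.2])).l1 (g1_off i (by linarith only [qm, q0, q1, qβ, qv1, qv2, qT0, qw1, qw2, qT1, qT2, qT3, hm.1, hm.2]) (by linarith only [qm, q0, q1, qβ, qv1, qv2, qT0, qw1, qw2, qT1, qT2, qT3, hm.1, hm.2]))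
      have := e5 t (by linarith only [o1, o2, o3, o4, o5, o6, o7, o8, o9, o10, o11, tm10, hi, hT, h10, ht.1])
      linarith
    lk3 := fun t ht => by
      have hm := sqm t (by linarith only [o1, o2, o3, o4, o5, o6, o7, o8, o9, o10, o11, tm10, hi, hT, h10]) ht
      have := (lk t (by linarith only [o1, o2, o3, o4, o5, o6, o7, o8, o9, o10, o11, tm10, hi, hT, h10, ht.1]) (by linarith only [o1, o2, o3, o4, o5, o6, o7, o8, o9, o10, o11, tm10, hi, hT, h10, ht.2])).l3 (g3_off i (by linarith only [qm, q0, q1, qβ, qv1, qv2, qT0, qw1, qw2, qT1, qT2, qT3, hm.1, hm.2]) (by linarith only [qm, q0, q1, qβ, qv1, qv2, qT0, qw1, qw2, qT1, qT2, qT3, hm.1, hm.2])) ℓ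
      have := e5 t (by linarith only [o1, o2, o3, o4, o5, o6, o7, o8, o9, o10, o11, tm10, hi, hT, h10, ht.1])
      linarith }

end

section
open Set Filter Topology Metric
variable {m n d : ℕ}
variable {Δ : Dat m n d} {x : ℝ → Fin n → ℝ} {T : ℝ} {F G D : ℝ → Fin m → ℝ}
    {Y : ℝ → Fin d → ℝ} {X : ℝ → Fin n → ℝ} {mu : ℝ → ℝ}
    {xb : Fin n → ℝ} {fb : Fin m → ℝ} {K B Tmax Lp Lq ξ H : ℝ}

/-- the error sequence -/
lemma seq_conv {e U : ℕ → ℝ} {s N : ℕ} (hsN : s ≤ N) (hU : ∀ k, 0 < U k)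
    (hU1 : ∀ k < N, 0.999 * U k ≤ U (k + 1)) (hU2 : ∀ k < s, 1 / 2 ≤ U k)
    (he : ∀ k < N, e (k + 1) ≤ max (9.1 * U k) (e k - 0.02 * U k)) (h0 : e 0 ≤ 0.01 * s) :
    e N ≤ 10 * U N := by
  have st : ∀ k < N, e k ≤ 10 * U k → e (k + 1) ≤ 10 * U (k + 1) := by
    intro k hk h
    have h1 := hU1 k hk
    have h2 := hU k
    rcases le_max_iff.1 (he k hk) with h3 | h3 <;> linarith
  have p1 : ∀ k ≤ s, e k ≤ 10 * U k ∨ e k ≤ 0.01 * s - 0.01 * k := by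
    intro k
    induction k with
    | zero => intro _; right; simpa using h0
    | succ k ih =>
      intro hk
      rcases ih (by omega) with h | h
      · left; exact st k (by omega) h
      · have h1 := hU1 k (by omega)
        have h2 := hU2 k (by omega)
        push_cast
        rcases le_max_iff.1 (he k (by omega)) with h3 | h3
        · left; linarith
        · right; linarith
  have p2 : e s ≤ 10 * U s := by
    rcases p1 s le_rfl with h | h
    · exact h
    · linarith [hU s]
  have p3 : ∀ k, s + k ≤ N → e (s + k) ≤ 10 * U (s + k) := by
    intro k
    induction k with
    | zero => intro _; exact p2
    | succ k ih => intro hk; exact st (s + k) (by omega) (ih (by omega))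
  have := p3 (N - s) (by omega)
  rwa [show s + (N - s) = N by omega] at this

lemma Sol.G_near (h : Sol Δ x T F G D Y X mu) (c : Ctx Δ xb fb K B Tmax Lp Lq ξ)
    (k : Trk Δ xb fb B ξ H T F G D Y X mu) (j : ℤ) (k1 : ℕ) (hj : H ≤ j - 1 / 2)
    (hj1 : 4 * ((k1 : ℝ) + 1) ≤ j) (hj2 : 1000 ≤ (j : ℝ)) (hT : (j : ℝ) + 1 / 8 < T) (hK : 2 + (k1 : ℝ) / 1000 ≤ K)
    (ℓ : Fin m) :
    |G (√((j : ℝ) ^ 2 + k1 + 3 / 8)) ℓ - fb ℓ| ≤ 10 * cku (√((j : ℝ) ^ 2 + k1 + 3 / 8)) := by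
  set s : ℕ := (j / 4).toNat with hs
  have hs1 : ((s : ℤ) : ℝ) ≤ j / 4 ∧ (j : ℝ) / 4 - 1 ≤ ((s : ℤ) : ℝ) := by
    have hj0 : (0 : ℤ) ≤ j := by have : (0 : ℝ) ≤ j := by linarith
                                 exact_mod_cast this
    have a1 : (4 * (s : ℤ)) ≤ j := by omega
    have a2 : j ≤ 4 * (s : ℤ) + 4 := by omega
    have a1' : (4 * ((s : ℤ) : ℝ)) ≤ j := by exact_mod_cast a1
    have a2' : (j : ℝ) ≤ 4 * ((s : ℤ) : ℝ) + 4 := by exact_mod_cast a2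
    constructor <;> linarith
  rw [Int.cast_natCast] at hs1
  obtain ⟨hs1, hs2⟩ := hs1
  have hH10 := k.h10
  have hk0 : (0 : ℝ) ≤ k1 := Nat.cast_nonneg _
  -- time points
  set τ : ℕ → ℝ := fun k => √((j : ℝ) ^ 2 - s + k + 3 / 8) with hτ
  have hpos : ∀ k : ℕ, ((j : ℝ) - 1 / 2) ^ 2 ≤ (j : ℝ) ^ 2 - s + k - 1 / 8 := fun k => by
    have : (0 : ℝ) ≤ k := Nat.cast_nonneg _
    nlinarith
  have hlow : ∀ k : ℕ, (j : ℝ) - 1 / 2 ≤ √((j : ℝ) ^ 2 - s + k - 1 / 8) := fun k =>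
    Real.le_sqrt_of_sq_le (hpos k)
  have hlowτ : ∀ k : ℕ, (j : ℝ) - 1 / 2 ≤ τ k := fun k =>
    (hlow k).trans (Real.sqrt_le_sqrt (by linarith))
  have hτsq : ∀ k, τ k ^ 2 = (j : ℝ) ^ 2 - s + k + 3 / 8 := fun k =>
    Real.sq_sqrt (by have := hpos k; nlinarith [sq_nonneg ((j : ℝ) - 1 / 2)])
  have hτm : ∀ k, τ k ≤ τ (k + 1) := fun k => Real.sqrt_le_sqrt (by push_cast; linarith)
  have hτhi : ∀ k ≤ s + k1, τ k ≤ j + 1 / 8 := fun k hk => by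
    apply Real.sqrt_le_iff.2 ⟨by linarith, ?_⟩
    have : (k : ℝ) ≤ s + k1 := by exact_mod_cast hk
    nlinarith
  have amp : ∀ k < s + k1, |G (τ (k + 1)) ℓ - fb ℓ| ≤
      max (9.1 * cku (τ k)) (|G (τ k) ℓ - fb ℓ| - 0.02 * cku (τ k)) := by
    intro κ hκ
    have hκ' : (κ : ℝ) + 1 ≤ s + k1 := by exact_mod_cast hκ
    have ec : (((j ^ 2 - s + κ : ℤ)) : ℝ) = (j : ℝ) ^ 2 - s + κ := by push_cast; ring
    have e1 : √((((j ^ 2 - s + κ : ℤ)) : ℝ) + 3 / 8) = τ κ := by rw [ec]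
    have e2 : √((((j ^ 2 - s + κ : ℤ)) : ℝ) + 11 / 8) = τ (κ + 1) := by
      rw [ec]; simp only [hτ]; push_cast; congr 1; ring
    have hM : ckM (τ κ) + 1 / 1000 ≤ K := by
      have hk0 : (0 : ℝ) ≤ k1 := Nat.cast_nonneg _
      rcases le_total (τ κ) j with h1 | h1
      · have := ckM_le (τ κ) le_rfl (ckL_nonpos j (by linarith [hlowτ κ]) (hlowτ κ) h1)
        have : 0 ≤ (k1 : ℝ) / 1000 := by positivity
        linarith
      · have h2 := ckL_le j (by linarith) h1
        rw [hτsq] at h2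
        have := ckM_le (τ κ) (B := ((k1 : ℝ) + 1) / 1000) (by positivity) (by linarith)
        linarith
    have := (h.amp c k (j ^ 2 - s + κ) (by rw [ec]; exact hj.trans (hlow κ))
      (by rw [e2]; exact (hτhi _ (by omega)).trans_lt hT) (by rw [e1]; exact hM) ℓ).final
    rw [e1, e2] at this
    exact this
  have hfin := seq_conv (e := fun k => |G (τ k) ℓ - fb ℓ|) (U := fun k => cku (τ k)) (s := s) (N := s + k1)
    (by omega) (fun k => cku_pos _)
    (fun k hk => (cku_near (by linarith [hlowτ k]) (hτm k) (by
      rw [hτsq, hτsq]; push_cast; linarith)).1)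
    (fun k hk => by
      have hk' : (k : ℝ) + 1 ≤ s := by exact_mod_cast hk
      refine cku_ge_half (ckL_nonpos j (by linarith [hlowτ k]) (hlowτ k) ?_)
      exact Real.sqrt_le_iff.2 ⟨by linarith, by linarith⟩)
    amp (by
      have h1 := h.G_le ℓ (τ 0) ⟨by linarith [hlowτ 0], by linarith [hτhi 0 (by omega)]⟩
      have h2 := k.hf ℓ
      have h3 := hτhi 0 (by omega)
      have h4 := abs_sub (G (τ 0) ℓ) (fb ℓ)
      linarith)
  have e3 : τ (s + k1) = √((j : ℝ) ^ 2 + k1 + 3 / 8) := by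
    simp only [hτ]; push_cast; congr 1; ring
  rw [← e3]
  exact hfin

lemma Sol.G_good (h : Sol Δ x T F G D Y X mu) (c : Ctx Δ xb fb K B Tmax Lp Lq ξ)
    (k : Trk Δ xb fb B ξ H T F G D Y X mu) (j : ℤ) (k1 : ℕ) (hj : H ≤ j - 1 / 2)
    (hj1 : 4 * ((k1 : ℝ) + 1) ≤ j) (hj2 : 1000 ≤ (j : ℝ)) (hK : 2 + (k1 : ℝ) / 1000 ≤ K)
    (ℓ : Fin m) {t : ℝ} (ht : (j : ℝ) + 1 / 8 < t) (ht1 : t ≤ j + 3 / 8) (htT : t ≤ T) :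
    |G t ℓ - fb ℓ| ≤ 20010 * Real.exp (-((k1 : ℝ) / 20000)) := by
  have hn := h.G_near c k j k1 hj hj1 hj2 (by linarith) hK ℓ
  have hk0 : (0 : ℝ) ≤ k1 := Nat.cast_nonneg _
  set τ := √((j : ℝ) ^ 2 + k1 + 3 / 8) with hτ
  have hτsq : τ ^ 2 = (j : ℝ) ^ 2 + k1 + 3 / 8 := Real.sq_sqrt (by positivity)
  have hτlo : (j : ℝ) ≤ τ := Real.le_sqrt_of_sq_le (by linarith)
  have hτhi : τ ≤ j + 1 / 8 := Real.sqrt_le_iff.2 ⟨by linarith, by nlinarith⟩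
  have hub : ∀ s, τ ≤ s → s ≤ t → cku s ≤ Real.exp (-((s ^ 2 - j ^ 2) / 20000)) := fun s h1 h2 => by
    refine (cku_le_exp s).trans (Real.exp_le_exp.2 ?_)
    linarith [ckL_ge (t := s) j (by linarith) (by linarith) (by linarith)]
  have hbd : ∀ s ∈ Ioo τ t, |cku s * (s * D s ℓ - 2000 * G s ℓ)| ≤
      2 * s * Real.exp (-((s ^ 2 - j ^ 2) / 20000)) := by
    intro s hs
    have hs0 : 0 ≤ s := by linarith [hs.1]
    have hsI : s ∈ Icc 0 T := ⟨hs0, by linarith [hs.2]⟩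
    have h1 := abs_le.1 (h.D_le ℓ s hsI)
    have h2 := abs_le.1 (h.G_le ℓ s hsI)
    have h3 : |s * D s ℓ - 2000 * G s ℓ| ≤ 2 * s := by
      rw [abs_le]; constructor <;> nlinarith
    rw [abs_mul, abs_of_pos (cku_pos s), mul_comm]
    exact mul_le_mul h3 (hub s hs.1.le hs.2.le) (cku_pos s).le (by linarith)
  have dz : ∀ s : ℝ, HasDerivAt (fun s : ℝ => -20000 * Real.exp (-((s ^ 2 - (j : ℝ) ^ 2) / 20000)))
      (2 * s * Real.exp (-((s ^ 2 - j ^ 2) / 20000))) s := fun s =>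
    ((((((sq_deriv s).sub_const _).div_const 20000).neg).exp).const_mul (-20000)).congr_deriv (by simp only [Pi.neg_apply]; ring)
  have subc : Icc τ t ⊆ Icc 0 T := Icc_subset_Icc (by linarith) htT
  have subo : ∀ s ∈ Ioo τ t, s ∈ Ioo 0 T := fun s hs => ⟨by linarith [hs.1], by linarith [hs.2]⟩
  have a1 := incr_le (a := τ) (b := t) (by linarith) ((h.cG ℓ).mono subc)
    (fun s _ => (dz s).continuousAt.continuousWithinAt) (fun s hs => h.dG s (subo s hs) ℓ) (fun s _ => dz s)
    (fun s hs => (le_abs_self _).trans (hbd s hs))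
  have a2 := incr_le (a := τ) (b := t) (by linarith) ((h.cG ℓ).mono subc).neg
    (fun s _ => (dz s).continuousAt.continuousWithinAt) (fun s hs => (h.dG s (subo s hs) ℓ).neg) (fun s _ => dz s)
    (fun s hs => (neg_le_abs _).trans (hbd s hs))
  have hu := hub τ le_rfl (by linarith)
  have e1 : Real.exp (-((τ ^ 2 - j ^ 2) / 20000)) ≤ Real.exp (-((k1 : ℝ) / 20000)) :=
    Real.exp_le_exp.2 (by rw [hτsq]; linarith)
  have e2 := Real.exp_pos (-((t ^ 2 - (j : ℝ) ^ 2) / 20000))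
  have hn' := abs_le.1 hn
  simp only [Pi.neg_apply] at a2
  rw [abs_le]; constructor <;> linarith

lemma exp12 : (80040 : ℝ) ≤ Real.exp 12 := by
  have h := Real.exp_one_gt_d9
  have : Real.exp 12 = Real.exp 1 ^ 12 := by rw [← Real.exp_nat_mul]; norm_num
  rw [this]
  calc (80040 : ℝ) ≤ 2.7 ^ 12 := by norm_num
    _ ≤ _ := by gcongr; linarith

lemma Sol.F_good (h : Sol Δ x T F G D Y X mu) (c : Ctx Δ xb fb K B Tmax Lp Lq ξ)
    (k : Trk Δ xb fb B ξ H T F G D Y X mu) {μ u : ℝ} (hμ : 0 ≤ μ) (hH : 80000 * (μ + 13) ≤ H)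
    (hK : 243 + 20 * μ ≤ K) (hu : H + 2 ≤ u) (huT : u ≤ T) (ℓ : Fin m) :
    |F u ℓ - fb ℓ| ≤ Real.exp (-μ) := by
  set j : ℤ := ⌊u - 3 / 8⌋ with hj
  have hj1 : (j : ℝ) ≤ u - 3 / 8 := Int.floor_le _
  have hj2 : u - 3 / 8 < j + 1 := Int.lt_floor_add_one _
  set k1 : ℕ := ⌈20000 * (μ + 12)⌉₊ with hk1
  have hk1a : 20000 * (μ + 12) ≤ (k1 : ℝ) := Nat.le_ceil _
  have hk1b : (k1 : ℝ) < 20000 * (μ + 12) + 1 := Nat.ceil_lt_add_one (by linarith)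
  set η := Real.exp (-μ) / 4 with hη
  have hη0 : 0 < η := by positivity
  have hηk : 20010 * Real.exp (-((k1 : ℝ) / 20000)) ≤ η := by
    have h1 : Real.exp (-((k1 : ℝ) / 20000)) ≤ Real.exp (-μ) * (Real.exp 12)⁻¹ := by
      rw [← Real.exp_neg, ← Real.exp_add]
      exact Real.exp_le_exp.2 (by linarith)
    have h2 : (Real.exp 12)⁻¹ ≤ 80040⁻¹ := inv_anti₀ (by norm_num) exp12
    have h3 := Real.exp_pos (-μ)
    have h4 : Real.exp (-μ) * (Real.exp 12)⁻¹ ≤ Real.exp (-μ) * 80040⁻¹ := by gcongr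
    rw [hη]; linarith
  have hG1 : ∀ t, (j : ℝ) + 1 / 8 < t → t ≤ j + 3 / 8 → |G t ℓ - fb ℓ| ≤ η := fun t h1 h2 =>
    (h.G_good c k j k1 (by linarith) (by linarith) (by linarith) (by linarith) ℓ h1 h2 (by linarith)).trans hηk
  have hG2 : ∀ t, (j : ℝ) + 9 / 8 < t → t ≤ u → |G t ℓ - fb ℓ| ≤ η := fun t h1 h2 =>
    (h.G_good c k (j + 1) k1 (by push_cast; linarith) (by push_cast; linarith) (by push_cast; linarith)
      (by linarith) ℓ (by push_cast; linarith) (by push_cast; linarith) (by linarith)).trans hηk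
  have hAF : ∀ t, 0 ≤ ckA t * gF t := fun t => mul_nonneg (ckA_nonneg t) (gt_pos _ _).le
  -- active phase, general form
  have act : ∀ a b Γ Y0 : ℝ, 0 ≤ a → a ≤ b → b ≤ T → b - a ≤ 1 → 0 ≤ Y0 →
      (∀ t ∈ Ioo a b, |G t ℓ - fb ℓ| ≤ η) → |F a ℓ - fb ℓ| ≤ η + Y0 →
      (∀ P : ℝ → ℝ, ContinuousOn P (Icc a b) → (∀ t ∈ Ioo a b, HasDerivAt P (ckA t * gF t) t) → Γ ≤ P b - P a) →
      |F b ℓ - fb ℓ| ≤ η + Y0 * Real.exp (-Γ) := by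
    intro a b Γ Y0 ha hab hbT hab1 hY0 hG hFa hΓ
    obtain ⟨P, hP0, hP, hP'⟩ := exists_prim hab (h := fun s => ckA s * gF s)
      (cont_A.mul cont_gF).continuousOn
    have subc : Icc a b ⊆ Icc 0 T := Icc_subset_Icc ha hbT
    have subo : ∀ s ∈ Ioo a b, s ∈ Ioo 0 T := fun s hs => ⟨by linarith [hs.1], by linarith [hs.2]⟩
    have hFa' := abs_le.1 hFa
    have a1 := dec_le hab hab1 (y := fun t => F t ℓ - (fb ℓ + η)) (k := fun t => ckA t * gF t) (l := 0) (Y0 := Y0)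
      (((h.cF ℓ).mono subc).sub continuousOn_const) hP
      (fun t ht => (h.dF t (subo t ht) ℓ).sub_const _) hP' (fun t _ => hAF t) le_rfl
      (fun t ht => by
        have := mul_nonneg (hAF t) (show 0 ≤ η - (G t ℓ - fb ℓ) by linarith only [(abs_le.1 (hG t ht)).2])
        linarith only [this]) (hΓ P hP hP') (by linarith only [hFa'.2]) hY0
    have a2 := dec_le hab hab1 (y := fun t => -(F t ℓ - (fb ℓ - η))) (k := fun t => ckA t * gF t) (l := 0) (Y0 := Y0)
      (((h.cF ℓ).mono subc).sub continuousOn_const).neg hP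
      (fun t ht => ((h.dF t (subo t ht) ℓ).sub_const _).neg) hP' (fun t _ => hAF t) le_rfl
      (fun t ht => by
        have := mul_nonneg (hAF t) (show 0 ≤ η + (G t ℓ - fb ℓ) by linarith only [(abs_le.1 (hG t ht)).1])
        linarith only [this]) (hΓ P hP hP') (by linarith only [hFa'.1]) hY0
    rw [abs_le]; constructor <;> linarith only [a1, a2]
  set E := Real.exp (-(5 * ((j : ℝ) + 1 / 8))) with hE
  have hE0 : 0 < E := Real.exp_pos _
  -- first phase
  have p1 : |F (j + 3 / 8) ℓ - fb ℓ| ≤ η + E := by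
    have h1 := act (j + 1 / 8) (j + 3 / 8) (100 * (1 + (j + 1 / 4))) (1 + (j + 1 / 8)) (by linarith) (by linarith)
      (by linarith) (by linarith) (by linarith) (fun t ht => hG1 t ht.1 ht.2.le)
      (by
        have h1 := h.F_le ℓ (j + 1 / 8) ⟨by linarith, by linarith⟩
        have h2 := k.hf ℓ
        have h3 := abs_sub (F (j + 1 / 8) ℓ) (fb ℓ)
        linarith)
      (fun P hP hP' => gate_int (by linarith) (by linarith) (w2 := j + 5 / 16) (by linarith) (by linarith)
        (by nlinarith) (fun t => (gt_pos _ _).le) (fun t ht => gF_on j ht.1 ht.2) hP hP')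
    have h2 := exp_small3 (t := j + 1 / 8) (w := j + 1 / 4) (by linarith) (by linarith)
    linarith
  -- leak phase
  have p2 : ∀ b, (j : ℝ) + 3 / 8 ≤ b → b ≤ j + 9 / 8 → b ≤ u → |F b ℓ - fb ℓ| ≤ η + 2 * E := by
    intro b hb hb1 hbu
    have subc : Icc ((j : ℝ) + 3 / 8) b ⊆ Icc 0 T := Icc_subset_Icc (by linarith) (by linarith)
    have subo : ∀ s ∈ Ioo ((j : ℝ) + 3 / 8) b, s ∈ Ioo 0 T := fun s hs => ⟨by linarith [hs.1], by linarith [hs.2]⟩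
    have hbd : ∀ s ∈ Ioo ((j : ℝ) + 3 / 8) b, |ckA s * gF s * (G s ℓ - F s ℓ)| ≤ E := fun s hs =>
      ((k.lk s (by linarith [hs.1]) (by linarith [hs.2])).lF (gF_off j hs.1.le (by linarith [hs.2])) ℓ).trans
        (Real.exp_le_exp.2 (by linarith [hs.1]))
    have a1 := incr_le hb (y := fun t => F t ℓ) (z := fun t => E * t)
      ((h.cF ℓ).mono subc) (by fun_prop)
      (fun s hs => h.dF s (subo s hs) ℓ)
      (fun s _ => (hasDerivAt_id' s).const_mul _) (fun s hs => by linarith [(abs_le.1 (hbd s hs)).2])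
    have a2 := incr_le hb (y := fun t => - F t ℓ) (z := fun t => E * t)
      ((h.cF ℓ).mono subc).neg (by fun_prop)
      (fun s hs => (h.dF s (subo s hs) ℓ).neg)
      (fun s _ => (hasDerivAt_id' s).const_mul _) (fun s hs => by linarith [(abs_le.1 (hbd s hs)).1])
    have h3 : E * (b - (j + 3 / 8)) ≤ E * 1 := mul_le_mul_of_nonneg_left (by linarith) hE0.le
    have h4 := abs_le.1 p1
    rw [abs_le]; constructor <;> linarith only [h3, h4.1, h4.2, a1, a2]
  have p3 : |F u ℓ - fb ℓ| ≤ η + 2 * E := by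
    rcases le_total u (j + 9 / 8) with hc | hc
    · exact p2 u (by linarith) hc le_rfl
    · have := act (j + 9 / 8) u 0 (2 * E) (by linarith) hc huT (by linarith) (by linarith)
        (fun t ht => hG2 t ht.1 ht.2.le) (p2 _ (by linarith) le_rfl hc)
        (fun P hP hP' => by
          have := incr_le hc (y := fun _ => (0 : ℝ)) (z := P) continuousOn_const hP
            (fun t _ => hasDerivAt_const t 0) hP' (fun t _ => hAF t)
          linarith)
      simpa using this
  have hE1 : E ≤ Real.exp (-μ) / 4 := by
    have h1 : E ≤ Real.exp (-μ) * (Real.exp 3)⁻¹ := by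
      rw [← Real.exp_neg, ← Real.exp_add]
      exact Real.exp_le_exp.2 (by linarith)
    have h2 : (Real.exp 3)⁻¹ ≤ 4⁻¹ := inv_anti₀ (by norm_num) (by linarith [Real.add_one_le_exp (3 : ℝ)])
    have h4 : Real.exp (-μ) * (Real.exp 3)⁻¹ ≤ Real.exp (-μ) * 4⁻¹ := by gcongr
    linarith
  linarith

end

section
open Set Filter Topology Metric
variable {m n d : ℕ}

lemma norm_vec2 {a b s : ℝ} (ha : 0 ≤ a) (hb : 0 ≤ b) (has : a ≤ s) (hbs : b ≤ s) : ‖(![a, b] : Fin 2 → ℝ)‖ ≤ s := by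
  rw [pi_norm_le_iff_of_nonneg (by linarith)]
  intro i
  fin_cases i
  · simpa [abs_of_nonneg ha] using has
  · simpa [abs_of_nonneg hb] using hbs
lemma norm_vec3 {a b c s : ℝ} (ha : 0 ≤ a) (hb : 0 ≤ b) (hc : 0 ≤ c) (has : a ≤ s) (hbs : b ≤ s) (hcs : c ≤ s) :
    ‖(![a, b, c] : Fin 3 → ℝ)‖ ≤ s := by
  rw [pi_norm_le_iff_of_nonneg (by linarith)]
  intro i
  fin_cases i
  · simpa [abs_of_nonneg ha] using has
  · simpa [abs_of_nonneg hb] using hbs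
  · simpa [abs_of_nonneg hc] using hcs
lemma norm_snoc {X : Fin n → ℝ} {mu s : ℝ} (hs : 0 ≤ s) (hX : ∀ i, |X i| ≤ s) (hm : |mu| ≤ s) :
    ‖(Fin.snoc (α := fun _ => ℝ) X mu : Fin (n + 1) → ℝ)‖ ≤ s := by
  rw [pi_norm_le_iff_of_nonneg hs]
  intro i
  refine Fin.lastCases ?_ (fun i => ?_) i
  · simpa using hm
  · simpa using hX i

lemma exp_small4 {t N : ℝ} (hN : 0 ≤ N) (ht : 4 * N + 20 ≤ t) :
    4 * t ^ 2 * Real.exp (-(t - 1)) ≤ Real.exp (-N) ^ 2 / 2 := by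
  have h1 := Real.add_one_le_exp (t / 4)
  have h2 : t ^ 2 ≤ 16 * Real.exp (t / 2) := by
    have e : Real.exp (t / 2) = Real.exp (t / 4) ^ 2 := by
      rw [← Real.exp_nat_mul]; congr 1; push_cast; ring
    rw [e]
    have : t ≤ 4 * Real.exp (t / 4) := by linarith
    nlinarith
  have h3 : (128 : ℝ) ≤ Real.exp 9 := by
    have h := Real.exp_one_gt_d9
    have : Real.exp 9 = Real.exp 1 ^ 9 := by rw [← Real.exp_nat_mul]; norm_num
    rw [this]
    calc (128 : ℝ) ≤ 2.7 ^ 9 := by norm_num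
      _ ≤ _ := by gcongr; linarith
  have e2 : Real.exp (-N) ^ 2 = Real.exp (-(2 * N)) := by
    rw [← Real.exp_nat_mul]; congr 1; push_cast; ring
  rw [e2]
  have h4 : Real.exp (t / 2) * Real.exp (-(t - 1)) * Real.exp 9 ≤ Real.exp (-(2 * N)) := by
    rw [← Real.exp_add, ← Real.exp_add]
    exact Real.exp_le_exp.2 (by linarith)
  have h5 : 0 < Real.exp (t / 2) * Real.exp (-(t - 1)) := by positivity
  have h6 : 4 * t ^ 2 * Real.exp (-(t - 1)) ≤ 64 * (Real.exp (t / 2) * Real.exp (-(t - 1))) := by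
    have := mul_le_mul_of_nonneg_right h2 (Real.exp_pos (-(t - 1))).le
    linarith
  nlinarith

/-- data of a weakly computing system -/
structure WData (m n d : ℕ) (dom : Set (Fin n → ℝ)) (f : (Fin n → ℝ) → (Fin m → ℝ))
    (Ω : ℝ → ℝ → ℝ) (Υ : ℝ → ℝ → ℝ → ℝ) (hd : m ≤ d) (p : Fin d → MvPolynomial (Fin d) ℝ)
    (q : Fin d → MvPolynomial (Fin (n + 1)) ℝ) : Prop where
  hΩ : ∃ P : MvPolynomial (Fin 2) ℝ, ∀ a b : ℝ, Ω a b = MvPolynomial.eval ![a, b] P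
  hΩ0 : ∀ a b : ℝ, 0 ≤ a → 0 ≤ b → 0 ≤ Ω a b
  hΥ : ∃ P : MvPolynomial (Fin 3) ℝ, ∀ a b c : ℝ, Υ a b c = MvPolynomial.eval ![a, b, c] P
  hsol : ∀ x ∈ dom, ∀ μ : ℝ, 0 ≤ μ → ∃ y : ℝ → Fin d → ℝ,
      (y 0 = fun i => MvPolynomial.eval (Fin.snoc (α := fun _ => ℝ) x μ) (q i)) ∧
      (∀ t : ℝ, 0 ≤ t → HasDerivAt y (fun i => MvPolynomial.eval (y t) (p i)) t) ∧
      (∀ t : ℝ, 0 ≤ t → Ω ‖x‖ μ ≤ t →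
        ‖(fun i : Fin m => y t (Fin.castLE hd i)) - f x‖ ≤ Real.exp (-μ)) ∧
      (∀ t : ℝ, 0 ≤ t → ‖y t‖ ≤ Υ ‖x‖ μ t)

lemma WData.ctx {dom : Set (Fin n → ℝ)} {f : (Fin n → ℝ) → (Fin m → ℝ)}
    {Ω : ℝ → ℝ → ℝ} {Υ : ℝ → ℝ → ℝ → ℝ} {hd : m ≤ d} {p : Fin d → MvPolynomial (Fin d) ℝ}
    {q : Fin d → MvPolynomial (Fin (n + 1)) ℝ} (w : WData m n d dom f Ω Υ hd p q) :
    ∃ (CT : ℝ) (rT : ℕ) (B Tm Lp Lq N : ℝ → ℝ), PB B ∧ PB N ∧ (∀ s, 1 ≤ s → 0 ≤ N s) ∧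
      ∀ xb ∈ dom, ∀ K, 0 ≤ K → ∀ s, s = 1 + ‖xb‖ + K →
        Ctx (⟨hd, p, q, CT, rT⟩ : Dat m n d) xb (f xb) K (B s) (Tm s) (Lp s) (Lq s) (Real.exp (-N s)) ∧
        ∀ i, |f xb i| ≤ B s + 1 := by
  obtain ⟨PΩ, hPΩ⟩ := w.hΩ
  obtain ⟨PΥ, hPΥ⟩ := w.hΥ
  obtain ⟨Co, hCo, ro, hgo⟩ := poly_grow_fam (fun _ : Fin 1 => PΩ)
  obtain ⟨Cu, hCu, ru, hgu⟩ := poly_grow_fam (fun _ : Fin 1 => PΥ)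
  obtain ⟨Cp, hCp, rp, hlp⟩ := poly_lip_fam p
  obtain ⟨Cq, hCq, rq, hlq⟩ := poly_lip_fam q
  set CT : ℝ := 128 * Co * 3 ^ ro with hCT
  set Tm : ℝ → ℝ := fun s => 1 + CT * (1 + n * s ^ 2 + s ^ 2) ^ ro with hTm
  set B : ℝ → ℝ := fun s => Cu * (1 + (s + Tm s)) ^ ru with hB
  set Lp : ℝ → ℝ := fun s => Cp * (1 + 2 * (B s + 2)) ^ rp with hLp
  set Lq : ℝ → ℝ := fun s => Cq * (1 + 2 * s) ^ rq with hLq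
  set N : ℝ → ℝ := fun s => Tm s * Lp s + s + Lq s + 10 with hN
  have pT : PB Tm := (PB.const 1).add ((((PB.const 1).add (PB.id.comp_pow n 2)).add (PB.id.pow 2)).comp_pow CT ro)
  have pB : PB B := ((PB.const 1).add (PB.id.add pT)).comp_pow Cu ru
  have pLp : PB Lp := ((PB.const 1).add ((PB.const 2).mul (pB.add (PB.const 2)))).comp_pow Cp rp
  have pLq : PB Lq := ((PB.const 1).add ((PB.const 2).mul PB.id)).comp_pow Cq rq
  have pN : PB N := (((pT.mul pLp).add PB.id).add pLq).add (PB.const 10)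
  have hCT0 : 0 ≤ CT := by positivity
  have T1 : ∀ s, 1 ≤ s → 1 ≤ Tm s := fun s hs => by
    have : 0 ≤ CT * (1 + n * s ^ 2 + s ^ 2) ^ ro := by positivity
    simp only [hTm]; linarith
  have B1 : ∀ s, 1 ≤ s → 1 ≤ B s := fun s hs => by
    have := T1 s hs
    exact one_le_mul_of_one_le_of_one_le hCu (one_le_pow₀ (by linarith))
  have Lp1 : ∀ s, 1 ≤ s → 1 ≤ Lp s := fun s hs => by
    have := B1 s hs
    exact one_le_mul_of_one_le_of_one_le hCp (one_le_pow₀ (by linarith))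
  have Lq1 : ∀ s, 1 ≤ s → 1 ≤ Lq s := fun s hs => 
    one_le_mul_of_one_le_of_one_le hCq (one_le_pow₀ (by linarith))
  have N0 : ∀ s, 1 ≤ s → 0 ≤ N s := fun s hs => by
    have h1 := T1 s hs
    have h2 := Lp1 s hs
    have h3 := Lq1 s hs
    simp only [hN]; positivity
  refine ⟨CT, ro, B, Tm, Lp, Lq, N, pB, pN, N0, fun xb hxb K hK s hs => ?_⟩
  have hxn := norm_nonneg xb
  have hs1 : 1 ≤ s := by linarith
  have t1 := T1 s hs1
  have b1 := B1 s hs1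
  have lp1 := Lp1 s hs1
  have lq1 := Lq1 s hs1
  have n0 := N0 s hs1
  have hxi : ∀ i, |xb i| ≤ ‖xb‖ := fun i => norm_le_pi_norm xb i
  have hξ1 : Real.exp (-N s) ≤ 1 := Real.exp_le_one_iff.2 (by linarith)
  have hξ0 := Real.exp_pos (-N s)
  -- bounds for the rate
  have hrt : ∀ ms, 0 ≤ ms → ms ≤ K → ∀ (X : Fin n → ℝ) (mu : ℝ), (∀ k, |X k - xb k| ≤ Real.exp (-N s)) →
      |mu - ms| ≤ Real.exp (-N s) → 128 * Ω ‖xb‖ ms ≤ CT * (1 + ∑ i, X i ^ 2 + mu ^ 2) ^ ro ∧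
        CT * (1 + ∑ i, X i ^ 2 + mu ^ 2) ^ ro ≤ Tm s := by
    intro ms h0 h1 X mu hX hmu
    have hS0 : 0 ≤ ∑ i, X i ^ 2 := Finset.sum_nonneg fun i _ => sq_nonneg _
    have hmu' := abs_le.1 (hmu.trans hξ1)
    constructor
    · have a1 : ‖xb‖ ≤ 2 + ∑ i, X i ^ 2 := by
        rw [pi_norm_le_iff_of_nonneg (by linarith)]
        intro i
        rw [Real.norm_eq_abs]
        have h2 := Finset.single_le_sum (f := fun i => X i ^ 2) (fun i _ => sq_nonneg _) (Finset.mem_univ i)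
        have h3 := abs_le.1 ((hX i).trans hξ1)
        rw [abs_le]; constructor <;> nlinarith only [h2, h3, sq_nonneg (X i - 1), sq_nonneg (X i + 1)]
      have a2 : ms ≤ 2 + mu ^ 2 := by nlinarith
      have a3 := norm_vec2 hxn h0 (s := 2 + ∑ i, X i ^ 2 + mu ^ 2) (by nlinarith) (by linarith)
      have a4 := hgo ![‖xb‖, ms] 0
      rw [← hPΩ] at a4
      have a5 : (1 + ‖(![‖xb‖, ms] : Fin 2 → ℝ)‖) ^ ro ≤ (3 * (1 + ∑ i, X i ^ 2 + mu ^ 2)) ^ ro := by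
        gcongr
        have := sq_nonneg mu
        linarith
      rw [mul_pow] at a5
      have a6 := mul_le_mul_of_nonneg_left a5 (show 0 ≤ 128 * Co by linarith)
      have a7 := le_abs_self (Ω ‖xb‖ ms)
      rw [hCT]
      linarith
    · have a1 : ∑ i, X i ^ 2 ≤ n * s ^ 2 := by
        have : ∑ i, X i ^ 2 ≤ ∑ _i : Fin n, s ^ 2 := Finset.sum_le_sum fun i _ => by
          have h3 := abs_le.1 ((hX i).trans hξ1)
          have h4 := abs_le.1 (hxi i)
          apply sq_le_sq'  <;> linarith
        simpa using this
      have a2 : mu ^ 2 ≤ s ^ 2 := by apply sq_le_sq' <;> linarith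
      have : CT * (1 + ∑ i, X i ^ 2 + mu ^ 2) ^ ro ≤ CT * (1 + n * s ^ 2 + s ^ 2) ^ ro := by gcongr
      simp only [hTm]; linarith
  have hΩT : ∀ ms, 0 ≤ ms → ms ≤ K → Ω ‖xb‖ ms ≤ Tm s := fun ms h0 h1 => by
    have := hrt ms h0 h1 xb ms (fun k => by simpa using hξ0.le) (by simpa using hξ0.le)
    have h2 := w.hΩ0 ‖xb‖ ms hxn h0
    linarith [this.1, this.2]
  have hyB : ∀ ms, 0 ≤ ms → ms ≤ K → ∀ t, 0 ≤ t → t ≤ Tm s → Υ ‖xb‖ ms t ≤ B s := by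
    intro ms h0 h1 t ht0 ht
    have a4 := hgu ![‖xb‖, ms, t] 0
    rw [← hPΥ] at a4
    refine (le_abs_self _).trans (a4.trans ?_)
    have := norm_vec3 hxn h0 ht0 (s := s + Tm s) (by linarith) (by linarith) (by linarith)
    simp only [hB]
    gcongr
  constructor
  · refine ⟨by linarith, lp1, lq1, t1, hξ0, hξ1, ?_, ?_, ?_, ?_⟩
    · intro v v' hv hv' k
      refine (hlp v v' k).trans ?_
      have h3 : 1 + ‖v‖ + ‖v'‖ ≤ 1 + 2 * (B s + 2) := by linarith
      simp only [hLp]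
      exact mul_le_mul_of_nonneg_right (mul_le_mul_of_nonneg_left
        (pow_le_pow_left₀ (by positivity) h3 _) (by linarith)) (norm_nonneg _)
    · intro ms h0 h1 X mu hX hmu k
      have hmu' := abs_le.1 (hmu.trans hξ1)
      have a1 := norm_snoc (X := X) (mu := mu) (s := s) (by linarith) (fun i => by
          have h3 := abs_le.1 ((hX i).trans hξ1)
          have h4 := abs_le.1 (hxi i)
          rw [abs_le]; constructor <;> linarith) (by rw [abs_le]; constructor <;> linarith)
      have a2 := norm_snoc (X := xb) (mu := ms) (s := s) (by linarith) (fun i => by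
          linarith [hxi i]) (by rw [abs_le]; constructor <;> linarith)
      have a3 : ‖(Fin.snoc (α := fun _ => ℝ) X mu : Fin (n + 1) → ℝ) - Fin.snoc (α := fun _ => ℝ) xb ms‖ ≤ Real.exp (-N s) := by
        rw [pi_norm_le_iff_of_nonneg hξ0.le]
        intro i
        refine Fin.lastCases ?_ (fun i => ?_) i
        · simpa using hmu
        · simpa using hX i
      refine (hlq _ _ k).trans ?_
      simp only [hLq]
      exact mul_le_mul (mul_le_mul_of_nonneg_left
        (pow_le_pow_left₀ (by positivity) (by linarith) _) (by linarith)) a3 (norm_nonneg _) (by positivity)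
    · have e1 : (10 : ℝ) ≤ Real.exp 10 := by linarith [Real.add_one_le_exp (10 : ℝ)]
      have e2 : Lq s ≤ Real.exp (Lq s) := by linarith [Real.add_one_le_exp (Lq s)]
      have e3 : 10 * Lq s * (Real.exp (-N s) * Real.exp (Tm s * Lp s)) ≤
          Real.exp 10 * Real.exp (Lq s) * (Real.exp (-N s) * Real.exp (Tm s * Lp s)) := by
        gcongr
      rw [← Real.exp_add, ← Real.exp_add, ← Real.exp_add] at e3
      have e4 : Real.exp (10 + Lq s + (-N s + Tm s * Lp s)) ≤ Real.exp (-K) := by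
        apply Real.exp_le_exp.2
        simp only [hN]
        linarith
      rw [Real.exp_add (-N s)] at e3
      linarith
    · intro ms h0 h1
      obtain ⟨y, y0, yd, yf, yB⟩ := w.hsol xb hxb ms h0
      have o0 := w.hΩ0 ‖xb‖ ms hxn h0
      refine ⟨y, Ω ‖xb‖ ms, o0, y0, yd, fun t h2 h3 => (yB t h2).trans (hyB ms h0 h1 t h2 h3), ?_, hrt ms h0 h1⟩
      intro t ht i
      exact (norm_le_pi_norm ((fun i : Fin m => y t (Fin.castLE hd i)) - f xb) i).trans (yf t (o0.trans ht) ht)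
  · intro i
    obtain ⟨y, y0, yd, yf, yB⟩ := w.hsol xb hxb 0 le_rfl
    have o0 := w.hΩ0 ‖xb‖ 0 hxn le_rfl
    have h1 := (norm_le_pi_norm ((fun i : Fin m => y (Ω ‖xb‖ 0) (Fin.castLE hd i)) - f xb) i).trans (yf _ o0 le_rfl)
    have h2 := (norm_le_pi_norm (y (Ω ‖xb‖ 0)) (Fin.castLE hd i)).trans
      ((yB _ o0).trans (hyB 0 le_rfl hK _ o0 (hΩT 0 le_rfl hK)))
    simp only [Pi.sub_apply, Real.norm_eq_abs, neg_zero, Real.exp_zero] at h1 h2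
    have h3 := abs_le.1 h1
    have h4 := abs_le.1 h2
    rw [abs_le]; constructor <;> linarith

lemma WData.track {dom : Set (Fin n → ℝ)} {f : (Fin n → ℝ) → (Fin m → ℝ)}
    {Ω : ℝ → ℝ → ℝ} {Υ : ℝ → ℝ → ℝ → ℝ} {hd : m ≤ d} {p : Fin d → MvPolynomial (Fin d) ℝ}
    {q : Fin d → MvPolynomial (Fin (n + 1)) ℝ} (w : WData m n d dom f Ω Υ hd p q) :
    ∃ (Δ : Dat m n d) (C : ℝ) (r : ℕ), 1 ≤ C ∧ ∀ (x : ℝ → Fin n → ℝ) (T : ℝ) (F G D : ℝ → Fin m → ℝ)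
      (Y : ℝ → Fin d → ℝ) (X : ℝ → Fin n → ℝ) (mu : ℝ → ℝ), Sol Δ x T F G D Y X mu →
      ∀ a, 0 ≤ a → ∀ xb ∈ dom, ∀ μ, 0 ≤ μ → ∀ W, W = C * (244 + ‖xb‖ + 20 * μ) ^ r + 2 →
      (∀ t ∈ Icc a T, ‖x t - xb‖ ≤ Real.exp (-W)) → ∀ u, a + W ≤ u → u ≤ T →
      ∀ ℓ, |F u ℓ - f xb ℓ| ≤ Real.exp (-μ) := by
  obtain ⟨CT, rT, B, Tm, Lp, Lq, N, pB, pN, N0, hctx⟩ := w.ctx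
  set Δ : Dat m n d := ⟨hd, p, q, CT, rT⟩ with hΔ
  obtain ⟨TL, hTL, hlk⟩ := leaks Δ
  set H0 : ℝ → ℝ := fun s => TL + 200000 * (B s + 1) + 2 * d * (2 * B s + 1) ^ 2 + 4 * N s + 80000 * s + 20 with hH0
  have pH : PB H0 := (((((PB.const TL).add ((PB.const 200000).mul (pB.add (PB.const 1)))).add
    ((((PB.const 2).mul pB).add (PB.const 1)).comp_pow (2 * d) 2)).add ((PB.const 4).mul pN)).add
    ((PB.const 80000).mul PB.id)).add (PB.const 20)
  obtain ⟨C, hC, r, hCr⟩ := pH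
  refine ⟨Δ, C, r, hC, fun x T F G D Y X mu h a ha xb hxb μ hμ W hW hx u hu huT ℓ => ?_⟩
  set s := 1 + ‖xb‖ + (243 + 20 * μ) with hs
  have hxn := norm_nonneg xb
  have hs1 : 1 ≤ s := by linarith
  obtain ⟨c, hfB⟩ := hctx xb hxb (243 + 20 * μ) (by linarith) s hs
  have hn0 := N0 s hs1
  have hB0 := c.hB0
  have hHW : H0 s + 2 ≤ W := by
    have h1 := (le_abs_self _).trans (hCr s hs1)
    rw [hW, show 244 + ‖xb‖ + 20 * μ = s by rw [hs]; ring]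
    linarith
  have hdB : 0 ≤ 2 * d * (2 * B s + 1) ^ 2 := by positivity
  have hH0' : H0 s = TL + 200000 * (B s + 1) + 2 * d * (2 * B s + 1) ^ 2 + 4 * N s + 80000 * s + 20 := rfl
  have hWN : N s + 1 ≤ W := by linarith
  have hε : Real.exp (-W) ≤ Real.exp (-N s) / 2 := by
    have h1 : Real.exp (-W) ≤ Real.exp (-N s) * (Real.exp 1)⁻¹ := by
      rw [← Real.exp_neg, ← Real.exp_add]
      exact Real.exp_le_exp.2 (by linarith)
    have h2 : (Real.exp 1)⁻¹ ≤ 2⁻¹ := inv_anti₀ (by norm_num) (by linarith [Real.add_one_le_exp (1 : ℝ)])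
    have h4 : Real.exp (-N s) * (Real.exp 1)⁻¹ ≤ Real.exp (-N s) * 2⁻¹ := by gcongr
    linarith
  have hε0 := Real.exp_pos (-W)
  have hξ0 := c.hξ
  have hξ1 := c.hξ1
  set H := a + H0 s with hH
  have k : Trk Δ xb (f xb) (B s) (Real.exp (-N s)) H T F G D Y X mu :=
    { h10 := by linarith
      hξ := by
        have h1 : Real.exp (-(5 * H)) ≤ Real.exp (-N s) * (Real.exp 1)⁻¹ := by
          rw [← Real.exp_neg, ← Real.exp_add]
          exact Real.exp_le_exp.2 (by linarith)
        have h2 : (Real.exp 1)⁻¹ ≤ 2⁻¹ := inv_anti₀ (by norm_num) (by linarith [Real.add_one_le_exp (1 : ℝ)])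
        have h4 : Real.exp (-N s) * (Real.exp 1)⁻¹ ≤ Real.exp (-N s) * 2⁻¹ := by gcongr
        linarith
      hB := by
        have h1 : 1 ≤ H := by linarith
        have h2 : H ≤ H ^ 2 := by nlinarith only [h1]
        linarith
      hf := fun i => by linarith [hfB i]
      hX := fun t ht htT i => by
        have h1 := h.X_track (a := a) (R := ‖xb‖) (t := t) (ε := Real.exp (-W)) (c := xb i) i ha (by linarith) htT
          hxn hε0.le (by linarith) (by linarith)
          (fun v hv => (norm_le_pi_norm (x v - xb) i).trans (hx v hv)) (norm_le_pi_norm xb i)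
        have h2 := exp_small4 hn0 (t := t) (by linarith)
        have h3 : Real.exp (-W) ^ 2 ≤ (Real.exp (-N s) / 2) ^ 2 := by gcongr
        apply abs_le_of_sq_le_sq _ hξ0.le
        nlinarith only [h1, h2, h3, sq_nonneg (Real.exp (-N s))]
      lk := fun t ht htT => hlk x T F G D Y X mu h t (by linarith) htT }
  exact h.F_good c k hμ (by linarith) le_rfl (by linarith) huT ℓ

end

section
open Set Filter Topology Metric

variable {m n d : ℕ}

/-- index type of the main variables: F, G, D, Y, X, mu -/
abbrev RestIx (m n d : ℕ) : Type := Fin m ⊕ (Fin m ⊕ (Fin d ⊕ (Fin n ⊕ Unit)))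
abbrev StIx (m n d : ℕ) : Type := Fin m ⊕ RestIx m n d
abbrev EnvIx (m n d : ℕ) : Type := StIx m n d ⊕ (Fin 12 ⊕ Fin n)

/-- clock vector -/
def clk (t : ℝ) : Fin 12 → ℝ :=
  ![t, (1 + t ^ 2)⁻¹, Real.cos (2 * Real.pi * t ^ 2), Real.sin (2 * Real.pi * t ^ 2),
    g1 t, g2 t, g3 t, gF t, Real.sin (2 * Real.pi * t), Real.cos (2 * Real.pi * t), cku t, ckM t]

section polys
open MvPolynomial

abbrev vF (i : Fin m) : MvPolynomial (EnvIx m n d) ℝ := X (Sum.inl (Sum.inl i))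
abbrev vG (i : Fin m) : MvPolynomial (EnvIx m n d) ℝ := X (Sum.inl (Sum.inr (Sum.inl i)))
abbrev vD (i : Fin m) : MvPolynomial (EnvIx m n d) ℝ := X (Sum.inl (Sum.inr (Sum.inr (Sum.inl i))))
abbrev vY (i : Fin d) : MvPolynomial (EnvIx m n d) ℝ :=
  X (Sum.inl (Sum.inr (Sum.inr (Sum.inr (Sum.inl i)))))
abbrev vX (i : Fin n) : MvPolynomial (EnvIx m n d) ℝ :=
  X (Sum.inl (Sum.inr (Sum.inr (Sum.inr (Sum.inr (Sum.inl i))))))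
abbrev vmu : MvPolynomial (EnvIx m n d) ℝ :=
  X (Sum.inl (Sum.inr (Sum.inr (Sum.inr (Sum.inr (Sum.inr ()))))))
abbrev vc (i : Fin 12) : MvPolynomial (EnvIx m n d) ℝ := X (Sum.inr (Sum.inl i))
abbrev vx (i : Fin n) : MvPolynomial (EnvIx m n d) ℝ := X (Sum.inr (Sum.inr i))

lemma eval_bind {σ τ : Type*} (v : τ → ℝ) (h : σ → MvPolynomial τ ℝ) (p : MvPolynomial σ ℝ) :
    eval v (bind₁ h p) = eval (fun i => eval v (h i)) p := by
  induction p using MvPolynomial.induction_on with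
  | C a => simp
  | add p q hp hq => simp [hp, hq]
  | mul_X p i hp => simp [hp]

def zPoly (Δ : Dat m n d) (k : Fin d) : MvPolynomial (EnvIx m n d) ℝ :=
  vY k + bind₁ (Fin.snoc (α := fun _ => MvPolynomial (EnvIx m n d) ℝ) vX vmu) (Δ.q k)

def aPoly : MvPolynomial (EnvIx m n d) ℝ := C 6400 * (1 + vc 0) ^ 2

def ratePoly (Δ : Dat m n d) : MvPolynomial (EnvIx m n d) ℝ :=
  C Δ.CT * (1 + ∑ i, vX i ^ 2 + vmu ^ 2) ^ Δ.rT * vc 0 * vc 5 *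
    ((1 + vc 0 ^ 2 - ∑ k, vY k ^ 2) * vc 1)

def vf (Δ : Dat m n d) : StIx m n d → MvPolynomial (EnvIx m n d) ℝ
  | Sum.inl i => aPoly * vc 7 * (vG i - vF i)
  | Sum.inr (Sum.inl i) => vc 10 * (vc 0 * vD i - C 2000 * vG i)
  | Sum.inr (Sum.inr (Sum.inl i)) =>
      aPoly * vc 6 * (vD i + zPoly Δ (Fin.castLE Δ.hd i) - vG i) * (1 - vD i ^ 2) - aPoly * vc 4 * vD i
  | Sum.inr (Sum.inr (Sum.inr (Sum.inl k))) =>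
      ratePoly Δ * bind₁ (zPoly Δ) (Δ.p k) - aPoly * vc 4 * vY k
  | Sum.inr (Sum.inr (Sum.inr (Sum.inr (Sum.inl i)))) => (vx i - vX i) * (1 + vc 0 ^ 2 - vX i ^ 2)
  | Sum.inr (Sum.inr (Sum.inr (Sum.inr (Sum.inr _)))) => aPoly * vc 4 * (vc 11 - vmu)

def lPoly : MvPolynomial (Fin 12) ℝ :=
  C (1 / 10000) * (X 8 + C (2 * Real.pi) * X 0 * X 9)
def gPoly (g : Fin 12) (z z' : MvPolynomial (Fin 12) ℝ) : MvPolynomial (Fin 12) ℝ :=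
  -(X g * (1 - X g) * (C 32 * X 0 * (C (4 / 5) - z) - C 16 * X 0 ^ 2 * z'))

def clkPoly : Fin 12 → MvPolynomial (Fin 12) ℝ :=
  ![1, -(C 2 * X 0 * X 1 ^ 2), -(C (4 * Real.pi) * X 0 * X 3), C (4 * Real.pi) * X 0 * X 2,
    gPoly 4 (X 2) (-(C (4 * Real.pi) * X 0 * X 3)),
    gPoly 5 (X 3) (C (4 * Real.pi) * X 0 * X 2),
    gPoly 6 (-X 2) (C (4 * Real.pi) * X 0 * X 3),
    gPoly 7 (X 8) (C (2 * Real.pi) * X 9),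
    C (2 * Real.pi) * X 9, -(C (2 * Real.pi) * X 8),
    -(lPoly * X 10 * (1 - X 10)), lPoly * (1 - X 10)]

lemma clk_zero (t : ℝ) : clk t 0 = t := rfl
lemma clk_1 (t : ℝ) : clk t 1 = (1 + t ^ 2)⁻¹ := rfl
lemma clk_2 (t : ℝ) : clk t 2 = Real.cos (2 * Real.pi * t ^ 2) := rfl
lemma clk_3 (t : ℝ) : clk t 3 = Real.sin (2 * Real.pi * t ^ 2) := rfl
lemma clk_4 (t : ℝ) : clk t 4 = g1 t := rfl
lemma clk_5 (t : ℝ) : clk t 5 = g2 t := rfl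
lemma clk_6 (t : ℝ) : clk t 6 = g3 t := rfl
lemma clk_7 (t : ℝ) : clk t 7 = gF t := rfl
lemma clk_8 (t : ℝ) : clk t 8 = Real.sin (2 * Real.pi * t) := rfl
lemma clk_9 (t : ℝ) : clk t 9 = Real.cos (2 * Real.pi * t) := rfl
lemma clk_10 (t : ℝ) : clk t 10 = cku t := rfl
lemma clk_11 (t : ℝ) : clk t 11 = ckM t := rfl

lemma inv_deriv (t : ℝ) : HasDerivAt (fun t : ℝ => (1 + t ^ 2)⁻¹) (-(2 * t * ((1 + t ^ 2)⁻¹) ^ 2)) t := by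
  have hne : (1 + t ^ 2) ≠ 0 := by positivity
  refine (((sq_deriv t).const_add 1).inv hne).congr_deriv ?_
  field_simp

lemma eval_lPoly (t : ℝ) : eval (clk t) lPoly = ckL' t := by
  simp only [lPoly, ckL', map_mul, map_add, eval_C, eval_X, clk_8, clk_9, clk_zero]

lemma eval_gPoly (t : ℝ) (g : Fin 12) (z z' : MvPolynomial (Fin 12) ℝ) :
    eval (clk t) (gPoly g z z') = -(clk t g * (1 - clk t g) *
      (32 * t * (4 / 5 - eval (clk t) z) - 16 * t ^ 2 * eval (clk t) z')) := by
  simp only [gPoly, map_mul, map_sub, map_neg, map_one, map_pow, eval_C, eval_X, clk_zero]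

lemma clk_deriv (t : ℝ) : HasDerivAt clk (fun i => eval (clk t) (clkPoly i)) t := by
  rw [hasDerivAt_pi]
  intro i
  fin_cases i
  · exact (hasDerivAt_id' t).congr_deriv (by simp [clkPoly])
  · exact (inv_deriv t).congr_deriv (by simp [clkPoly, clk_zero, clk_1])
  · exact (cos2_deriv t).congr_deriv (by simp [clkPoly, clk_zero, clk_3])
  · exact (sin2_deriv t).congr_deriv (by simp [clkPoly, clk_zero, clk_2])
  · exact (gt_deriv (cos2_deriv t)).congr_deriv
      (by simp [clkPoly, eval_gPoly, clk_zero, clk_3, clk_2, clk_4, g1])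
  · exact (gt_deriv (sin2_deriv t)).congr_deriv
      (by simp [clkPoly, eval_gPoly, clk_zero, clk_3, clk_2, clk_5, g2])
  · exact (gt_deriv (cos2_deriv t).neg).congr_deriv
      (by simp [clkPoly, eval_gPoly, clk_zero, clk_3, clk_2, clk_6, g3])
  · exact (gt_deriv (sin1_deriv t)).congr_deriv
      (by simp [clkPoly, eval_gPoly, clk_8, clk_9, clk_7, gF])
  · exact (sin1_deriv t).congr_deriv (by simp [clkPoly, clk_9])
  · exact (cos1_deriv t).congr_deriv (by simp [clkPoly, clk_8])
  · exact (cku_deriv t).congr_deriv (by simp [clkPoly, eval_lPoly, clk_10])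
  · exact (ckM_deriv t).congr_deriv (by simp [clkPoly, eval_lPoly, clk_10])

lemma clk_bound {t : ℝ} (ht : 0 ≤ t) (i : Fin 12) : |clk t i| ≤ 1 + t := by
  have hg : ∀ z, |gt z t| ≤ 1 + t := fun z => by
    rw [abs_of_pos (gt_pos z t)]; linarith [gt_le_one z t]
  have hs : ∀ z, |Real.sin z| ≤ 1 + t := fun z => (Real.abs_sin_le_one z).trans (by linarith)
  have hc : ∀ z, |Real.cos z| ≤ 1 + t := fun z => (Real.abs_cos_le_one z).trans (by linarith)
  fin_cases i
  · change |t| ≤ _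
    rw [abs_of_nonneg ht]; linarith
  · change |(1 + t ^ 2)⁻¹| ≤ _
    rw [abs_of_nonneg (by positivity)]
    have : (1 + t ^ 2)⁻¹ ≤ 1 := inv_le_one_of_one_le₀ (by nlinarith)
    linarith
  · exact hc _
  · exact hs _
  · exact hg _
  · exact hg _
  · exact hg _
  · exact hg _
  · exact hs _
  · exact hc _
  · change |cku t| ≤ _
    rw [abs_of_pos (cku_pos t)]; linarith [cku_le_one t]
  · change |ckM t| ≤ _
    rw [abs_of_nonneg (ckM_nonneg t)]; exact ckM_le_t ht

end polys

section evals
open MvPolynomial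
variable (Δ : Dat m n d) (w : StIx m n d → ℝ) (t : ℝ) (ξ : Fin n → ℝ)

abbrev env (w : StIx m n d → ℝ) (t : ℝ) (ξ : Fin n → ℝ) : EnvIx m n d → ℝ :=
  Sum.elim w (Sum.elim (clk t) ξ)

abbrev cF (w : StIx m n d → ℝ) : Fin m → ℝ := fun i => w (Sum.inl i)
abbrev cG (w : StIx m n d → ℝ) : Fin m → ℝ := fun i => w (Sum.inr (Sum.inl i))
abbrev cD (w : StIx m n d → ℝ) : Fin m → ℝ := fun i => w (Sum.inr (Sum.inr (Sum.inl i)))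
abbrev cY (w : StIx m n d → ℝ) : Fin d → ℝ := fun i => w (Sum.inr (Sum.inr (Sum.inr (Sum.inl i))))
abbrev cX (w : StIx m n d → ℝ) : Fin n → ℝ :=
  fun i => w (Sum.inr (Sum.inr (Sum.inr (Sum.inr (Sum.inl i)))))
abbrev cmu (w : StIx m n d → ℝ) : ℝ := w (Sum.inr (Sum.inr (Sum.inr (Sum.inr (Sum.inr ())))))

lemma eval_aPoly : eval (env w t ξ) aPoly = ckA t := by
  simp only [aPoly, ckA, map_mul, map_add, map_one, map_pow, eval_C, eval_X, Sum.elim_inl, Sum.elim_inr,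
    clk_zero]

lemma eval_zPoly (k : Fin d) : eval (env w t ξ) (zPoly Δ k) = Δ.Z (cY w) (cX w) (cmu w) k := by
  simp only [zPoly, map_add, eval_X, Sum.elim_inl, Dat.Z, eval_bind, Dat.qv]
  congr 1
  refine congrArg (fun v => eval v (Δ.q k)) ?_
  funext i
  refine Fin.lastCases ?_ (fun i => ?_) i
  · simp
  · simp

lemma eval_ratePoly : eval (env w t ξ) (ratePoly Δ) = Δ.rate t (cY w) (cX w) (cmu w) := by
  simp only [ratePoly, Dat.rate, Dat.rt, map_mul, map_add, map_sub, map_sum, map_one, map_pow, eval_C,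
    eval_X, Sum.elim_inl, Sum.elim_inr, clk_zero, clk_5, clk_1]

lemma eval_vfF (i : Fin m) : eval (env w t ξ) (vf Δ (Sum.inl i)) = ckA t * gF t * (cG w i - cF w i) := by
  simp only [vf, map_mul, map_sub, eval_aPoly, eval_X, Sum.elim_inl, Sum.elim_inr, clk_7]
lemma eval_vfG (i : Fin m) : eval (env w t ξ) (vf Δ (Sum.inr (Sum.inl i))) =
    cku t * (t * cD w i - 2000 * cG w i) := by
  simp only [vf, map_mul, map_sub, eval_C, eval_X, Sum.elim_inl, Sum.elim_inr, clk_zero, clk_10]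
lemma eval_vfD (i : Fin m) : eval (env w t ξ) (vf Δ (Sum.inr (Sum.inr (Sum.inl i)))) =
    ckA t * g3 t * (cD w i + Δ.Z (cY w) (cX w) (cmu w) (Fin.castLE Δ.hd i) - cG w i) * (1 - cD w i ^ 2)
      - ckA t * g1 t * cD w i := by
  simp only [vf, map_mul, map_sub, map_add, map_pow, map_one, eval_aPoly, eval_zPoly, eval_X,
    Sum.elim_inl, Sum.elim_inr, clk_6, clk_4]
lemma eval_vfY (i : Fin d) : eval (env w t ξ) (vf Δ (Sum.inr (Sum.inr (Sum.inr (Sum.inl i))))) =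
    Δ.rate t (cY w) (cX w) (cmu w) * eval (Δ.Z (cY w) (cX w) (cmu w)) (Δ.p i)
      - ckA t * g1 t * cY w i := by
  simp only [vf, map_mul, map_sub, eval_aPoly, eval_bind, eval_zPoly, eval_ratePoly, eval_X,
    Sum.elim_inl, Sum.elim_inr, clk_4]
lemma eval_vfX (i : Fin n) : eval (env w t ξ) (vf Δ (Sum.inr (Sum.inr (Sum.inr (Sum.inr (Sum.inl i)))))) =
    (ξ i - cX w i) * (1 + t ^ 2 - cX w i ^ 2) := by
  simp only [vf, map_mul, map_sub, map_add, map_pow, map_one, eval_X,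
    Sum.elim_inl, Sum.elim_inr, clk_zero]
lemma eval_vfmu : eval (env w t ξ) (vf Δ (Sum.inr (Sum.inr (Sum.inr (Sum.inr (Sum.inr ())))))) =
    ckA t * g1 t * (ckM t - cmu w) := by
  simp only [vf, map_mul, map_sub, eval_aPoly, eval_X, Sum.elim_inl, Sum.elim_inr, clk_4, clk_11]
end evals

lemma sol_of (Δ : Dat m n d) (x : ℝ → Fin n → ℝ) (T : ℝ) (y : ℝ → StIx m n d → ℝ)
    (hx : ContinuousOn x (Ici 0)) (h0 : y 0 = 0) (hc : ContinuousOn y (Icc 0 T))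
    (hd : ∀ t ∈ Ioo 0 T, HasDerivAt y (fun i => MvPolynomial.eval (env (y t) t (x t)) (vf Δ i)) t) :
    Sol Δ x T (fun t => cF (y t)) (fun t => cG (y t)) (fun t => cD (y t)) (fun t => cY (y t))
      (fun t => cX (y t)) (fun t => cmu (y t)) := by
  have h0' : ∀ i, y 0 i = 0 := fun i => by rw [h0]; rfl
  have hc' : ∀ i, ContinuousOn (fun t => y t i) (Icc 0 T) := fun i => (continuousOn_pi.1 hc) i
  have hd' : ∀ t ∈ Ioo 0 T, ∀ i,
    HasDerivAt (fun t => y t i) (MvPolynomial.eval (env (y t) t (x t)) (vf Δ i)) t :=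
    fun t ht i => (hasDerivAt_pi.1 (hd t ht)) i
  refine ⟨fun i => h0' _, fun i => h0' _, fun i => h0' _, fun i => h0' _, fun i => h0' _, h0' _,
    hx.mono Icc_subset_Ici_self, fun i => hc' _, fun i => hc' _, fun i => hc' _, fun i => hc' _,
    fun i => hc' _, hc' _, fun t ht i => ?_, fun t ht i => ?_, fun t ht i => ?_, fun t ht i => ?_,
    fun t ht i => ?_, fun t ht => ?_⟩
  · exact (hd' t ht _).congr_deriv (eval_vfF _ _ _ _ _)
  · exact (hd' t ht _).congr_deriv (eval_vfG _ _ _ _ _)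
  · exact (hd' t ht _).congr_deriv (eval_vfD _ _ _ _ _)
  · exact (hd' t ht _).congr_deriv (eval_vfY _ _ _ _ _)
  · exact (hd' t ht _).congr_deriv (eval_vfX _ _ _ _ _)
  · exact (hd' t ht _).congr_deriv (eval_vfmu _ _ _ _)

end

section
open Set Filter Topology Metric

variable {m n d : ℕ}

lemma st_bound (Δ : Dat m n d) (x : ℝ → Fin n → ℝ) (T : ℝ) (hT : 0 ≤ T) (y : ℝ → StIx m n d → ℝ)
    (h : Sol Δ x T (fun t => cF (y t)) (fun t => cG (y t)) (fun t => cD (y t)) (fun t => cY (y t))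
      (fun t => cX (y t)) (fun t => cmu (y t))) (i : StIx m n d) : |y T i| ≤ 1 + T := by
  have hm : T ∈ Icc 0 T := ⟨hT, le_rfl⟩
  rcases i with i | i | i | i | i | i
  · have := h.F_le i T hm
    exact this.trans (by linarith)
  · have := h.G_le i T hm
    exact this.trans (by linarith)
  · have := h.D_le i T hm
    exact this.trans (by linarith)
  · exact h.Y_abs i T hm
  · exact h.X_abs i T hm
  · have h1 := h.mu_nonneg T hm
    have h2 := h.mu_le T hm
    exact (abs_of_nonneg h1).trans_le h2

lemma st_exists (Δ : Dat m n d) (x : ℝ → Fin n → ℝ) (hx : ContinuousOn x (Ici 0)) :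
    ∃ y : ℝ → StIx m n d → ℝ, y 0 = 0 ∧ ∀ t : ℝ, 0 ≤ t →
      HasDerivAt y (fun i => MvPolynomial.eval (env (y t) t (x t)) (vf Δ i)) t := by
  refine ode_poly (vf Δ) (fun t => Sum.elim (clk t) (x t)) ?_ ?_
  · rw [continuousOn_pi]
    rintro (i | i)
    · have : Continuous clk := continuous_iff_continuousAt.2 fun t => (clk_deriv t).continuousAt
      exact ((continuous_apply i).comp this).continuousOn
    · exact (continuousOn_pi.1 hx) i
  · intro T hT y h0 hc hd
    have := sol_of Δ x T y hx h0 hc hd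
    rw [pi_norm_le_iff_of_nonneg (by linarith)]
    exact fun i => st_bound Δ x T hT.le y this i

/-- number of extra variables -/
abbrev exN (m n d : ℕ) : ℕ := Fintype.card (RestIx m n d ⊕ Fin 12)

/-- numbering of all the variables, outputs first -/
def ixE (m n d : ℕ) : (StIx m n d ⊕ Fin 12) ≃ Fin (m + exN m n d) :=
  (Equiv.sumAssoc _ _ _).trans
    (((Equiv.refl (Fin m)).sumCongr (Fintype.equivFin (RestIx m n d ⊕ Fin 12))).trans finSumFinEquiv)

lemma ixE_out (i : Fin m) : ixE m n d (Sum.inl (Sum.inl i)) = Fin.castLE (Nat.le_add_right _ _) i := by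
  simp [ixE]
  rfl

lemma ixE_symm_out (h : m ≤ m + exN m n d) (i : Fin m) :
    (ixE m n d).symm (Fin.castLE h i) = Sum.inl (Sum.inl i) := by
  rw [Equiv.symm_apply_eq, ixE_out]

/-- full polynomial vector field -/
def fullP (Δ : Dat m n d) : StIx m n d ⊕ Fin 12 → MvPolynomial ((StIx m n d ⊕ Fin 12) ⊕ Fin n) ℝ :=
  Sum.elim (fun i => MvPolynomial.rename (Equiv.sumAssoc _ _ _).symm (vf Δ i))
    (fun k => MvPolynomial.rename (fun j => Sum.inl (Sum.inr j)) (clkPoly k))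

def finP (Δ : Dat m n d) (i : Fin (m + exN m n d)) : MvPolynomial (Fin (m + exN m n d + n)) ℝ :=
  MvPolynomial.rename
    (Sum.elim (fun j => Fin.castAdd n (ixE m n d j)) (fun j => Fin.natAdd (m + exN m n d) j))
    (fullP Δ ((ixE m n d).symm i))

lemma eval_fullP_inl (Δ : Dat m n d) (w : StIx m n d → ℝ) (t : ℝ) (ξ : Fin n → ℝ) (i : StIx m n d) :
    MvPolynomial.eval (Sum.elim (Sum.elim w (clk t)) ξ) (fullP Δ (Sum.inl i)) =
      MvPolynomial.eval (env w t ξ) (vf Δ i) := by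
  simp only [fullP, Sum.elim_inl, MvPolynomial.eval_rename]
  refine congrArg (fun v => MvPolynomial.eval v (vf Δ i)) ?_
  funext j
  rcases j with j | j | j <;> rfl

lemma eval_fullP_inr (Δ : Dat m n d) (w : StIx m n d → ℝ) (t : ℝ) (ξ : Fin n → ℝ) (k : Fin 12) :
    MvPolynomial.eval (Sum.elim (Sum.elim w (clk t)) ξ) (fullP Δ (Sum.inr k)) =
      MvPolynomial.eval (clk t) (clkPoly k) := by
  simp only [fullP, Sum.elim_inr, MvPolynomial.eval_rename]
  rfl

lemma eval_finP (Δ : Dat m n d) (v : StIx m n d ⊕ Fin 12 → ℝ) (ξ : Fin n → ℝ) (i) :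
    MvPolynomial.eval (Fin.append (fun j => v ((ixE m n d).symm j)) ξ) (finP Δ i) =
      MvPolynomial.eval (Sum.elim v ξ) (fullP Δ ((ixE m n d).symm i)) := by
  simp only [finP, MvPolynomial.eval_rename]
  refine congrArg (fun v => MvPolynomial.eval v (fullP Δ ((ixE m n d).symm i))) ?_
  funext j
  rcases j with j | j <;> simp

lemma core (Δ : Dat m n d) (x : ℝ → Fin n → ℝ) (hx : ContinuousOn x (Ici 0)) :
    ∃ y : ℝ → Fin (m + exN m n d) → ℝ,
      y 0 = (fun i => Sum.elim (0 : StIx m n d → ℝ) (clk 0) ((ixE m n d).symm i)) ∧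
      (∀ t : ℝ, 0 ≤ t →
        HasDerivAt y (fun i => MvPolynomial.eval (Fin.append (y t) (x t)) (finP Δ i)) t) ∧
      (∀ t : ℝ, 0 ≤ t → ‖y t‖ ≤ 1 + t) ∧
      ∀ T : ℝ, ∃ (F G D : ℝ → Fin m → ℝ) (Y : ℝ → Fin d → ℝ) (X : ℝ → Fin n → ℝ) (mu : ℝ → ℝ),
        Sol Δ x T F G D Y X mu ∧
          ∀ t (h : m ≤ m + exN m n d) (i : Fin m), y t (Fin.castLE h i) = F t i := by
  obtain ⟨y, h0, hy⟩ := st_exists Δ x hx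
  have hsol : ∀ T : ℝ, Sol Δ x T (fun t => cF (y t)) (fun t => cG (y t)) (fun t => cD (y t))
      (fun t => cY (y t)) (fun t => cX (y t)) (fun t => cmu (y t)) := fun T =>
    sol_of Δ x T y hx h0 (fun t ht => (hy t ht.1).continuousAt.continuousWithinAt)
      (fun t ht => hy t ht.1.le)
  refine ⟨fun t i => Sum.elim (y t) (clk t) ((ixE m n d).symm i), ?_, ?_, ?_, ?_⟩
  · funext i
    simp only [h0]
  · intro t ht
    rw [hasDerivAt_pi]
    intro i
    rw [eval_finP Δ (Sum.elim (y t) (clk t)) (x t) i]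
    generalize (ixE m n d).symm i = j
    rcases j with j | j
    · rw [eval_fullP_inl]
      exact (hasDerivAt_pi.1 (hy t ht)) j
    · rw [eval_fullP_inr]
      exact (hasDerivAt_pi.1 (clk_deriv t)) j
  · intro t ht
    rw [pi_norm_le_iff_of_nonneg (by linarith)]
    intro i
    rw [Real.norm_eq_abs]
    change |Sum.elim (y t) (clk t) ((ixE m n d).symm i)| ≤ 1 + t
    generalize (ixE m n d).symm i = j
    rcases j with j | j
    · exact st_bound Δ x t ht y (hsol t) j
    · exact clk_bound ht j
  · intro T
    refine ⟨_, _, _, _, _, _, hsol T, ?_⟩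
    intro t h i
    simp only [ixE_symm_out, Sum.elim_inl]

end

/-- **Weak computability implies online computability: `AWP ⊆ AOP`.** -/
theorem awp_subset_aop {n m : ℕ} (dom : Set (Fin n → ℝ))
    (f : (Fin n → ℝ) → (Fin m → ℝ)) (hf : AWP dom f) : AOP dom f := by
  obtain ⟨Ω, Υ, hΩ, hΥ, d, hd, p, q, hsol⟩ := hf
  have w : WData m n d dom f Ω Υ hd p q := ⟨hΩ.1, hΩ.2, hΥ.1, hsol⟩
  obtain ⟨Δ, C, r, hC, htr⟩ := w.track
  have hpoly : IsPolyFun2 (fun a b => C * (244 + a + 20 * b) ^ r + 2) := by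
    refine ⟨⟨MvPolynomial.C C * (MvPolynomial.C 244 + MvPolynomial.X 0 +
      MvPolynomial.C 20 * MvPolynomial.X 1) ^ r + MvPolynomial.C 2, fun a b => ?_⟩, fun a b ha hb => ?_⟩
    · simp only [map_add, map_mul, map_pow, MvPolynomial.eval_C, MvPolynomial.eval_X]
      rfl
    · positivity
  refine ⟨fun _ t => 1 + t, fun a b => C * (244 + a + 20 * b) ^ r + 2,
    fun a b => C * (244 + a + 20 * b) ^ r + 2, ?_, hpoly, hpoly, 0, le_rfl, m + exN m n d,
    Nat.le_add_right _ _, finP Δ,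
    (fun i => Sum.elim (0 : StIx m n d → ℝ) (clk 0) ((ixE m n d).symm i)), ?_⟩
  · refine ⟨⟨1 + MvPolynomial.X 1, fun a b => ?_⟩, fun a b ha hb => by positivity⟩
    simp only [map_add, map_one, MvPolynomial.eval_X]
    rfl
  · intro x hx
    obtain ⟨y, h0, hy, hb, hS⟩ := core Δ x hx
    refine ⟨y, h0, hy, hb, ?_⟩
    intro a b ha hab xb hxb μ hμ hcl u hu hub
    obtain ⟨F, G, D, Y, X, mu, hs, hF⟩ := hS b
    rw [pi_norm_le_iff_of_nonneg (Real.exp_pos _).le]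
    intro i
    rw [Real.norm_eq_abs, Pi.sub_apply, hF]
    exact htr x b F G D Y X mu hs a ha xb hxb μ hμ _ rfl hcl u hu hub i
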